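/- Let J ≤ Γ_g, let Υ = J\~Σ_g, let Y be a strongly boundary reduced tiled surface embedded in Υ, and let C ⊆ Y^(1) be a non-nullhomotopic cycle. Then every shortest representative in Υ^(1) of the free homotopy class of C in Υ is contained in Y. -/

import Mathlib

/-!
Formalization preamble for "Core Surfaces" (Magee–Puder).

We work with a fixed combinatorial (CW) model.  The surface `Σ_g` has one vertex,
`2g` directed labeled edges (the label `2i` plays the role of `a_{i+1}` and `2i+1`
the role of `b_{i+1}`), and one `4g`-gon glued along `[a₁,b₁]⋯[a_g,b_g]`.

* `Gamma g` is the surface group, presented by the single relator.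
* A `Complex g` is a combinatorial 2-complex with directed, labeled edges and
  2-cells given by their boundary walks; coverings of `Σ_g` are the complexes in
  which every vertex has exactly one incoming/outgoing edge of each label, every
  walk reading the relator is closed, and every closed walk reading the relator
  bounds exactly one face (`IsCovering`).  A tiled surface is a complex that
  embeds into such a covering (`IsTiledSurface`).
* Blocks, chains, boundary cycles (via the ribbon structure coming from the fixed
  cyclic order of the `4g` half-edges around a vertex of `Σ_g`), boundary-reduced
  and strongly boundary-reduced surfaces are defined combinatorially.
* Homotopy of edge-walks is the edge-path-group homotopy: backtrack insertions and
  insertions of boundaries of (present) faces.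
* `cover g J` is the covering space `J\~Σ_g` of `Σ_g` associated to a subgroup
  `J ≤ Γ_g` (vertices = right cosets), and `coreSub g J` is the core surface of
  `J`, defined exactly as in the paper: the union of all shortest representative
  cycles of essential free-homotopy classes, together with all components of the
  complement containing finitely many `4g`-gons.
-/

noncomputable section

namespace CS

/-- Signed letters over the generators `a₁,b₁,…,a_g,b_g` of `Γ_g`
(`a_{i+1} ↦ 2i`, `b_{i+1} ↦ 2i+1`); `true` means a positive letter. -/
abbrev Letter (g : ℕ) := Fin (2 * g) × Bool

/-- The label of the `p`-th letter of the relator `[a₁,b₁][a₂,b₂]⋯[a_g,b_g]`. -/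
def relLabel (g : ℕ) (p : Fin (4 * g)) : Fin (2 * g) :=
  ⟨2 * ((p : ℕ) / 4) + ((p : ℕ) % 4) % 2, by have := p.2; omega⟩

/-- The sign of the `p`-th letter of the relator. -/
def relSign (g : ℕ) (p : Fin (4 * g)) : Bool := decide ((p : ℕ) % 4 < 2)

/-- The relator `[a₁,b₁][a₂,b₂]⋯[a_g,b_g]` as a word (list of signed letters). -/
def relatorWord (g : ℕ) : List (Letter g) :=
  (List.finRange (4 * g)).map fun p => (relLabel g p, relSign g p)

/-- The relator as an element of the free group on the `2g` generators. -/
def relatorF (g : ℕ) : FreeGroup (Fin (2 * g)) :=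
  ((relatorWord g).map fun l => if l.2 then FreeGroup.of l.1 else (FreeGroup.of l.1)⁻¹).prod

/-- The surface group `Γ_g = ⟨a₁,b₁,…,a_g,b_g ∣ [a₁,b₁]⋯[a_g,b_g]⟩`. -/
abbrev Gamma (g : ℕ) := PresentedGroup ({relatorF g} : Set (FreeGroup (Fin (2 * g))))

/-- The image of a signed letter in `Γ_g`. -/
def letterG {g : ℕ} (l : Letter g) : Gamma g :=
  if l.2 then PresentedGroup.of l.1 else (PresentedGroup.of l.1)⁻¹

/-- The image of a word in `Γ_g`. -/
def wordG {g : ℕ} (w : List (Letter g)) : Gamma g := (w.map letterG).prod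

/-- `ℓ(γ^{Γ_g})`: the minimal length of a word in the generators representing the
conjugacy class of `γ` in `Γ_g`. -/
def conjLen {g : ℕ} (γ : Gamma g) : ℕ :=
  sInf {n | ∃ w : List (Letter g), w.length = n ∧ ∃ x : Gamma g, x * wordG w * x⁻¹ = γ}

/-! ### Half-edge positions around a vertex of `Σ_g`

The `4g` half-edges around the vertex `o` of `Σ_g` come in the (clockwise) cyclic
order `a₁`-out, `b₁`-in, `a₁`-in, `b₁`-out, `a₂`-out, `b₂`-in, `a₂`-in, `b₂`-out, …
-/

/-- Position of the outgoing `ℓ`-labeled half-edge in the cyclic order. -/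
def posOut {g : ℕ} (ℓ : Fin (2 * g)) : ℕ :=
  if (ℓ : ℕ) % 2 = 0 then 2 * (ℓ : ℕ) else 2 * (ℓ : ℕ) + 1

/-- Position of the incoming `ℓ`-labeled half-edge in the cyclic order. -/
def posIn {g : ℕ} (ℓ : Fin (2 * g)) : ℕ :=
  if (ℓ : ℕ) % 2 = 0 then 2 * (ℓ : ℕ) + 2 else 2 * (ℓ : ℕ) - 1

/-- The position of the half-edge through which a traversal of a dart with signed
letter `s` *arrives* at its terminal vertex. -/
def posArr {g : ℕ} (s : Letter g) : ℕ := if s.2 then posIn s.1 else posOut s.1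

/-- The position of the half-edge through which a traversal of a dart with signed
letter `s` *leaves* its initial vertex. -/
def posLv {g : ℕ} (s : Letter g) : ℕ := if s.2 then posOut s.1 else posIn s.1

/-- The number of half-edges strictly between the arrival half-edge of `s` and the
departure half-edge of `t`, in the clockwise cyclic order of the `4g` half-edges
around a vertex. -/
def gapN {g : ℕ} (s t : Letter g) : ℕ := (posLv t + 4 * g - (posArr s + 1)) % (4 * g)

/-! ### Combinatorial complexes -/

/-- A combinatorial at-most-2-dimensional CW-complex with directed edges labeled by
the generators of `Γ_g`, and 2-cells recorded by their boundary walks (lists of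
darts, i.e. edges with a direction of traversal). -/
structure Complex (g : ℕ) where
  V : Type
  E : Type
  F : Type
  src : E → V
  dst : E → V
  lab : E → Fin (2 * g)
  bdry : F → List (E × Bool)

namespace Complex

variable {g : ℕ} (Y : Complex g)

/-- Darts: edges together with a direction of traversal (`true` = forward). -/
abbrev D := Y.E × Bool

/-- The initial vertex of a dart. -/
def dTail (d : Y.D) : Y.V := if d.2 then Y.src d.1 else Y.dst d.1

/-- The terminal vertex of a dart. -/
def dHead (d : Y.D) : Y.V := if d.2 then Y.dst d.1 else Y.src d.1

/-- The reversal of a dart. -/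
def dRev (d : Y.D) : Y.D := (d.1, !d.2)

/-- The signed letter read by a dart. -/
def dLet (d : Y.D) : Letter g := (Y.lab d.1, d.2)

/-- The word read along a list of darts. -/
def wordOf (l : List Y.D) : List (Letter g) := l.map Y.dLet

/-- The reversed walk. -/
def revW (l : List Y.D) : List Y.D := (l.map Y.dRev).reverse

/-- `WalkFrom u v l` : `l` is a walk (edge-path) from `u` to `v`. -/
inductive WalkFrom : Y.V → Y.V → List Y.D → Prop
  | nil (v : Y.V) : WalkFrom v v []
  | cons (d : Y.D) {v : Y.V} {l : List Y.D} :
      WalkFrom (Y.dHead d) v l → WalkFrom (Y.dTail d) v (d :: l)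

/-- All darts of `l` use edges from the set `sE`. -/
def InSet (sE : Set Y.E) (l : List Y.D) : Prop := ∀ d ∈ l, d.1 ∈ sE

/-- Two darts are adjacent (can be traversed consecutively). -/
def adj (d d' : Y.D) : Prop := Y.dHead d = Y.dTail d'

/-- A nonempty closed walk. -/
def IsCycle (c : List Y.D) : Prop := c ≠ [] ∧ ∃ v, Y.WalkFrom v v c

/-- **P1**: at most one incoming and at most one outgoing `ℓ`-labeled edge at every
vertex, for every label `ℓ`. -/
def P1 : Prop :=
  (∀ e e' : Y.E, Y.src e = Y.src e' → Y.lab e = Y.lab e' → e = e') ∧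
  (∀ e e' : Y.E, Y.dst e = Y.dst e' → Y.lab e = Y.lab e' → e = e')

/-- **P2**: every walk reading a word equal to `1` in `Γ_g` is closed. -/
def P2 : Prop :=
  ∀ (u v : Y.V) (l : List Y.D), Y.WalkFrom u v l → wordG (Y.wordOf l) = 1 → u = v

/-- **P3**: every 2-cell is glued along a closed walk reading the relator
`[a₁,b₁]⋯[a_g,b_g]`, and every such closed walk bounds at most one 2-cell. -/
def P3 : Prop :=
  (∀ f : Y.F, (∃ v, Y.WalkFrom v v (Y.bdry f)) ∧ Y.wordOf (Y.bdry f) = relatorWord g) ∧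
  Function.Injective Y.bdry

/-- A combinatorial covering space of `Σ_g`: every vertex has exactly one outgoing
and one incoming edge of each label, every walk reading the relator is closed, and
every closed walk reading the relator bounds exactly one `4g`-gon. -/
def IsCovering : Prop :=
  Y.P1 ∧ Y.P3 ∧
  (∀ (v : Y.V) (ℓ : Fin (2 * g)), ∃ e, Y.src e = v ∧ Y.lab e = ℓ) ∧
  (∀ (v : Y.V) (ℓ : Fin (2 * g)), ∃ e, Y.dst e = v ∧ Y.lab e = ℓ) ∧
  (∀ (u v : Y.V) (l : List Y.D), Y.WalkFrom u v l → Y.wordOf l = relatorWord g → u = v) ∧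
  (∀ (v : Y.V) (l : List Y.D), Y.WalkFrom v v l → Y.wordOf l = relatorWord g →
    ∃ f, Y.bdry f = l)

end Complex

/-- A morphism of labeled complexes: maps cells to cells of the same dimension and
respects sources, targets, labels and face boundaries (equivalently, commutes with
the immersions to `Σ_g`). -/
structure Hom {g : ℕ} (Y Z : Complex g) where
  mV : Y.V → Z.V
  mE : Y.E → Z.E
  mF : Y.F → Z.F
  hsrc : ∀ e, Z.src (mE e) = mV (Y.src e)
  hdst : ∀ e, Z.dst (mE e) = mV (Y.dst e)
  hlab : ∀ e, Z.lab (mE e) = Y.lab e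
  hbdry : ∀ f, Z.bdry (mF f) = (Y.bdry f).map fun d => (mE d.1, d.2)

namespace Hom

variable {g : ℕ} {Y Z : Complex g}

/-- The induced map on darts. -/
def mD (φ : Hom Y Z) (d : Y.D) : Z.D := (φ.mE d.1, d.2)

/-- Injectivity (an embedding of complexes). -/
def Inj (φ : Hom Y Z) : Prop :=
  Function.Injective φ.mV ∧ Function.Injective φ.mE ∧ Function.Injective φ.mF

end Hom

namespace Complex

variable {g : ℕ} (Y : Complex g)

/-- A tiled surface: a complex which embeds into a combinatorial covering space of
`Σ_g` (compatibly with directions and labels). -/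
def IsTiledSurface : Prop :=
  ∃ Z : Complex g, Z.IsCovering ∧ ∃ φ : Hom Y Z, φ.Inj

/-- Connectivity of a complex (any two vertices are joined by a walk). -/
def Connected : Prop := Nonempty Y.V ∧ ∀ v w : Y.V, ∃ l, Y.WalkFrom v w l

/-! ### Blocks and chains -/

/-- A block: a nonempty walk such that successive darts have no half-edges between
them (hence it reads a subword of the cyclic relator, of length at most `4g`). -/
def IsBlock (l : List Y.D) : Prop :=
  l ≠ [] ∧ l.length ≤ 4 * g ∧
  List.Chain' (fun d d' => Y.adj d d' ∧ gapN (Y.dLet d) (Y.dLet d') = 0) l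

/-- Two blocks are consecutive: concatenation is a walk and there is exactly one
half-edge between the last dart of the first and the first dart of the second. -/
def chainStep (b b' : List Y.D) : Prop :=
  ∃ d d', b.getLast? = some d ∧ b'.head? = some d' ∧ Y.adj d d' ∧
    gapN (Y.dLet d) (Y.dLet d') = 1

/-- A chain: a nonempty sequence of consecutive blocks. -/
def IsChain (bs : List (List Y.D)) : Prop :=
  bs ≠ [] ∧ (∀ b ∈ bs, Y.IsBlock b) ∧ List.Chain' Y.chainStep bs

/-- A cyclic chain: a chain whose blocks pave an entire cycle. -/
def IsCyclicChain (bs : List (List Y.D)) : Prop :=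
  Y.IsChain bs ∧ ∃ b b', bs.getLast? = some b ∧ bs.head? = some b' ∧ Y.chainStep b b'

/-- A long chain: a chain of consecutive blocks of lengths `2g, 2g−1, …, 2g−1, 2g`. -/
def IsLongChain (bs : List (List Y.D)) : Prop :=
  Y.IsChain bs ∧ ∃ k, bs.map List.length = 2 * g :: (List.replicate k (2 * g - 1) ++ [2 * g])

/-- A half-chain: a cyclic chain all of whose blocks have length `2g − 1`. -/
def IsHalfChain (bs : List (List Y.D)) : Prop :=
  Y.IsCyclicChain bs ∧ ∀ b ∈ bs, b.length = 2 * g - 1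

/-! ### Boundary cycles of the thick version (relative to sets of present edges and
faces), via the ribbon structure -/

/-- `nextD sE d d'`: among darts (with edge in `sE`) leaving the head of `d`, the
dart `d'` is the first one in clockwise order after the arrival half-edge of `d`.
This is the successor map whose orbits trace the boundary components of the thick
version of the ribbon graph. -/
def nextD (sE : Set Y.E) (d d' : Y.D) : Prop :=
  d'.1 ∈ sE ∧ Y.adj d d' ∧
  ∀ d'' : Y.D, d''.1 ∈ sE → Y.adj d d'' →
    gapN (Y.dLet d) (Y.dLet d') ≤ gapN (Y.dLet d) (Y.dLet d'')

/-- The corner between the consecutive darts `d, d'` is filled by a face from `sF`. -/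
def faceStep (sF : Set Y.F) (d d' : Y.D) : Prop :=
  ∃ f ∈ sF, [d, d'] <:+: (Y.bdry f ++ Y.bdry f)

/-- One step along the boundary of the thick version. -/
def bStep (sE : Set Y.E) (sF : Set Y.F) (d d' : Y.D) : Prop :=
  d.1 ∈ sE ∧ Y.nextD sE d d' ∧ ¬ Y.faceStep sF d d'

/-- A (finite segment of a) boundary cycle of the thick version. -/
def BPath (sE : Set Y.E) (sF : Set Y.F) (l : List Y.D) : Prop :=
  l ≠ [] ∧ Y.InSet sE l ∧ List.Chain' (Y.bStep sE sF) l

/-- A (finite) boundary cycle of the thick version. -/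
def BCycle (sE : Set Y.E) (sF : Set Y.F) (l : List Y.D) : Prop :=
  Y.BPath sE sF l ∧ ∃ d d', l.getLast? = some d ∧ l.head? = some d' ∧ Y.bStep sE sF d d'

/-- A dart lying on the boundary of the thick version. -/
def IsBDart (sE : Set Y.E) (sF : Set Y.F) (d : Y.D) : Prop :=
  d.1 ∈ sE ∧ ∃ d', Y.nextD sE d d' ∧ ¬ Y.faceStep sF d d'

/-- Boundary reduced: no boundary cycle contains a long block (length `≥ 2g+1`) or
a long chain. -/
def BoundaryReduced (sE : Set Y.E) (sF : Set Y.F) : Prop :=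
  (∀ l, Y.BPath sE sF l → ¬ (Y.IsBlock l ∧ 2 * g + 1 ≤ l.length)) ∧
  (∀ bs, Y.IsLongChain bs → ¬ Y.BPath sE sF bs.flatten)

/-- Strongly boundary reduced: no boundary cycle contains a half-block (length
exactly `2g`) or a half-chain. -/
def StronglyBoundaryReduced (sE : Set Y.E) (sF : Set Y.F) : Prop :=
  (∀ l, Y.BPath sE sF l → ¬ (Y.IsBlock l ∧ l.length = 2 * g)) ∧
  (∀ bs, Y.IsHalfChain bs → ¬ Y.BCycle sE sF bs.flatten)

/-! ### Combinatorial homotopy of walks -/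

/-- A closed walk traversing the boundary of a face from `sF` (in either direction,
starting anywhere). -/
def faceLoop (sF : Set Y.F) (b : List Y.D) : Prop :=
  ∃ f ∈ sF, ∃ n, b = (Y.bdry f).rotate n ∨ b = Y.revW ((Y.bdry f).rotate n)

/-- Elementary homotopy move: insertion of a backtrack or of a face boundary. -/
def elemMove (sE : Set Y.E) (sF : Set Y.F) (l l' : List Y.D) : Prop :=
  (∃ (l₁ l₂ : List Y.D) (d : Y.D), d.1 ∈ sE ∧ l = l₁ ++ l₂ ∧ l' = l₁ ++ d :: Y.dRev d :: l₂) ∨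
  (∃ l₁ l₂ b, Y.faceLoop sF b ∧ l = l₁ ++ l₂ ∧ l' = l₁ ++ b ++ l₂)

/-- Homotopy (rel endpoints) of walks from `u` to `v`, inside the subcomplex with
edge set `sE` and face set `sF`. -/
def Homotopic (sE : Set Y.E) (sF : Set Y.F) (u v : Y.V) (c c' : List Y.D) : Prop :=
  Relation.EqvGen
    (fun a b =>
      Y.WalkFrom u v a ∧ Y.WalkFrom u v b ∧ Y.InSet sE a ∧ Y.InSet sE b ∧
        (Y.elemMove sE sF a b ∨ Y.elemMove sE sF b a)) c c'

/-- A closed walk which is null-homotopic. -/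
def NullHomotopic (sE : Set Y.E) (sF : Set Y.F) (c : List Y.D) : Prop :=
  ∃ v, Y.WalkFrom v v c ∧ Y.Homotopic sE sF v v c []

/-- An essential cycle: a nonempty closed walk which is not null-homotopic. -/
def Essential (sE : Set Y.E) (sF : Set Y.F) (c : List Y.D) : Prop :=
  Y.IsCycle c ∧ Y.InSet sE c ∧ ¬ Y.NullHomotopic sE sF c

/-- Free homotopy of closed walks. -/
def FreelyHomotopic (sE : Set Y.E) (sF : Set Y.F) (c c' : List Y.D) : Prop :=
  ∃ u v q, Y.WalkFrom u u c ∧ Y.WalkFrom v v c' ∧ Y.WalkFrom u v q ∧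
    Y.InSet sE q ∧ Y.InSet sE c ∧ Y.InSet sE c' ∧
    Y.Homotopic sE sF u u c (q ++ c' ++ Y.revW q)

/-- `c` is a shortest representative of its free homotopy class. -/
def ShortestRep (sE : Set Y.E) (sF : Set Y.F) (c : List Y.D) : Prop :=
  ∀ c', Y.FreelyHomotopic sE sF c c' → c.length ≤ c'.length

end Complex

/-- `s` occurs as a contiguous subword of the cyclic word `c`. -/
def cycContains {α : Type*} (c s : List α) : Prop :=
  s ≠ [] ∧ s.length ≤ c.length ∧ s <:+: (c ++ c)

namespace Complex

variable {g : ℕ} (Y : Complex g)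

/-- The cycle `c` contains no long block and no long chain. -/
def NoLongBlockOrChainCyc (c : List Y.D) : Prop :=
  (∀ s, cycContains c s → ¬ (Y.IsBlock s ∧ 2 * g + 1 ≤ s.length)) ∧
  (∀ bs, Y.IsLongChain bs → ¬ cycContains c bs.flatten)

/-- A (cyclically) non-backtracking cycle. -/
def NonBacktrackingCyc (c : List Y.D) : Prop :=
  ¬ ∃ d : Y.D, cycContains c [d, Y.dRev d]

/-- A cycle which is essential and a shortest representative of its
free homotopy class. -/
def GoodCycle (c : List Y.D) : Prop :=
  Y.IsCycle c ∧ Y.Essential Set.univ Set.univ c ∧ Y.ShortestRep Set.univ Set.univ c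

/-! ### Cells and components of complements -/

/-- The cells of a complex. -/
def Cell := Y.V ⊕ Y.E ⊕ Y.F

def vCell (v : Y.V) : Y.Cell := Sum.inl v
def eCell (e : Y.E) : Y.Cell := Sum.inr (Sum.inl e)
def fCell (f : Y.F) : Y.Cell := Sum.inr (Sum.inr f)

/-- Basic incidence of (open) cells. -/
def inc0 : Y.Cell → Y.Cell → Prop := fun c c' =>
  match c, c' with
  | Sum.inl v, Sum.inr (Sum.inl e) => Y.src e = v ∨ Y.dst e = v
  | Sum.inl v, Sum.inr (Sum.inr f) => ∃ d ∈ Y.bdry f, Y.dTail d = v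
  | Sum.inr (Sum.inl e), Sum.inr (Sum.inr f) => ∃ b, (e, b) ∈ Y.bdry f
  | _, _ => False

/-- Symmetrized incidence of cells. -/
def incid (c c' : Y.Cell) : Prop := Y.inc0 c c' ∨ Y.inc0 c' c

end Complex

/-- A triple of subsets of the cells of a complex `Y` (a prospective subcomplex). -/
structure SubC {g : ℕ} (Y : Complex g) where
  sV : Set Y.V
  sE : Set Y.E
  sF : Set Y.F

namespace SubC

variable {g : ℕ} {Y : Complex g}

/-- `S` is an actual subcomplex: closed under taking boundaries of cells. -/
def IsSub (S : SubC Y) : Prop :=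
  (∀ e ∈ S.sE, Y.src e ∈ S.sV ∧ Y.dst e ∈ S.sV) ∧
  (∀ f ∈ S.sF, ∀ d ∈ Y.bdry f, d.1 ∈ S.sE)

/-- Containment of subcomplexes. -/
def le (S T : SubC Y) : Prop := S.sV ⊆ T.sV ∧ S.sE ⊆ T.sE ∧ S.sF ⊆ T.sF

/-- Compactness: finitely many cells. -/
def Compact (S : SubC Y) : Prop := S.sV.Finite ∧ S.sE.Finite ∧ S.sF.Finite

/-- Connectivity of the subcomplex. -/
def Connected (S : SubC Y) : Prop :=
  S.sV.Nonempty ∧ ∀ v ∈ S.sV, ∀ w ∈ S.sV, ∃ l, Y.WalkFrom v w l ∧ Y.InSet S.sE l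

/-- Image of a subcomplex under a morphism. -/
def image {Z : Complex g} (φ : Hom Y Z) (S : SubC Y) : SubC Z :=
  ⟨φ.mV '' S.sV, φ.mE '' S.sE, φ.mF '' S.sF⟩

end SubC

/-- The whole complex, as a subcomplex of itself. -/
def fullSub {g : ℕ} (Y : Complex g) : SubC Y := ⟨Set.univ, Set.univ, Set.univ⟩

namespace Complex

variable {g : ℕ} (Y : Complex g)

/-- Membership of a cell in a subcomplex. -/
def inSub (S : SubC Y) : Y.Cell → Prop := fun c =>
  match c with
  | Sum.inl v => v ∈ S.sV
  | Sum.inr (Sum.inl e) => e ∈ S.sE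
  | Sum.inr (Sum.inr f) => f ∈ S.sF

/-- Reachability of cells through the open complement of the subcomplex `S`
(= lying in the same connected component of the complement). -/
def reachS (S : SubC Y) (c c' : Y.Cell) : Prop :=
  Relation.ReflTransGen (fun a b => Y.incid a b ∧ ¬ Y.inSub S a ∧ ¬ Y.inSub S b) c c'

end Complex

/-- The closure (as a subcomplex) of the connected component of the cell `c₀` in the
complement of the subcomplex `S`. -/
def compCl {g : ℕ} (Y : Complex g) (S : SubC Y) (c₀ : Y.Cell) : SubC Y :=
  let cF : Set Y.F := {f | Y.reachS S c₀ (Y.fCell f)}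
  let cE : Set Y.E :=
    {e | Y.reachS S c₀ (Y.eCell e)} ∪ {e | ∃ f ∈ cF, ∃ b, (e, b) ∈ Y.bdry f}
  let cV : Set Y.V :=
    {v | Y.reachS S c₀ (Y.vCell v)} ∪ {v | ∃ e ∈ cE, Y.src e = v ∨ Y.dst e = v}
  ⟨cV, cE, cF⟩

/-- The subcomplex has exactly one boundary cycle (which covers all boundary darts). -/
def OneBdry {g : ℕ} (Y : Complex g) (S : SubC Y) : Prop :=
  ∃ δ, Y.BCycle S.sE S.sF δ ∧ ∀ d, Y.IsBDart S.sE S.sF d → d ∈ δ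

/-- The subcomplex has exactly two (disjoint) boundary cycles, covering all
boundary darts. -/
def TwoBdry {g : ℕ} (Y : Complex g) (S : SubC Y) : Prop :=
  ∃ δ₁ δ₂, Y.BCycle S.sE S.sF δ₁ ∧ Y.BCycle S.sE S.sF δ₂ ∧ δ₁.Disjoint δ₂ ∧
    ∀ d, Y.IsBDart S.sE S.sF d → d ∈ δ₁ ∨ d ∈ δ₂

/-- The boundary-reduced closure of `S` inside `Y`: the intersection of all
intermediate boundary reduced subcomplexes. -/
def BRcl {g : ℕ} (Y : Complex g) (S : SubC Y) : SubC Y where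
  sV := ⋂ T ∈ {T : SubC Y | T.IsSub ∧ S.le T ∧ Y.BoundaryReduced T.sE T.sF}, T.sV
  sE := ⋂ T ∈ {T : SubC Y | T.IsSub ∧ S.le T ∧ Y.BoundaryReduced T.sE T.sF}, T.sE
  sF := ⋂ T ∈ {T : SubC Y | T.IsSub ∧ S.le T ∧ Y.BoundaryReduced T.sE T.sF}, T.sF

/-- The strongly-boundary-reduced closure of `S` inside `Y`. -/
def SBRcl {g : ℕ} (Y : Complex g) (S : SubC Y) : SubC Y where
  sV := ⋂ T ∈ {T : SubC Y | T.IsSub ∧ S.le T ∧ Y.StronglyBoundaryReduced T.sE T.sF}, T.sV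
  sE := ⋂ T ∈ {T : SubC Y | T.IsSub ∧ S.le T ∧ Y.StronglyBoundaryReduced T.sE T.sF}, T.sE
  sF := ⋂ T ∈ {T : SubC Y | T.IsSub ∧ S.le T ∧ Y.StronglyBoundaryReduced T.sE T.sF}, T.sF

/-- An isomorphism between the subcomplex `S` of `Y` and the subcomplex `T` of `Z`. -/
structure SubEquiv {g : ℕ} (Y : Complex g) (S : SubC Y) (Z : Complex g) (T : SubC Z) where
  fV : Y.V → Z.V
  fE : Y.E → Z.E
  fF : Y.F → Z.F
  bijV : Set.BijOn fV S.sV T.sV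
  bijE : Set.BijOn fE S.sE T.sE
  bijF : Set.BijOn fF S.sF T.sF
  hsrc : ∀ e ∈ S.sE, Z.src (fE e) = fV (Y.src e)
  hdst : ∀ e ∈ S.sE, Z.dst (fE e) = fV (Y.dst e)
  hlab : ∀ e ∈ S.sE, Z.lab (fE e) = Y.lab e
  hbdry : ∀ f ∈ S.sF, Z.bdry (fF f) = (Y.bdry f).map fun d => (fE d.1, d.2)

/-- `FunnelComponent Y S c₀`: the connected component of the cell `c₀` in the
complement of the subcomplex `S` is a twice-punctured sphere with one funnel and
one fake-puncture.  Rendered combinatorially: the component contains infinitely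
many `4g`-gons (the funnel); there is a boundary cycle `δ` of `S` adjacent to the
component, it is unique (one fake-puncture), and every closed walk inside the
closure of the component is freely homotopic there to a power of `δ` or of its
inverse (so the closure is a half-open annulus bounded by `δ`). -/
def FunnelComponent {g : ℕ} (Y : Complex g) (S : SubC Y) (c₀ : Y.Cell) : Prop :=
  {f : Y.F | Y.reachS S c₀ (Y.fCell f)}.Infinite ∧
  ∃ δ : List Y.D, Y.BCycle S.sE S.sF δ ∧
    (∃ d ∈ δ, ∃ c', Y.incid (Y.eCell d.1) c' ∧ Y.reachS S c₀ c') ∧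
    (∀ δ', Y.BCycle S.sE S.sF δ' →
      (∃ d ∈ δ', ∃ c', Y.incid (Y.eCell d.1) c' ∧ Y.reachS S c₀ c') →
      ∃ n, δ' = δ.rotate n) ∧
    (∀ (v : Y.V) (l : List Y.D), Y.WalkFrom v v l →
      Y.InSet ({e | Y.reachS S c₀ (Y.eCell e)} ∪ {e | ∃ b, (e, b) ∈ δ}) l →
      ∃ n,
        Y.FreelyHomotopic ({e | Y.reachS S c₀ (Y.eCell e)} ∪ {e | ∃ b, (e, b) ∈ δ})
          {f | Y.reachS S c₀ (Y.fCell f)} l ((List.replicate n δ).flatten) ∨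
        Y.FreelyHomotopic ({e | Y.reachS S c₀ (Y.eCell e)} ∪ {e | ∃ b, (e, b) ∈ δ})
          {f | Y.reachS S c₀ (Y.fCell f)} l ((List.replicate n (Y.revW δ)).flatten))

/-- `Y` contains a funnel: an essential cycle `δ` of `Y` cutting off an infinite
region of `Y` which is attached to the rest of `Y` only along `δ`, contains no
boundary of `Y`, and is a half-open annulus (every loop inside is freely homotopic
to a power of `δ`); i.e. an end of `Y` which is a puncture of the ambient covering. -/
def HasFunnel {g : ℕ} (Y : Complex g) : Prop :=
  ∃ (δ : List Y.D) (sE : Set Y.E) (sF : Set Y.F),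
    Y.IsCycle δ ∧ Y.Essential Set.univ Set.univ δ ∧
    (∀ d ∈ δ, d.1 ∉ sE) ∧ sE.Nonempty ∧ sF.Infinite ∧
    (∀ f ∈ sF, ∀ d ∈ Y.bdry f, d.1 ∈ sE ∨ ∃ b, (d.1, b) ∈ δ) ∧
    (∀ f : Y.F, (∃ d ∈ Y.bdry f, d.1 ∈ sE) → f ∈ sF) ∧
    (∀ d : Y.D, d.1 ∈ sE → ¬ Y.IsBDart Set.univ Set.univ d) ∧
    (∀ v : Y.V, (∃ e ∈ sE, Y.src e = v ∨ Y.dst e = v) → (∀ d ∈ δ, Y.dTail d ≠ v) →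
      ∀ e' : Y.E, (Y.src e' = v ∨ Y.dst e' = v) → e' ∈ sE) ∧
    (∀ (v : Y.V) (l : List Y.D), Y.WalkFrom v v l →
      Y.InSet (sE ∪ {e | ∃ b, (e, b) ∈ δ}) l →
      ∃ n,
        Y.FreelyHomotopic (sE ∪ {e | ∃ b, (e, b) ∈ δ}) sF l
          ((List.replicate n δ).flatten) ∨
        Y.FreelyHomotopic (sE ∪ {e | ∃ b, (e, b) ∈ δ}) sF l
          ((List.replicate n (Y.revW δ)).flatten))

/-- The fundamental group of `Y` is cyclic: some closed walk `c` generates all free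
homotopy classes of loops.  (For a connected surface this is *equivalent to NOT
having genus ≥ 1 or at least 3 boundary components/punctures*.) -/
def CyclicPi1 {g : ℕ} (Y : Complex g) : Prop :=
  ∃ c : List Y.D, ∀ (v : Y.V) (l : List Y.D), Y.WalkFrom v v l →
    ∃ n,
      Y.FreelyHomotopic Set.univ Set.univ l ((List.replicate n c).flatten) ∨
      Y.FreelyHomotopic Set.univ Set.univ l ((List.replicate n (Y.revW c)).flatten)

/-! ### The covering space `J\~Σ_g` and the core surface of `J` -/

/-- Right cosets `Jx` of `J` in `Γ_g` — the vertices (and faces) of `J\~Σ_g`. -/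
abbrev Cos (g : ℕ) (J : Subgroup (Gamma g)) := Quotient (QuotientGroup.rightRel J)

/-- The coset `Jx`. -/
def mkCos (g : ℕ) (J : Subgroup (Gamma g)) (x : Gamma g) : Cos g J :=
  Quotient.mk _ x

/-- Right multiplication on right cosets. -/
def rmul (g : ℕ) (J : Subgroup (Gamma g)) (x : Gamma g) : Cos g J → Cos g J :=
  Quotient.map (· * x) (by
    intro a b hab
    have h1 : b * a⁻¹ ∈ J := QuotientGroup.rightRel_apply.mp hab
    refine QuotientGroup.rightRel_apply.mpr ?_
    have h2 : b * x * (a * x)⁻¹ = b * a⁻¹ := by group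
    rw [h2]; exact h1)

/-- The walk in `J\~Σ_g` starting at a vertex and reading a given word. -/
def relWalk (g : ℕ) (J : Subgroup (Gamma g)) :
    Cos g J → List (Letter g) → List ((Cos g J × Fin (2 * g)) × Bool)
  | _, [] => []
  | v, (ℓ, true) :: w =>
      ((v, ℓ), true) :: relWalk g J (rmul g J (PresentedGroup.of ℓ) v) w
  | v, (ℓ, false) :: w =>
      ((rmul g J (PresentedGroup.of ℓ)⁻¹ v, ℓ), false) ::
        relWalk g J (rmul g J (PresentedGroup.of ℓ)⁻¹ v) w

/-- The covering space `Υ = J\~Σ_g` of `Σ_g` corresponding to the subgroup `J`,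
with the CW-structure pulled back from `Σ_g`: vertices and `4g`-gons are the right
cosets of `J`, and each vertex carries one outgoing edge per label. -/
def cover (g : ℕ) (J : Subgroup (Gamma g)) : Complex g where
  V := Cos g J
  E := Cos g J × Fin (2 * g)
  F := Cos g J
  src e := e.1
  dst e := rmul g J (PresentedGroup.of e.2) e.1
  lab e := e.2
  bdry v := relWalk g J v (relatorWord g)

/-- The map `J₁\~Σ_g → J₂\~Σ_g` on vertices, for `J₁ ≤ J₂`. -/
def coverMapV {g : ℕ} {J₁ J₂ : Subgroup (Gamma g)} (h : J₁ ≤ J₂) :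
    Cos g J₁ → Cos g J₂ :=
  Quotient.map id (by
    intro a b hab
    have h1 : b * a⁻¹ ∈ J₁ := QuotientGroup.rightRel_apply.mp hab
    exact QuotientGroup.rightRel_apply.mpr (h h1))

/-- The natural covering morphism on edges. -/
def coverMapE {g : ℕ} {J₁ J₂ : Subgroup (Gamma g)} (h : J₁ ≤ J₂)
    (e : (cover g J₁).E) : (cover g J₂).E :=
  (coverMapV h e.1, e.2)

/-- The natural covering morphism on darts. -/
def coverMapD {g : ℕ} {J₁ J₂ : Subgroup (Gamma g)} (h : J₁ ≤ J₂)
    (d : (cover g J₁).D) : (cover g J₂).D :=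
  (coverMapE h d.1, d.2)

/-- The cycle `c` in `J\~Σ_g` represents the conjugacy class of `γ` in `J`
(conjugacy classes in `J` ↔ free homotopy classes of essential loops in `J\~Σ_g`). -/
def RepCls {g : ℕ} (J : Subgroup (Gamma g)) (c : List ((cover g J).D))
    (γ : Gamma g) : Prop :=
  ∃ x j : Gamma g, j ∈ J ∧
    (cover g J).WalkFrom (mkCos g J x) (mkCos g J x) c ∧
    x * wordG ((cover g J).wordOf c) * x⁻¹ = j * γ * j⁻¹

/-- Step (i) of the definition of the core surface: the edges lying on some
shortest representative cycle of an essential free homotopy class. -/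
def coreE1 (g : ℕ) (J : Subgroup (Gamma g)) : Set (cover g J).E :=
  {e | ∃ c, (cover g J).GoodCycle c ∧ ∃ b, (e, b) ∈ c}

/-- The vertices of step (i) of the definition of the core surface. -/
def coreV1 (g : ℕ) (J : Subgroup (Gamma g)) : Set (cover g J).V :=
  {v | ∃ e ∈ coreE1 g J, (cover g J).src e = v ∨ (cover g J).dst e = v}

/-- Step (i) of the definition of the core surface, as a subcomplex of `J\~Σ_g`. -/
def coreS1 (g : ℕ) (J : Subgroup (Gamma g)) : SubC (cover g J) :=
  ⟨coreV1 g J, coreE1 g J, ∅⟩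

/-- A cell of `J\~Σ_g` lying in a connected component of the complement of step (i)
which contains only finitely many `4g`-gons. -/
def coreFin (g : ℕ) (J : Subgroup (Gamma g)) (c : (cover g J).Cell) : Prop :=
  ¬ (cover g J).inSub (coreS1 g J) c ∧
  {f : (cover g J).F | (cover g J).reachS (coreS1 g J) c ((cover g J).fCell f)}.Finite

open Classical in
/-- The core surface `Core(J)` of a subgroup `J ≤ Γ_g`, as a subcomplex of
`Υ = J\~Σ_g`: (i) the union of all shortest representative cycles of essential
free homotopy classes in `Υ`, together with (ii) all connected components of the
complement containing finitely many `4g`-gons.  For the trivial subgroup it is a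
single vertex. -/
def coreSub (g : ℕ) (J : Subgroup (Gamma g)) : SubC (cover g J) :=
  if J = ⊥ then ⟨{mkCos g J 1}, ∅, ∅⟩
  else
    ⟨coreV1 g J ∪ {v | coreFin g J ((cover g J).vCell v)},
     coreE1 g J ∪ {e | coreFin g J ((cover g J).eCell e)},
     {f | coreFin g J ((cover g J).fCell f)}⟩

/-!
The 1-skeleton of the universal cover of `Σ_g` is the Cayley graph of `Γ_g`. It develops onto the
Cayley graph of the Coxeter group whose `4g` generators are cyclically ordered, with label `2g` for
neighbours and `∞` for all other pairs: the polygons become the braid relations. The edges over a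
strongly boundary reduced surface are closed under braid moves, because there are no half-blocks,
so their connected components are geodesically convex by Tits' solution of the word problem.

A shortest cycle lifts to a line along which its class `γ` translates by the minimal length, and
such a line is geodesic. If it missed the component of the lift of `C`, a wall of the Coxeter group
would separate the two, and a power of `γ` would preserve this wall. By convexity the component
would contain a whole ladder of polygons along the wall, up to its rungs, and the quotient of this
ladder would be a half-chain in the boundary.
-/

section CoxeterWords

open CoxeterSystem List

variable {B W : Type*} [Group W] {M : CoxeterMatrix B} (cs : CoxeterSystem M W)

/-- The alternating word `i, j, i, j, …` of length `n` that starts with `i`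
(Mathlib's `alternatingWord` fixes the last letter instead). -/
def altWord : B → B → ℕ → List B
  | _, _, 0 => []
  | i, j, n + 1 => i :: altWord j i n

@[simp] theorem altWord_zero (i j : B) : altWord i j 0 = [] := rfl

@[simp] theorem altWord_succ (i j : B) (n : ℕ) : altWord i j (n + 1) = i :: altWord j i n := rfl

@[simp] theorem length_altWord (i j : B) (n : ℕ) : (altWord i j n).length = n := by
  induction n generalizing i j with
  | zero => rfl
  | succ n ih => simp [ih]

theorem getElem_altWord (i j : B) {n r : ℕ} (h : r < (altWord i j n).length) :
    (altWord i j n)[r] = if Even r then i else j := by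
  induction n generalizing i j r with
  | zero => simp at h
  | succ n ih =>
    rcases r with _ | r
    · simp
    · simp only [altWord_succ, getElem_cons_succ, ih, Nat.even_add_one, ite_not]

theorem altWord_two_mul_add (i j : B) (m n : ℕ) :
    altWord i j (2 * m + n) = altWord i j (2 * m) ++ altWord i j n := by
  induction m with
  | zero => simp
  | succ m ih =>
    rw [show 2 * (m + 1) + n = 2 * m + n + 2 by ring]
    simp [mul_add, ih]

theorem exists_altWord_add (i j : B) (m n : ℕ) : ∃ k l,
    (k = i ∧ l = j ∨ k = j ∧ l = i) ∧ altWord i j (m + n) = altWord i j m ++ altWord k l n := by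
  induction m generalizing i j with
  | zero => exact ⟨i, j, .inl ⟨rfl, rfl⟩, by simp⟩
  | succ m ih =>
    obtain ⟨k, l, hkl, h⟩ := ih j i
    exact ⟨k, l, hkl.symm, by simp [show m + 1 + n = m + n + 1 by ring, h]⟩

theorem reverse_altWord_two_mul (i j : B) (m : ℕ) :
    (altWord i j (2 * m)).reverse = altWord j i (2 * m) := by
  induction m with
  | zero => rfl
  | succ m ih =>
    rw [show 2 * (m + 1) = 2 * m + 2 by ring, altWord_two_mul_add j i m 2]
    simp [ih]

theorem altWord_two_mul_eq_cons {m : ℕ} (hm : m ≠ 0) (i j : B) :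
    altWord i j (2 * m) = i :: altWord j i (2 * m - 1) := by
  rw [← altWord_succ]; congr 1; omega

theorem reverse_altWord_two_mul_sub_one {m : ℕ} (hm : m ≠ 0) (i j : B) :
    (altWord i j (2 * m - 1)).reverse = altWord i j (2 * m - 1) := by
  have h := congrArg reverse (altWord_two_mul_eq_cons hm j i)
  obtain ⟨k, rfl⟩ := Nat.exists_eq_succ_of_ne_zero hm
  rw [show 2 * (k + 1) - 1 = 2 * k + 1 by omega, altWord_two_mul_add, reverse_append,
    reverse_altWord_two_mul]
  have := altWord_two_mul_add i j k 1
  simp_all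

theorem altWord_two_mul_eq_append {m : ℕ} (hm : m ≠ 0) (i j : B) :
    altWord i j (2 * m) = altWord i j (2 * m - 1) ++ [j] := by
  rw [← reverse_altWord_two_mul, altWord_two_mul_eq_cons hm, reverse_cons,
    reverse_altWord_two_mul_sub_one hm]

theorem leftInvSeq_altWord (i j : B) (n : ℕ) : cs.leftInvSeq (altWord i j n) =
    (range n).map fun k => (cs.simple i * cs.simple j) ^ k * cs.simple i := by
  induction n generalizing i j with
  | zero => rfl
  | succ n ih =>
    rw [altWord_succ, leftInvSeq, ih, range_succ_eq_map, map_cons, map_map, map_map, pow_zero,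
      one_mul]
    congr 1
    refine map_congr_left fun k _ => ?_
    have h := (SemiconjBy.pow_right (show SemiconjBy (cs.simple i) (cs.simple j * cs.simple i)
      (cs.simple i * cs.simple j) from (mul_assoc _ _ _).symm) k).eq
    simp only [Function.comp_apply, MulAut.conj_apply, inv_simple, Nat.succ_eq_add_one]
    rw [← mul_assoc, h, pow_succ]
    simp only [mul_assoc]

theorem wordProd_altWord_two_mul (i j : B) (m : ℕ) :
    cs.wordProd (altWord i j (2 * m)) = (cs.simple i * cs.simple j) ^ m := by
  induction m with
  | zero => simp
  | succ m ih =>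
    rw [mul_add, altWord_two_mul_add, wordProd_append, ih, pow_succ]
    simp [wordProd_cons]

theorem wordProd_altWord_eq_pow_mul (i j : B) (n : ℕ) : cs.wordProd (altWord i j n) =
    (cs.simple i * cs.simple j) ^ n * cs.wordProd (altWord j i n) := by
  induction n generalizing i j with
  | zero => simp
  | succ n ih =>
    have h := (SemiconjBy.pow_right (show SemiconjBy (cs.simple i) (cs.simple j * cs.simple i)
      (cs.simple i * cs.simple j) from (mul_assoc _ _ _).symm) n).eq
    rw [altWord_succ, wordProd_cons, ih, altWord_succ, wordProd_cons, ← mul_assoc, h, pow_succ]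
    simp [mul_assoc]

theorem wordProd_altWord_comm (i j : B) :
    cs.wordProd (altWord i j (M i j)) = cs.wordProd (altWord j i (M i j)) := by
  rw [wordProd_altWord_eq_pow_mul, simple_mul_simple_pow, one_mul]

open Classical in
/-- The action of a simple reflection on pairs (element, parity): conjugation on the first
component, and a change of parity exactly at the simple reflection itself. The resulting action
of the group counts how often an element occurs in an inversion sequence, modulo two. -/
def reflectionPerm (i : B) : Equiv.Perm (W × ZMod 2) :=
  Function.Involutive.toPerm
    (fun x => (cs.simple i * x.1 * cs.simple i, x.2 + if x.1 = cs.simple i then 1 else 0)) <| by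
    rintro ⟨t, e⟩
    have h : cs.simple i * t * cs.simple i = cs.simple i ↔ t = cs.simple i := by
      rw [mul_eq_right, mul_eq_one_iff_eq_inv', inv_simple]
    ext
    · simp [mul_assoc]
    · by_cases ht : t = cs.simple i <;> simp [h, ht, add_assoc, CharTwo.add_self_eq_zero]

open Classical in
theorem reflectionPerm_apply (i : B) (x : W × ZMod 2) : reflectionPerm cs i x =
    (cs.simple i * x.1 * cs.simple i, x.2 + if x.1 = cs.simple i then 1 else 0) := rfl

open Classical in
theorem prod_map_reflectionPerm_apply (ω : List B) (t : W) (e : ZMod 2) :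
    (ω.map (reflectionPerm cs)).prod (t, e) =
      (cs.wordProd ω * t * (cs.wordProd ω)⁻¹, e + (cs.rightInvSeq ω).count t) := by
  induction ω with
  | nil => simp
  | cons i ω ih =>
    have h : cs.wordProd ω * t * (cs.wordProd ω)⁻¹ = cs.simple i ↔
        (cs.wordProd ω)⁻¹ * cs.simple i * cs.wordProd ω = t := by
      constructor <;> rintro h <;> rw [← h] <;> group
    rw [map_cons, prod_cons, Equiv.Perm.mul_apply, ih]
    ext
    · simp [reflectionPerm_apply, wordProd_cons, mul_assoc]
    · by_cases ht : (cs.wordProd ω)⁻¹ * cs.simple i * cs.wordProd ω = t <;>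
        simp [reflectionPerm_apply, rightInvSeq, h, ht, add_assoc]

open Classical in
theorem count_leftInvSeq_altWord (i j : B) (t : W) :
    ((cs.leftInvSeq (altWord i j (2 * M i j))).count t : ZMod 2) = 0 := by
  have h : (range (M i j)).map ((fun k => (cs.simple i * cs.simple j) ^ k * cs.simple i) ∘
      fun k => M i j + k) = (range (M i j)).map
        fun k => (cs.simple i * cs.simple j) ^ k * cs.simple i :=
    map_congr_left fun k _ => by simp [pow_add]
  rw [leftInvSeq_altWord, two_mul, range_add, map_append, count_append, map_map, h, Nat.cast_add,
    CharTwo.add_self_eq_zero]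

theorem isLiftable_reflectionPerm : M.IsLiftable (reflectionPerm cs) := by
  classical
  intro i j
  have h : ∀ m : ℕ, (reflectionPerm cs i * reflectionPerm cs j) ^ m =
      ((altWord i j (2 * m)).map (reflectionPerm cs)).prod := fun m => by
    induction m with
    | zero => simp
    | succ m ih => rw [pow_succ, ih, mul_add, altWord_two_mul_add]; simp
  rw [h]
  ext1 ⟨t, e⟩
  rw [prod_map_reflectionPerm_apply, wordProd_altWord_two_mul, simple_mul_simple_pow,
    ← reverse_altWord_two_mul, rightInvSeq_reverse, count_reverse, M.symmetric,
    count_leftInvSeq_altWord]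
  simp

open Classical in
theorem count_rightInvSeq_congr {ω ω' : List B} (h : cs.wordProd ω = cs.wordProd ω') (t : W) :
    ((cs.rightInvSeq ω).count t : ZMod 2) = (cs.rightInvSeq ω').count t := by
  have key (ω : List B) : cs.lift ⟨reflectionPerm cs, isLiftable_reflectionPerm cs⟩
      (cs.wordProd ω) = (ω.map (reflectionPerm cs)).prod := by
    simp [wordProd, map_list_prod, Function.comp_def, lift_apply_simple]
  have h' : (ω.map (reflectionPerm cs)).prod (t, 0) = (ω'.map (reflectionPerm cs)).prod (t, 0) := by
    rw [← key, ← key, h]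
  simpa [prod_map_reflectionPerm_apply] using congrArg Prod.snd h'

theorem mem_leftInvSeq_of_nodup {ω ω' : List B} (h : cs.wordProd ω = cs.wordProd ω')
    (hω : (cs.leftInvSeq ω).Nodup) {t : W} (ht : t ∈ cs.leftInvSeq ω) :
    t ∈ cs.leftInvSeq ω' := by
  classical
  have hc := count_rightInvSeq_congr cs (ω := ω.reverse) (ω' := ω'.reverse) (by simp [h]) t
  rw [rightInvSeq_reverse, rightInvSeq_reverse, count_reverse, count_reverse,
    count_eq_one_of_mem hω ht] at hc
  by_contra ht'
  rw [count_eq_zero_of_not_mem ht'] at hc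
  simp at hc

theorem isReduced_of_nodup_leftInvSeq {ω : List B} (hω : (cs.leftInvSeq ω).Nodup) :
    cs.IsReduced ω := by
  obtain ⟨ω', hω', h⟩ := cs.exists_isReduced (cs.wordProd ω)
  have hle : ω.length ≤ ω'.length := by
    simpa using (hω.subperm fun t ht => mem_leftInvSeq_of_nodup cs h hω ht).length_le
  exact le_antisymm (cs.length_wordProd_le ω) (by rwa [h, hω'.eq])

theorem isReduced_altWord {i j : B} (hM : orderOf (cs.simple i * cs.simple j) = M i j) {n : ℕ}
    (hn : M i j = 0 ∨ n ≤ M i j) : cs.IsReduced (altWord i j n) := by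
  refine isReduced_of_nodup_leftInvSeq cs ?_
  rw [leftInvSeq_altWord]
  refine Nodup.map_on (fun a ha b hb hab => ?_) nodup_range
  rw [mul_left_inj] at hab
  rw [mem_range] at ha hb
  rcases hn with h0 | hn
  · refine injective_pow_iff_not_isOfFinOrder.2 ?_ hab
    rwa [← orderOf_eq_zero_iff, hM]
  · exact pow_injOn_Iio_orderOf (Set.mem_Iio.2 (by omega)) (Set.mem_Iio.2 (by omega)) hab

/-! ### Descents -/

variable {cs}

theorem isReduced_of_cons {i : B} {ω : List B} (h : cs.IsReduced (i :: ω)) : cs.IsReduced ω :=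
  h.drop 1

theorem isReduced_cons {i : B} {ω : List B} (hω : cs.IsReduced ω) :
    cs.IsReduced (i :: ω) ↔ ¬ cs.IsLeftDescent (cs.wordProd ω) i := by
  rw [not_isLeftDescent_iff, ← wordProd_cons, hω.eq, CoxeterSystem.IsReduced, length_cons]

theorem isLeftDescent_wordProd_cons {i : B} {ω : List B} (h : cs.IsReduced (i :: ω)) :
    cs.IsLeftDescent (cs.wordProd (i :: ω)) i := by
  rw [IsLeftDescent, h.eq, wordProd_cons, simple_mul_simple_cancel_left,
    (isReduced_of_cons h).eq]
  simp

theorem exists_isReduced_cons {w : W} {i : B} (h : cs.IsLeftDescent w i) :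
    ∃ ω, cs.IsReduced (i :: ω) ∧ w = cs.wordProd (i :: ω) := by
  obtain ⟨ω, hω, hw⟩ := cs.exists_isReduced (cs.simple i * w)
  have hw' : w = cs.wordProd (i :: ω) := by rw [wordProd_cons, ← hw]; simp
  refine ⟨ω, (isReduced_cons hω).2 ?_, hw'⟩
  rw [← hw, not_isLeftDescent_iff]
  simpa using (isLeftDescent_iff cs).1 h |>.symm

theorem exists_eraseIdx_of_isLeftDescent {ω : List B} {i : B}
    (hi : cs.IsLeftDescent (cs.wordProd ω) i) :
    ∃ k < ω.length, cs.simple i * cs.wordProd ω = cs.wordProd (ω.eraseIdx k) := by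
  obtain ⟨ω', hω', h⟩ := exists_isReduced_cons hi
  obtain ⟨k, hk, hik⟩ := getElem_of_mem <|
    mem_leftInvSeq_of_nodup cs h.symm hω'.nodup_leftInvSeq (mem_cons_self ..)
  refine ⟨k, by simpa using hk, ?_⟩
  rw [← cs.getD_leftInvSeq_mul_wordProd ω k, getD_eq_getElem _ _ hk, hik]

theorem simple_mul_eq_mul_simple {w : W} {i q : B} (h : ¬ cs.IsLeftDescent w i)
    (hq : cs.IsLeftDescent (w * cs.simple q) i) : cs.simple i * w = w * cs.simple q := by
  obtain ⟨ω, hω, rfl⟩ := cs.exists_isReduced w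
  have hcat : cs.wordProd (ω ++ [q]) = cs.wordProd ω * cs.simple q := by simp [wordProd_append]
  rw [← hcat] at hq
  obtain ⟨k, hk, hik⟩ := exists_eraseIdx_of_isLeftDescent hq
  rw [length_append, length_singleton] at hk
  obtain hk | rfl : k < ω.length ∨ k = ω.length := by omega
  · refine absurd ?_ h
    have hiω : cs.simple i * cs.wordProd ω = cs.wordProd (ω.eraseIdx k) := by
      rw [eraseIdx_append_of_lt_length hk, hcat, wordProd_append, ← mul_assoc] at hik
      simpa using hik
    rw [IsLeftDescent, hiω, hω.eq]
    have hle := cs.length_wordProd_le (ω.eraseIdx k)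
    rw [length_eraseIdx_of_lt hk] at hle
    omega
  · rw [eraseIdx_append_of_length_le le_rfl, hcat] at hik
    simp only [Nat.sub_self, eraseIdx_cons_zero, append_nil] at hik
    rw [← simple_mul_simple_cancel_left cs i (w := cs.wordProd ω * _), hik]

theorem exists_isReduced_altWord_append (hM : ∀ i j, orderOf (cs.simple i * cs.simple j) = M i j)
    {w : W} {i j : B} (hi : cs.IsLeftDescent w i) (hj : cs.IsLeftDescent w j) {n : ℕ}
    (hn : M i j = 0 ∨ n ≤ M i j) :
    ∃ ω, cs.IsReduced (altWord i j n ++ ω) ∧ w = cs.wordProd (altWord i j n ++ ω) := by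
  induction n generalizing i j with
  | zero => exact cs.exists_isReduced w
  | succ n ih =>
    obtain ⟨ω, hω, rfl⟩ := ih hj hi (by rw [M.symmetric j i]; omega)
    obtain ⟨k, hk, hik⟩ := exists_eraseIdx_of_isLeftDescent hi
    rw [length_append, length_altWord] at hk
    obtain hkn | hkn : k < n ∨ n ≤ k := lt_or_ge k n
    · have hshort : cs.wordProd (altWord i j (n + 1)) =
          cs.wordProd ((altWord j i n).eraseIdx k) := by
        rw [eraseIdx_append_of_lt_length (by rwa [length_altWord]), wordProd_append,
          wordProd_append, ← mul_assoc, mul_left_inj, ← wordProd_cons] at hik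
        exact hik
      have hlen := (isReduced_altWord cs (hM i j) hn).eq
      have hle := cs.length_wordProd_le ((altWord j i n).eraseIdx k)
      rw [← hshort, hlen, length_eraseIdx_of_lt (by rwa [length_altWord]), length_altWord,
        length_altWord] at hle
      omega
    · rw [eraseIdx_append_of_length_le (by rwa [length_altWord]), length_altWord] at hik
      have hw : cs.wordProd (altWord j i n ++ ω) =
          cs.wordProd (altWord i j (n + 1) ++ ω.eraseIdx (k - n)) := by
        rw [altWord_succ, cons_append, wordProd_cons, ← hik]; simp
      refine ⟨ω.eraseIdx (k - n), ?_, hw⟩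
      rw [CoxeterSystem.IsReduced, ← hw, hω.eq]
      simp only [length_append, length_altWord,
        length_eraseIdx_of_lt (show k - n < ω.length by omega)]
      omega

theorem matrix_ne_zero_of_isLeftDescent (hM : ∀ i j, orderOf (cs.simple i * cs.simple j) = M i j)
    {w : W} {i j : B} (hi : cs.IsLeftDescent w i) (hj : cs.IsLeftDescent w j) : M i j ≠ 0 := by
  intro h0
  obtain ⟨ω, hω, hw⟩ := exists_isReduced_altWord_append hM hi hj (n := cs.length w + 1) (.inl h0)
  have := hω.eq
  rw [← hw, length_append, length_altWord] at this
  omega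

theorem isLeftDescent_of_cons
    (hM : ∀ i j, orderOf (cs.simple i * cs.simple j) = M i j) {i j : B} {ω : List B}
    (hω : cs.IsReduced (i :: ω)) (hj : cs.IsLeftDescent (cs.wordProd (i :: ω)) j) (hij : j ≠ i) :
    cs.IsLeftDescent (cs.wordProd ω) j := by
  have h1 := M.off_diagonal i j hij.symm
  obtain ⟨ρ, hρ, h⟩ := exists_isReduced_altWord_append hM (isLeftDescent_wordProd_cons hω) hj
    (n := 2) (by omega)
  have h' : cs.wordProd ω = cs.wordProd (j :: ρ) := mul_left_cancel
    (by simpa [wordProd_cons] using h : cs.simple i * cs.wordProd ω = _)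
  rw [h']
  exact isLeftDescent_wordProd_cons (isReduced_of_cons hρ)

theorem isReduced_altWord_append (hM : ∀ i j, orderOf (cs.simple i * cs.simple j) = M i j)
    {ω : List B} (hω : cs.IsReduced ω) {i j : B} (hi : ¬ cs.IsLeftDescent (cs.wordProd ω) i)
    (hj : ¬ cs.IsLeftDescent (cs.wordProd ω) j) {n : ℕ} (hn : M i j = 0 ∨ n ≤ M i j) :
    cs.IsReduced (altWord i j n ++ ω) := by
  induction n generalizing i j with
  | zero => exact hω
  | succ n ih =>
    have hred : cs.IsReduced (altWord j i n ++ ω) := ih hj hi (by rw [M.symmetric j i]; omega)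
    rw [altWord_succ, cons_append, isReduced_cons hred]
    intro hdi
    rcases n with _ | n
    · exact hi hdi
    have hdj : cs.IsLeftDescent (cs.wordProd (altWord j i (n + 1) ++ ω)) j :=
      isLeftDescent_wordProd_cons hred
    have h0 : M i j ≠ 0 := matrix_ne_zero_of_isLeftDescent hM hdi hdj
    obtain ⟨ρ, hρ, hw⟩ := exists_isReduced_altWord_append hM hdj hdi (.inr le_rfl)
    obtain ⟨k, l, hkl, hcat⟩ := exists_altWord_add j i (n + 1) (M j i - (n + 1))
    rw [M.symmetric j i, Nat.add_sub_cancel' (by omega)] at hcat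
    rw [M.symmetric j i, hcat, append_assoc] at hρ hw
    rw [wordProd_append, wordProd_append, mul_right_inj] at hw
    obtain ⟨m, hm⟩ : ∃ m, M i j - (n + 1) = m + 1 := ⟨M i j - (n + 2), by omega⟩
    have hk : cs.IsLeftDescent (cs.wordProd ω) k := by
      have := hρ.drop (altWord j i (n + 1)).length
      rw [drop_left, hm] at this
      rw [hw, hm]
      exact isLeftDescent_wordProd_cons this
    rcases hkl with ⟨rfl, -⟩ | ⟨rfl, -⟩
    exacts [hj hk, hi hk]

/-! ### Walks in an edge set of the Cayley graph -/

variable (cs) in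
/-- The walk from `x` that reads the word `ω` in the Cayley graph only uses edges from `E`, where
`E x i` says that the edge from `x` to `x s_i` is selected. -/
def WalkIn (E : W → B → Prop) : W → List B → Prop
  | _, [] => True
  | x, i :: ω => E x i ∧ WalkIn E (x * cs.simple i) ω

variable {E : W → B → Prop} {x : W}

@[simp] theorem walkIn_nil : WalkIn cs E x [] := trivial

@[simp] theorem walkIn_cons {i : B} {ω : List B} :
    WalkIn cs E x (i :: ω) ↔ E x i ∧ WalkIn cs E (x * cs.simple i) ω := Iff.rfl

@[simp] theorem walkIn_append {ω ω' : List B} :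
    WalkIn cs E x (ω ++ ω') ↔ WalkIn cs E x ω ∧ WalkIn cs E (x * cs.wordProd ω) ω' := by
  induction ω generalizing x with
  | nil => simp
  | cons i ω ih => simp [ih, wordProd_cons, mul_assoc, and_assoc]

variable (M cs) in
/-- Whenever `E` contains one side of a braid relation, it contains the other side too. -/
def BraidClosed (E : W → B → Prop) : Prop :=
  ∀ x i j, M i j ≠ 0 → WalkIn cs E x (altWord i j (M i j)) → WalkIn cs E x (altWord j i (M i j))

theorem BraidClosed.exists_walkIn_cons (hM : ∀ i j, orderOf (cs.simple i * cs.simple j) = M i j)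
    (hE : BraidClosed M cs E) {w : W} {i j : B} (hi : cs.IsLeftDescent w i)
    (hj : cs.IsLeftDescent w j) (hgeo : ∀ ω, cs.IsReduced (i :: ω) →
      w = cs.wordProd (i :: ω) → WalkIn cs E x (i :: ω)) :
    ∃ ω, cs.IsReduced (j :: ω) ∧ w = cs.wordProd (j :: ω) ∧ WalkIn cs E x (j :: ω) := by
  obtain ⟨m, hm⟩ := Nat.exists_eq_succ_of_ne_zero (matrix_ne_zero_of_isLeftDescent hM hi hj)
  obtain ⟨σ, hσ, rfl⟩ := exists_isReduced_altWord_append hM hi hj (.inr le_rfl)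
  have hside : WalkIn cs E x (altWord i j (M i j) ++ σ) := by
    rw [hm] at hσ hgeo ⊢
    exact hgeo _ hσ rfl
  have hprod : cs.wordProd (altWord i j (M i j) ++ σ) =
      cs.wordProd (altWord j i (M i j) ++ σ) := by
    rw [wordProd_append, wordProd_append, wordProd_altWord_comm]
  have hother : WalkIn cs E x (altWord j i (M i j) ++ σ) := by
    rw [walkIn_append] at hside ⊢
    exact ⟨hE x i j (by omega) hside.1, by rw [← wordProd_altWord_comm]; exact hside.2⟩
  have hred : cs.IsReduced (altWord j i (M i j) ++ σ) := by
    rw [CoxeterSystem.IsReduced, ← hprod, hσ.eq]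
    simp
  rw [hm, altWord_succ j] at hother hprod hred
  exact ⟨altWord i j m ++ σ, hred, by rw [hm]; exact hprod, hother⟩

/-- This is Tits' solution of the word problem: the walk `ω` is pushed to the geodesic `ρ` by
deletions of backtracks and braid moves. -/
theorem WalkIn.of_isReduced (hM : ∀ i j, orderOf (cs.simple i * cs.simple j) = M i j)
    (hE : BraidClosed M cs E) {ω ρ : List B} (hω : WalkIn cs E x ω)
    (hρ : cs.IsReduced ρ) (h : cs.wordProd ω = cs.wordProd ρ) : WalkIn cs E x ρ := by
  induction hn : ω.length using Nat.strong_induction_on generalizing x ω ρ with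
  | h n ih =>
  subst hn
  rcases ρ with _ | ⟨j, ρ⟩
  · exact walkIn_nil
  rcases ω with _ | ⟨i, ω⟩
  · have := hρ.eq
    rw [← h, wordProd_nil, length_one] at this
    simp at this
  have ih' {y : W} {ω' ρ' : List B} (hω' : WalkIn cs E y ω') (hρ' : cs.IsReduced ρ')
      (h' : cs.wordProd ω' = cs.wordProd ρ') (hlen : ω'.length ≤ ω.length) : WalkIn cs E y ρ' :=
    ih _ (Nat.lt_succ_of_le hlen) hω' hρ' h' rfl
  obtain ⟨hxi, hω⟩ := hω
  by_cases hi : cs.IsLeftDescent (cs.wordProd ω) i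
  · have hwalk : WalkIn cs E (x * cs.simple i) (i :: j :: ρ) := by
      refine ih' hω ((isReduced_cons hρ).2 ?_) ?_ le_rfl
      · rwa [← h, wordProd_cons, ← isLeftDescent_iff_not_isLeftDescent_mul]
      · rw [wordProd_cons, ← h, wordProd_cons, simple_mul_simple_cancel_left]
    simpa using hwalk.2
  have hdi : cs.IsLeftDescent (cs.wordProd (i :: ω)) i := by
    rwa [isLeftDescent_iff_not_isLeftDescent_mul, wordProd_cons, simple_mul_simple_cancel_left]
  have hdj : cs.IsLeftDescent (cs.wordProd (i :: ω)) j := by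
    rw [h]; exact isLeftDescent_wordProd_cons hρ
  obtain ⟨σ, hσ, hw, hjσ⟩ := hE.exists_walkIn_cons hM (x := x) hdi hdj fun ω' hω' h' =>
    ⟨hxi, ih' hω (isReduced_of_cons hω') (by simpa [wordProd_cons] using h') le_rfl⟩
  refine ⟨hjσ.1, ih' hjσ.2 (isReduced_of_cons hρ) ?_ ?_⟩
  · rw [← mul_right_inj (cs.simple j), ← wordProd_cons, ← wordProd_cons, ← hw, h]
  · have hle := cs.length_wordProd_le (i :: ω)
    rw [hw, hσ.eq] at hle
    simpa using hle

end CoxeterWords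

section CayleyGraph

open CoxeterSystem List

variable {B W : Type*} [Group W] {M : CoxeterMatrix B} {cs : CoxeterSystem M W}

/-! ### Components of edge sets -/

variable (cs) in
/-- `y` can be reached from `x` along edges of `E`. -/
def Joined (E : W → B → Prop) (x y : W) : Prop :=
  ∃ ω, WalkIn cs E x ω ∧ y = x * cs.wordProd ω

variable {E : W → B → Prop} {x y z : W}

theorem Joined.refl (x : W) : Joined cs E x x := ⟨[], by simp⟩

theorem Joined.trans (h : Joined cs E x y) (h' : Joined cs E y z) : Joined cs E x z := by
  obtain ⟨ω, hω, rfl⟩ := h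
  obtain ⟨ω', hω', rfl⟩ := h'
  exact ⟨ω ++ ω', by simp [hω, hω', wordProd_append, mul_assoc]⟩

theorem Joined.symm (hE : ∀ x i, E x i → E (x * cs.simple i) i) (h : Joined cs E x y) :
    Joined cs E y x := by
  obtain ⟨ω, hω, rfl⟩ := h
  induction ω generalizing x with
  | nil => simpa using Joined.refl x
  | cons i ω ih =>
    have hstep : Joined cs E (x * cs.simple i) x := ⟨[i], by simp [hE x i hω.1]⟩
    simpa [wordProd_cons, mul_assoc] using (ih hω.2).trans hstep

theorem Joined.walkIn (hM : ∀ i j, orderOf (cs.simple i * cs.simple j) = M i j)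
    (hE : BraidClosed M cs E) (h : Joined cs E x y) {ρ : List B} (hρ : cs.IsReduced ρ)
    (hy : y = x * cs.wordProd ρ) : WalkIn cs E x ρ := by
  obtain ⟨ω, hω, rfl⟩ := h
  exact hω.of_isReduced hM hE hρ (mul_left_cancel hy)

/-- The first edge of a shortest path from a component to an outside vertex `y` does not belong to
`E`, and by convexity its wall separates `y` from the whole component. -/
theorem exists_separating_edge (hM : ∀ i j, orderOf (cs.simple i * cs.simple j) = M i j)
    (hE : BraidClosed M cs E) (hsymm : ∀ x i, E x i → E (x * cs.simple i) i)
    (hxy : ¬ Joined cs E x y) : ∃ z p, Joined cs E x z ∧ ¬ E z p ∧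
      cs.IsLeftDescent (z⁻¹ * y) p ∧ ∀ z', Joined cs E x z' → ¬ cs.IsLeftDescent (z⁻¹ * z') p := by
  obtain ⟨z, hz, hmin⟩ := exists_minimalFor_of_wellFoundedLT (Joined cs E x)
    (fun z => cs.length (z⁻¹ * y)) ⟨x, Joined.refl x⟩
  have hzy : z⁻¹ * y ≠ 1 := fun h => hxy (by rwa [← inv_mul_eq_one.1 h])
  obtain ⟨p, hp⟩ := cs.exists_leftDescent_of_ne_one hzy
  have hEp : ¬ E z p := fun h => by
    have hle := hmin (hz.trans ⟨[p], by simp [h], rfl⟩) (by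
      simpa [mul_assoc] using (show cs.length _ < cs.length _ from hp).le)
    simp only [wordProd_singleton, mul_inv_rev, inv_simple, mul_assoc] at hle
    exact absurd hp (not_lt.2 hle)
  refine ⟨z, p, hz, hEp, hp, fun z' hz' hp' => hEp ?_⟩
  obtain ⟨ω, hω, hzz'⟩ := exists_isReduced_cons hp'
  exact (((hz.symm hsymm).trans hz').walkIn hM hE hω (by rw [← hzz']; group)).1

/-! ### Automorphisms of the Cayley graph -/

variable (cs) in
/-- Automorphisms of the unlabelled Cayley graph of a Coxeter system that permute the labels of
the edges consistently: pairs of a permutation of the vertices and one of the labels. -/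
def cayleyAut : Subgroup (Equiv.Perm W × Equiv.Perm B) where
  carrier := {φ | ∀ x i, φ.1 (x * cs.simple i) = φ.1 x * cs.simple (φ.2 i)}
  mul_mem' {φ ψ} hφ hψ x i := by
    simp only [Prod.fst_mul, Prod.snd_mul, Equiv.Perm.mul_apply, hψ x i, hφ (ψ.1 x)]
  one_mem' _ _ := rfl
  inv_mem' {φ} hφ x i := by
    rw [Prod.fst_inv, Prod.snd_inv, Equiv.Perm.inv_eq_iff_eq, hφ]
    simp

variable {φ : Equiv.Perm W × Equiv.Perm B}

theorem map_mul_simple (hφ : φ ∈ cayleyAut cs) (x : W) (i : B) :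
    φ.1 (x * cs.simple i) = φ.1 x * cs.simple (φ.2 i) := hφ x i

theorem map_mul_wordProd (hφ : φ ∈ cayleyAut cs) (x : W) (ω : List B) :
    φ.1 (x * cs.wordProd ω) = φ.1 x * cs.wordProd (ω.map φ.2) := by
  induction ω generalizing x with
  | nil => simp
  | cons i ω ih =>
    rw [wordProd_cons, ← mul_assoc, ih, map_mul_simple hφ]
    simp [wordProd_cons, mul_assoc]

theorem length_inv_map_mul_map_le (hφ : φ ∈ cayleyAut cs) (x y : W) :
    cs.length ((φ.1 x)⁻¹ * φ.1 y) ≤ cs.length (x⁻¹ * y) := by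
  obtain ⟨ω, hω, h⟩ := cs.exists_isReduced (x⁻¹ * y)
  rw [h, hω.eq, inv_mul_eq_iff_eq_mul.1 h, map_mul_wordProd hφ, inv_mul_cancel_left]
  simpa using cs.length_wordProd_le (ω.map φ.2)

theorem length_inv_map_mul_map (hφ : φ ∈ cayleyAut cs) (x y : W) :
    cs.length ((φ.1 x)⁻¹ * φ.1 y) = cs.length (x⁻¹ * y) := by
  refine (length_inv_map_mul_map_le hφ x y).antisymm ?_
  simpa using length_inv_map_mul_map_le (inv_mem hφ) (φ.1 x) (φ.1 y)

theorem walkIn_map (hφ : φ ∈ cayleyAut cs) (hE : ∀ x i, E x i → E (φ.1 x) (φ.2 i)) {x : W}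
    {ω : List B} (h : WalkIn cs E x ω) : WalkIn cs E (φ.1 x) (ω.map φ.2) := by
  induction ω generalizing x with
  | nil => trivial
  | cons i ω ih => exact ⟨hE x i h.1, by rw [← map_mul_simple hφ]; exact ih h.2⟩

theorem Joined.map (hφ : φ ∈ cayleyAut cs) (hE : ∀ x i, E x i → E (φ.1 x) (φ.2 i))
    (h : Joined cs E x y) : Joined cs E (φ.1 x) (φ.1 y) := by
  obtain ⟨ω, hω, rfl⟩ := h
  exact ⟨ω.map φ.2, walkIn_map hφ hE hω, map_mul_wordProd hφ x ω⟩

theorem map_reflection_mul (hφ : φ ∈ cayleyAut cs) {t v : W} {q : B}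
    (h : t * v = v * cs.simple q) (h' : t * φ.1 v = φ.1 v * cs.simple (φ.2 q)) (x : W) :
    φ.1 (t * x) = t * φ.1 x := by
  obtain ⟨ω, -, hω⟩ := cs.exists_isReduced (v⁻¹ * x)
  obtain rfl := inv_mul_eq_iff_eq_mul.1 hω
  rw [← mul_assoc, h, mul_assoc, ← wordProd_cons, map_mul_wordProd hφ, map_mul_wordProd hφ,
    ← mul_assoc, h', map_cons, wordProd_cons, mul_assoc]

/-! ### Walls -/

theorem reflection_mul_of_separated {x y : W} {i q : B}
    (h : ¬ (cs.IsLeftDescent (x⁻¹ * y) i ↔ cs.IsLeftDescent (x⁻¹ * (y * cs.simple q)) i)) :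
    x * cs.simple i * x⁻¹ * y = y * cs.simple q := by
  have key {w : W} (h₁ : ¬ cs.IsLeftDescent (x⁻¹ * w) i)
      (h₂ : cs.IsLeftDescent (x⁻¹ * (w * cs.simple q)) i) :
      x * cs.simple i * x⁻¹ * w = w * cs.simple q := by
    rw [← mul_assoc] at h₂
    rw [mul_assoc, mul_assoc, simple_mul_eq_mul_simple h₁ h₂]
    group
  by_cases hy : cs.IsLeftDescent (x⁻¹ * y) i
  · have h' := key (w := y * cs.simple q) (by tauto) (by simpa [mul_assoc] using hy)
    rw [simple_mul_simple_cancel_right] at h'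
    calc _ = x * cs.simple i * x⁻¹ * (x * cs.simple i * x⁻¹ * (y * cs.simple q)) := by rw [h']
      _ = _ := by simp [mul_assoc]
  · exact key hy (by tauto)

theorem exists_prefix_separated {x y : W} {i : B} {ω : List B}
    (h : ¬ (cs.IsLeftDescent (x⁻¹ * y) i ↔ cs.IsLeftDescent (x⁻¹ * (y * cs.wordProd ω)) i)) :
    ∃ k, ∃ hk : k < ω.length, x * cs.simple i * x⁻¹ * (y * cs.wordProd (ω.take k)) =
      y * cs.wordProd (ω.take k) * cs.simple ω[k] := by
  induction ω generalizing y with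
  | nil => simp at h
  | cons q ω ih =>
    by_cases hq : cs.IsLeftDescent (x⁻¹ * y) i ↔ cs.IsLeftDescent (x⁻¹ * (y * cs.simple q)) i
    · rw [hq, wordProd_cons, ← mul_assoc y] at h
      obtain ⟨k, hk, hflip⟩ := ih h
      exact ⟨k + 1, by simpa using hk, by simpa [wordProd_cons, mul_assoc] using hflip⟩
    · exact ⟨0, by simp, by simpa using reflection_mul_of_separated hq⟩

/-- The translates under the powers of `φ` of a path from `z` to `y` all cross the wall of the
edge `(z, p)`. Two of them cross it at translates of the same edge, and so a power of `φ`
preserves the wall. -/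
theorem exists_pow_commute_simple (hφ : φ ∈ cayleyAut cs) {z y : W} {p : B}
    (hz : ∀ n : ℕ, ¬ cs.IsLeftDescent (z⁻¹ * (φ ^ n).1 z) p)
    (hy : ∀ n : ℕ, cs.IsLeftDescent (z⁻¹ * (φ ^ n).1 y) p) :
    ∃ K ≠ 0, cs.simple p * (z⁻¹ * (φ ^ K).1 z) =
      z⁻¹ * (φ ^ K).1 z * cs.simple ((φ ^ K).2 p) := by
  obtain ⟨ω, -, hω⟩ := cs.exists_isReduced (z⁻¹ * y)
  obtain rfl := inv_mul_eq_iff_eq_mul.1 hω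
  set t := z * cs.simple p * z⁻¹ with ht
  have hcross (n : ℕ) : ∃ k : Fin ω.length, t * (φ ^ n).1 (z * cs.wordProd (ω.take k)) =
      (φ ^ n).1 (z * cs.wordProd (ω.take k)) * cs.simple ((φ ^ n).2 ω[k]) := by
    have hn := pow_mem hφ n
    have hsep := hy n
    rw [map_mul_wordProd hn] at hsep
    obtain ⟨k, hk, h⟩ := exists_prefix_separated (fun h => hz n (h.2 hsep))
    refine ⟨⟨k, by simpa using hk⟩, ?_⟩
    rw [map_mul_wordProd hn, map_take]
    simpa using h
  choose k hk using hcross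
  obtain ⟨m, n, hmn, hkmn⟩ : ∃ m n, m < n ∧ k m = k n := by
    obtain ⟨m, n, hne, h⟩ := Finite.exists_ne_map_eq_of_infinite k
    rcases hne.lt_or_gt with hlt | hlt
    exacts [⟨m, n, hlt, h⟩, ⟨n, m, hlt, h.symm⟩]
  obtain ⟨K, rfl⟩ := Nat.exists_eq_add_of_lt hmn
  have hsucc : φ ^ (m + K + 1) = φ ^ (K + 1) * φ ^ m := by rw [← pow_add]; congr 1; ring
  have hn := hk (m + K + 1)
  rw [← hkmn, hsucc] at hn
  have hcomm := map_reflection_mul (pow_mem hφ (K + 1)) (hk m) hn z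
  refine ⟨K + 1, K.succ_ne_zero, ?_⟩
  rw [ht, inv_mul_cancel_right, map_mul_simple (pow_mem hφ _)] at hcomm
  rw [mul_assoc, hcomm]
  group

/-! ### Geodesic lines -/

/-- The word read by the bi-infinite sequence `a` in the window of length `n` from `m` on. -/
def segment (a : ℤ → B) (m : ℤ) (n : ℕ) : List B := (range n).map fun k : ℕ => a (m + k)

@[simp] theorem length_segment (a : ℤ → B) (m : ℤ) (n : ℕ) : (segment a m n).length = n := by
  simp [segment]

theorem getElem_segment (a : ℤ → B) (s : ℤ) {n k : ℕ}
    (h : k < (segment a s n).length) : (segment a s n)[k] = a (s + k) := by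
  simp [segment]

theorem segment_add (a : ℤ → B) (s : ℤ) (n k : ℕ) :
    segment a s (n + k) = segment a s n ++ segment a (s + n) k := by
  simp [segment, range_add, add_assoc, Function.comp_def]

theorem segment_shift (a : ℤ → B) (s k : ℤ) (n : ℕ) :
    segment (fun k => a (s + k)) k n = segment a (s + k) n := by
  simp [segment, add_assoc]

theorem segment_eq_altWord {a : ℤ → B} {s : ℤ} {n : ℕ}
    (h : ∀ k : ℕ, k + 2 < n → a (s + k + 2) = a (s + k)) :
    segment a s n = altWord (a s) (a (s + 1)) n := by
  refine ext_getElem (by simp) fun k hk hk' => ?_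
  rw [getElem_segment, getElem_altWord]
  rw [length_altWord] at hk'
  induction k using Nat.twoStepInduction with
  | zero => simp
  | one => simp
  | more k ih _ =>
    have := h k hk'
    rw [show s + ((k + 2 : ℕ) : ℤ) = s + k + 2 by push_cast; ring, this,
      ih (by simp; omega) (by omega)]
    simp [Nat.even_add]

theorem segment_succ (a : ℤ → B) (m : ℤ) (n : ℕ) :
    segment a m (n + 1) = a m :: segment a (m + 1) n := by
  simp only [segment, range_succ_eq_map, map_cons, map_map, Nat.cast_zero, add_zero]
  congr 1
  exact map_congr_left fun k _ => by simp [add_comm, add_left_comm]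

variable {a : ℤ → B} {y : ℤ → W}

theorem line_add (hy : ∀ k, y (k + 1) = y k * cs.simple (a k)) (m : ℤ) (n : ℕ) :
    y (m + n) = y m * cs.wordProd (segment a m n) := by
  induction n generalizing m with
  | zero => simp [segment]
  | succ n ih =>
    have h := ih (m + 1)
    rw [hy, add_assoc, add_comm 1 (n : ℤ)] at h
    rw [segment_succ, wordProd_cons, ← mul_assoc, ← h, Nat.cast_succ]

theorem length_inv_mul_line (hy : ∀ k, y (k + 1) = y k * cs.simple (a k))
    (ha : ∀ m n, cs.IsReduced (segment a m n)) (m : ℤ) (n : ℕ) :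
    cs.length ((y m)⁻¹ * y (m + n)) = n := by
  rw [line_add hy, inv_mul_cancel_left, (ha m n).eq, length_segment]

theorem exists_flip_of_separated (hy : ∀ k, y (k + 1) = y k * cs.simple (a k)) {x : W} {i : B}
    {m : ℤ} {n : ℕ}
    (h : ¬ (cs.IsLeftDescent (x⁻¹ * y m) i ↔ cs.IsLeftDescent (x⁻¹ * y (m + n)) i)) :
    ∃ k < n, x * cs.simple i * x⁻¹ * y (m + k) = y (m + k + 1) := by
  induction n with
  | zero => simp at h
  | succ n ih =>
    by_cases hn : cs.IsLeftDescent (x⁻¹ * y m) i ↔ cs.IsLeftDescent (x⁻¹ * y (m + n)) i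
    · rw [hn, Nat.cast_succ, ← add_assoc, hy] at h
      exact ⟨n, n.lt_succ_self, by rw [hy]; exact reflection_mul_of_separated h⟩
    · obtain ⟨k, hk, hflip⟩ := ih hn
      exact ⟨k, hk.trans n.lt_succ_self, hflip⟩

theorem not_flipped_twice (hy : ∀ k, y (k + 1) = y k * cs.simple (a k))
    (ha : ∀ m n, cs.IsReduced (segment a m n)) {t : W} {m n : ℤ} (hmn : m < n)
    (hm : t * y m = y (m + 1)) : t * y n ≠ y (n + 1) := by
  intro hn
  obtain ⟨d, rfl⟩ := Int.le.dest (Int.add_one_le_iff.2 hmn)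
  have ht : t⁻¹ = t := by
    rw [eq_mul_inv_of_mul_eq hm, hy]; simp [mul_assoc]
  have hfold : (y m)⁻¹ * y (m + (d + 2 : ℕ)) = (y (m + 1))⁻¹ * y (m + 1 + d) := by
    rw [← hm, mul_inv_rev, ht, mul_assoc, hn]
    congr 2
    push_cast
    ring
  have hlen := congrArg cs.length hfold
  rw [length_inv_mul_line hy ha, length_inv_mul_line hy ha] at hlen
  omega

/-- A geodesic line crosses every wall at most once. -/
theorem line_ray_isLeftDescent (hy : ∀ k, y (k + 1) = y k * cs.simple (a k))
    (ha : ∀ m n, cs.IsReduced (segment a m n)) {x : W} {i : B}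
    (h0 : cs.IsLeftDescent (x⁻¹ * y 0) i) :
    (∀ n : ℕ, cs.IsLeftDescent (x⁻¹ * y n) i) ∨ ∀ n : ℕ, cs.IsLeftDescent (x⁻¹ * y (-n)) i := by
  by_contra! ⟨⟨n, hn⟩, n', hn'⟩
  obtain ⟨k, -, hk⟩ := exists_flip_of_separated hy (x := x) (i := i) (m := 0) (n := n)
    fun h => hn (by simpa using h.1 h0)
  obtain ⟨k', hk'n, hk'⟩ := exists_flip_of_separated hy (x := x) (i := i) (m := -n') (n := n')
    fun h => hn' (h.2 (by simpa using h0))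
  exact not_flipped_twice hy ha (by omega) hk' hk

end CayleyGraph

section CyclicMatrix

open CoxeterSystem List

theorem orderOf_simple_mul_simple_of_even {B W : Type*} [Group W] {M : CoxeterMatrix B}
    (cs : CoxeterSystem M W) (heven : ∀ i j, i ≠ j → Even (M i j)) (i j : B) :
    orderOf (cs.simple i * cs.simple j) = M i j := by
  classical
  rcases eq_or_ne i j with rfl | hij
  · simp
  let f : B → DihedralGroup (M i j) := fun k =>
    if k = i then .sr 0 else if k = j then .sr 1 else 1
  have hf (k : B) : f k * f k = 1 := by
    dsimp only [f]; split_ifs <;> simp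
  have hfi : f i = .sr 0 := if_pos rfl
  have hfj : f j = .sr 1 := by simp [f, hij.symm]
  have hlift : M.IsLiftable f := by
    intro k l
    rcases eq_or_ne k l with rfl | hkl
    · simp [hf]
    obtain ⟨c, hc⟩ := heven k l hkl
    by_cases hkl' : (k = i ∧ l = j) ∨ (k = j ∧ l = i)
    · rcases hkl' with ⟨rfl, rfl⟩ | ⟨rfl, rfl⟩
      · simp [hfi, hfj]
      · simp [hfi, hfj, M.symmetric k l]
    · have hsq : (f k * f l) ^ 2 = 1 := by
        have : f k = 1 ∨ f l = 1 := by
          by_contra! h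
          simp only [f, ne_eq] at h
          grind
        rcases this with h | h <;> simp [h, pow_two, hf]
      rw [hc, ← two_mul, pow_mul, hsq, one_pow]
  refine Nat.dvd_antisymm (orderOf_dvd_of_pow_eq_one (cs.simple_mul_simple_pow i j)) ?_
  have h : orderOf (DihedralGroup.r (1 : ZMod (M i j))) = M i j := DihedralGroup.orderOf_r_one
  have hmap : cs.lift ⟨f, hlift⟩ (cs.simple i * cs.simple j) = .r 1 := by
    rw [map_mul, lift_apply_simple, lift_apply_simple, hfi, hfj, DihedralGroup.sr_mul_sr, sub_zero]
  rw [← h, ← hmap]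
  exact orderOf_map_dvd _ _

/-- The Coxeter matrix on the cyclically ordered set `ZMod N` for which neighbours have label
`2 * m` and all other pairs generate infinite dihedral groups. For `N = 4 * g` and `m = g`
it is the Coxeter matrix of the universal cover of the surface of genus `g`. -/
def cyclicMatrix (N m : ℕ) : CoxeterMatrix (ZMod N) where
  M := .of fun i j => if i = j then 1 else if j = i + 1 ∨ i = j + 1 then 2 * m else 0
  isSymm := by
    ext i j
    simp only [Matrix.transpose_apply, Matrix.of_apply, eq_comm (a := j) (b := i),
      or_comm (a := i = j + 1)]
  diagonal i := by simp
  off_diagonal i j h := by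
    simp only [Matrix.of_apply, if_neg h]
    split_ifs <;> omega

variable {N m : ℕ} {i j η : ZMod N}

theorem cyclicMatrix_apply (i j : ZMod N) : cyclicMatrix N m i j =
    if i = j then 1 else if j = i + 1 ∨ i = j + 1 then 2 * m else 0 := rfl

theorem intCast_ne_zero_of_abs_lt {z : ℤ} (hz : z ≠ 0) (hN : |z| < N) : (z : ZMod N) ≠ 0 :=
  fun h => hz (Int.eq_zero_of_abs_lt_dvd ((ZMod.intCast_zmod_eq_zero_iff_dvd z N).1 h) hN)

theorem exists_eq_add_of_cyclicMatrix_ne_zero (h : cyclicMatrix N m i j ≠ 0) (hij : i ≠ j) :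
    ∃ η : ZMod N, (η = 1 ∨ η = -1) ∧ j = i + η := by
  rw [cyclicMatrix_apply, if_neg hij] at h
  have hadj : j = i + 1 ∨ i = j + 1 := by by_contra hn; exact h (if_neg hn)
  rcases hadj with rfl | rfl
  exacts [⟨1, .inl rfl, rfl⟩, ⟨-1, .inr rfl, by ring⟩]

theorem cyclicMatrix_add (hN : 2 ≤ N) (hη : η = 1 ∨ η = -1) (i : ZMod N) :
    cyclicMatrix N m i (i + η) = 2 * m := by
  have h1 : (1 : ZMod N) ≠ 0 := by
    exact_mod_cast intCast_ne_zero_of_abs_lt one_ne_zero (by simp; omega)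
  rw [cyclicMatrix_apply, if_neg, if_pos]
  · rcases hη with rfl | rfl <;> simp
  · rcases hη with rfl | rfl <;> simpa

theorem cyclicMatrix_eq_zero (hN : 5 ≤ N) {z : ℤ} (hz : 2 ≤ |z|) (hz' : |z| ≤ 3) (i : ZMod N) :
    cyclicMatrix N m i (i + z) = 0 := by
  have h {y : ℤ} (hy : y ≠ 0) (hy' : |y| ≤ 4) : (y : ZMod N) ≠ 0 :=
    intCast_ne_zero_of_abs_lt hy (by omega)
  rw [cyclicMatrix_apply, if_neg, if_neg]
  · have h₁ := h (y := z - 1) (by grind) (by grind)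
    have h₂ := h (y := z + 1) (by grind) (by grind)
    push_cast at h₁ h₂
    grind
  · have := h (y := z) (by grind) (by grind)
    grind

variable {W : Type*} [Group W] {cs : CoxeterSystem (cyclicMatrix N m) W}

variable (cs) in
theorem orderOf_simple_mul_simple_cyclic (i j : ZMod N) :
    orderOf (cs.simple i * cs.simple j) = cyclicMatrix N m i j := by
  refine orderOf_simple_mul_simple_of_even cs (fun i j hij => ?_) i j
  rw [cyclicMatrix_apply, if_neg hij]
  split_ifs <;> simp

theorem exists_eq_add_of_isLeftDescent {w : W} (hi : cs.IsLeftDescent w i)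
    (hj : cs.IsLeftDescent w j) (hij : i ≠ j) : ∃ η : ZMod N, (η = 1 ∨ η = -1) ∧ j = i + η :=
  exists_eq_add_of_cyclicMatrix_ne_zero
    (matrix_ne_zero_of_isLeftDescent (orderOf_simple_mul_simple_cyclic cs) hi hj) hij

theorem not_isLeftDescent_of_sub_eq (hN : 5 ≤ N) {w : W} (hi : cs.IsLeftDescent w i) {z : ℤ}
    (hz : 2 ≤ |z|) (hz' : |z| ≤ 3) (hj : j - i = z) : ¬ cs.IsLeftDescent w j := fun h =>
  matrix_ne_zero_of_isLeftDescent (orderOf_simple_mul_simple_cyclic cs) hi h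
    (by rw [← add_sub_cancel i j, hj]; exact cyclicMatrix_eq_zero hN hz hz' i)

theorem not_isLeftDescent_of_sub_eq_mul (hN : 5 ≤ N) (hη : η = 1 ∨ η = -1) {w : W}
    (hi : cs.IsLeftDescent w i) (hj : j - i = 2 * η ∨ j - i = 3 * η) :
    ¬ cs.IsLeftDescent w j := by
  obtain ⟨z, hz, hz', h⟩ : ∃ z : ℤ, 2 ≤ |z| ∧ |z| ≤ 3 ∧ j - i = z := by
    rcases hη with rfl | rfl <;> rcases hj with h | h
    exacts [⟨2, by simp, by simp, by simpa using h⟩, ⟨3, by simp, by simp, by simpa using h⟩,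
      ⟨-2, by simp, by simp, by simpa using h⟩, ⟨-3, by simp, by simp, by simpa using h⟩]
  exact not_isLeftDescent_of_sub_eq hN hi hz hz' h

/-! ### Ladders -/

/-- The word read along one side of a strip of `n` polygons that is bounded by the wall of `i`: the
side of each polygon consists of `2 * m - 1` edges, and `η = ± 1` is the direction in which the
labels turn along the first polygon. -/
def ladder (m : ℕ) (η : ZMod N) : ℕ → ZMod N → List (ZMod N)
  | 0, _ => []
  | n + 1, i => altWord (i + η) i (2 * m - 1) ++ ladder m (-η) n i

@[simp] theorem length_ladder (η : ZMod N) (n : ℕ) (i : ZMod N) :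
    (ladder m η n i).length = n * (2 * m - 1) := by
  induction n generalizing η with
  | zero => simp [ladder]
  | succ n ih => rw [ladder, length_append, length_altWord, ih]; ring

theorem ladder_add (η : ZMod N) (k n : ℕ) (i : ZMod N) :
    ladder m η (k + n) i = ladder m η k i ++ ladder m ((-1) ^ k * η) n i := by
  induction k generalizing η with
  | zero => simp [ladder]
  | succ k ih => rw [Nat.add_right_comm, ladder, ih, ladder, append_assoc, pow_succ]; simp

theorem simple_mul_wordProd_block (hN : 5 ≤ N) (hm : m ≠ 0) (hη : η = 1 ∨ η = -1) (i : ZMod N) :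
    cs.simple i * cs.wordProd (altWord (i + η) i (2 * m - 1)) =
      cs.wordProd (altWord (i + η) i (2 * m - 1)) * cs.simple i := by
  have hbraid := wordProd_altWord_comm cs i (i + η)
  rwa [cyclicMatrix_add (by omega) hη, altWord_two_mul_eq_cons hm, wordProd_cons,
    altWord_two_mul_eq_append hm, wordProd_append, wordProd_singleton] at hbraid

theorem simple_mul_wordProd_ladder (hN : 5 ≤ N) (hm : m ≠ 0) (hη : η = 1 ∨ η = -1) (n : ℕ)
    (i : ZMod N) : cs.simple i * cs.wordProd (ladder m η n i) =
      cs.wordProd (ladder m η n i) * cs.simple i := by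
  induction n generalizing η with
  | zero => simp [ladder]
  | succ n ih =>
    rw [ladder, wordProd_append, ← mul_assoc, simple_mul_wordProd_block hN hm hη, mul_assoc,
      ih (by grind), mul_assoc]

theorem isLeftDescent_wordProd_ladder_succ (hm : m ≠ 0) {n : ℕ}
    (h : cs.IsReduced (ladder m η (n + 1) i)) :
    cs.IsLeftDescent (cs.wordProd (ladder m η (n + 1) i)) (i + η) := by
  obtain ⟨k, rfl⟩ := Nat.exists_eq_succ_of_ne_zero hm
  exact isLeftDescent_wordProd_cons h

theorem isReduced_ladder (hN : 5 ≤ N) (hm : m ≠ 0) (hη : η = 1 ∨ η = -1) (n : ℕ) (i : ZMod N) :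
    cs.IsReduced (ladder m η n i) ∧ ¬ cs.IsLeftDescent (cs.wordProd (ladder m η n i)) i ∧
      ¬ cs.IsLeftDescent (cs.wordProd (ladder m η n i)) (i - η) := by
  induction n generalizing η with
  | zero => simp [ladder, CoxeterSystem.IsReduced, IsLeftDescent]
  | succ n ih =>
    obtain ⟨hred, hi, hj⟩ := ih (η := -η) (by grind)
    rw [sub_neg_eq_add] at hj
    have hred' : cs.IsReduced (altWord i (i + η) (2 * m) ++ ladder m (-η) n i) :=
      isReduced_altWord_append (orderOf_simple_mul_simple_cyclic cs) hred hi hj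
        (.inr (cyclicMatrix_add (by omega) hη i).ge)
    rw [altWord_two_mul_eq_cons hm, cons_append] at hred'
    have hred'' := isReduced_of_cons hred'
    refine ⟨hred'', (isReduced_cons hred'').1 hred', ?_⟩
    exact not_isLeftDescent_of_sub_eq_mul hN (η := -η) (by grind)
      (isLeftDescent_wordProd_ladder_succ hm hred'') (.inl (by ring))

theorem exists_eq_wordProd_altWord_append (hN : 5 ≤ N) (hm : m ≠ 0) (hη : η = 1 ∨ η = -1) {w : W}
    (hi : cs.IsLeftDescent w i) (hj : cs.IsLeftDescent w (i + η)) :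
    ∃ ω, w = cs.wordProd (altWord i (i + η) (2 * m) ++ ω) ∧
      cs.IsReduced (altWord i (i + η) (2 * m) ++ ω) ∧
      ¬ cs.IsLeftDescent (cs.wordProd ω) i ∧ ¬ cs.IsLeftDescent (cs.wordProd ω) (i + η) := by
  have hMij := cyclicMatrix_add (m := m) (by omega) hη i
  obtain ⟨ω, hω, hw⟩ := exists_isReduced_altWord_append (orderOf_simple_mul_simple_cyclic cs) hi hj
    (.inr hMij.ge)
  have hω' : cs.IsReduced (altWord (i + η) i (2 * m) ++ ω) := by
    have hbraid := wordProd_altWord_comm cs i (i + η)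
    rw [hMij] at hbraid
    have h := hω.eq
    rw [wordProd_append, hbraid, ← wordProd_append] at h
    simpa [CoxeterSystem.IsReduced] using h
  refine ⟨ω, hw, hω, fun h => ?_, fun h => ?_⟩
  · rw [altWord_two_mul_eq_append hm, append_assoc] at hω'
    have := hω'.drop (altWord (i + η) i (2 * m - 1)).length
    rw [drop_left] at this
    exact (isReduced_cons (isReduced_of_cons this)).1 this h
  · rw [altWord_two_mul_eq_append hm, append_assoc] at hω
    have := hω.drop (altWord i (i + η) (2 * m - 1)).length
    rw [drop_left] at this
    exact (isReduced_cons (isReduced_of_cons this)).1 this h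

theorem eq_of_simple_eq (h : cs.simple i = cs.simple j) : i = j := by
  have h1 := orderOf_simple_mul_simple_cyclic cs i j
  rw [← h, simple_mul_simple_self, orderOf_one] at h1
  by_contra hne
  exact (cyclicMatrix N m).off_diagonal i j hne h1.symm

theorem exists_eq_block_mul (hN : 5 ≤ N) (hm : m ≠ 0) {w : W} (hw1 : w ≠ 1)
    (hw : ¬ cs.IsLeftDescent w i) (h : cs.simple i * w = w * cs.simple j) :
    ∃ η u, (η = 1 ∨ η = -1) ∧ w = cs.wordProd (altWord (i + η) i (2 * m - 1)) * u ∧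
      cs.simple i * u = u * cs.simple j ∧ ¬ cs.IsLeftDescent u i ∧
      ¬ cs.IsLeftDescent u (i + η) ∧ cs.length u < cs.length w := by
  obtain ⟨k, hk⟩ := cs.exists_leftDescent_of_ne_one hw1
  have hlen := (not_isLeftDescent_iff cs).1 hw
  have hui : cs.IsLeftDescent (cs.simple i * w) i := by simp [IsLeftDescent, hlen]
  have huk : cs.IsLeftDescent (cs.simple i * w) k := by
    rw [IsLeftDescent, hlen, h, ← mul_assoc]
    have h₁ := cs.length_mul_le (cs.simple k * w) (cs.simple j)
    have h₂ := (isLeftDescent_iff cs).1 hk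
    rw [length_simple] at h₁
    omega
  obtain ⟨η, hη, rfl⟩ := exists_eq_add_of_isLeftDescent hui huk (fun hik => hw (hik ▸ hk))
  obtain ⟨ω, hu, hred, hωi, hωk⟩ := exists_eq_wordProd_altWord_append hN hm hη hui huk
  have hwω : w = cs.wordProd (altWord (i + η) i (2 * m - 1)) * cs.wordProd ω := by
    rw [altWord_two_mul_eq_cons hm, cons_append, wordProd_cons, wordProd_append] at hu
    exact mul_left_cancel hu
  refine ⟨η, cs.wordProd ω, hη, hwω, ?_, hωi, hωk, ?_⟩
  · rw [hwω, ← mul_assoc, simple_mul_wordProd_block hN hm hη] at h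
    simpa [mul_assoc] using h
  · have := hred.eq
    rw [← hu, length_append, length_altWord, hlen] at this
    have := cs.length_wordProd_le ω
    omega

/-- An element that carries the wall of `i` to the wall of `j` without crossing it moves along that
wall, hence along the side of a strip of polygons. -/
theorem exists_eq_wordProd_ladder (hN : 5 ≤ N) (hm : m ≠ 0) {w : W}
    (hw : ¬ cs.IsLeftDescent w i) (h : cs.simple i * w = w * cs.simple j) :
    j = i ∧ ∃ η n, (η = 1 ∨ η = -1) ∧ w = cs.wordProd (ladder m η n i) := by
  induction hl : cs.length w using Nat.strong_induction_on generalizing w with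
  | h l ih =>
  rcases eq_or_ne w 1 with rfl | hw1
  · exact ⟨(eq_of_simple_eq (by simpa using h)).symm, 1, 0, .inl rfl, by simp [ladder]⟩
  obtain ⟨η, u, hη, rfl, hcomm, hui, huk, hlt⟩ := exists_eq_block_mul hN hm hw1 hw h
  obtain ⟨rfl, η', n, hη', rfl⟩ := ih _ (hl ▸ hlt) hui hcomm rfl
  refine ⟨rfl, ?_⟩
  rcases n with _ | n
  · exact ⟨η, 1, hη, by simp [ladder]⟩
  · have hne : η' ≠ η := by
      rintro rfl
      exact huk (isLeftDescent_wordProd_ladder_succ hm (isReduced_ladder hN hm hη _ _).1)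
    obtain rfl : η' = -η := by grind
    exact ⟨η, n + 2, hη, by rw [← wordProd_append]; rfl⟩

variable (cs) in
/-- `ω` is the only reduced word for the element it represents. -/
def IsRigid (ω : List (ZMod N)) : Prop :=
  ∀ v, cs.IsReduced v → cs.wordProd v = cs.wordProd ω → v = ω

theorem IsRigid.cons {ω : List (ZMod N)} (hω : IsRigid cs ω) (hred : cs.IsReduced (i :: ω))
    (hdesc : ∀ j, cs.IsLeftDescent (cs.wordProd (i :: ω)) j → j = i) : IsRigid cs (i :: ω) := by
  rintro (_ | ⟨j, v⟩) hv h
  · have := hred.eq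
    simp [← h] at this
  · obtain rfl := hdesc j (h ▸ isLeftDescent_wordProd_cons hv)
    rw [wordProd_cons, wordProd_cons, mul_right_inj] at h
    rw [hω v (isReduced_of_cons hv) h]

theorem eq_of_isLeftDescent_altWord_append (hN : 5 ≤ N) (hη : η = 1 ∨ η = -1) {ω : List (ZMod N)}
    (hω : cs.IsReduced ω) (hi : ¬ cs.IsLeftDescent (cs.wordProd ω) i)
    (hj : ¬ cs.IsLeftDescent (cs.wordProd ω) (i + η)) {n : ℕ} (hn : n + 3 ≤ 2 * m)
    (h : cs.IsLeftDescent (cs.wordProd (altWord i (i + η) (n + 2) ++ ω)) j) : j = i := by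
  have hM := orderOf_simple_mul_simple_cyclic cs
  have hMij := cyclicMatrix_add (m := m) (by omega) hη i
  have hred : cs.IsReduced (altWord i (i + η) (n + 2) ++ ω) :=
    isReduced_altWord_append hM hω hi hj (.inr (by omega))
  by_contra hji
  have h' := isLeftDescent_of_cons hM hred h hji
  have hdesc : cs.IsLeftDescent (cs.wordProd (altWord (i + η) i (n + 1) ++ ω)) (i + η) :=
    isLeftDescent_wordProd_cons (isReduced_of_cons hred)
  obtain ⟨ε, hε, rfl⟩ := exists_eq_add_of_isLeftDescent (isLeftDescent_wordProd_cons hred) h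
    (Ne.symm hji)
  obtain rfl | rfl : ε = η ∨ ε = -η := by grind
  · have hred' : cs.IsReduced (altWord (i + ε) i (n + 3) ++ ω) :=
      isReduced_altWord_append hM hω hj hi
        (.inr (by rw [(cyclicMatrix N m).symmetric]; omega))
    exact (isReduced_cons hred).1 hred' h
  · exact not_isLeftDescent_of_sub_eq_mul hN (η := -η) (by grind) hdesc (.inl (by ring)) h'

theorem IsRigid.block (hN : 5 ≤ N) (hη : η = 1 ∨ η = -1) {ω : List (ZMod N)}
    (hω : cs.IsReduced ω) (hi : ¬ cs.IsLeftDescent (cs.wordProd ω) i)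
    (hj : ¬ cs.IsLeftDescent (cs.wordProd ω) (i + η)) (hrigid : IsRigid cs ((i + η) :: ω)) {l : ℕ}
    (hl : l + 1 ≤ m) : IsRigid cs (altWord (i + η) i (2 * l + 1) ++ ω) := by
  have hM := orderOf_simple_mul_simple_cyclic cs
  have hMij := cyclicMatrix_add (m := m) (by omega) hη i
  induction l with
  | zero => exact hrigid
  | succ l ih =>
    have hred : cs.IsReduced (altWord i (i + η) (2 * l + 2) ++ ω) :=
      isReduced_altWord_append hM hω hi hj (.inr (by omega))
    have hred' : cs.IsReduced (altWord (i + η) i (2 * l + 3) ++ ω) :=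
      isReduced_altWord_append hM hω hj hi (.inr (by rw [(cyclicMatrix N m).symmetric]; omega))
    refine ((ih (by omega)).cons hred fun j h => ?_).cons hred' fun j h => ?_
    · exact eq_of_isLeftDescent_altWord_append hN hη hω hi hj (n := 2 * l) (by omega) h
    · refine eq_of_isLeftDescent_altWord_append hN (η := -η) (by grind) hω hj (by simpa)
        (n := 2 * l + 1) (by omega) ?_
      simpa using h

theorem eq_of_isLeftDescent_cons_ladder (hN : 5 ≤ N) (hm : m ≠ 0) (hη : η = 1 ∨ η = -1) {n : ℕ}
    (h : cs.IsLeftDescent (cs.wordProd ((i + η) :: ladder m (-η) n i)) j) : j = i + η := by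
  have hM := orderOf_simple_mul_simple_cyclic cs
  have hMij := cyclicMatrix_add (m := m) (by omega) hη i
  obtain ⟨hω, hi, hj⟩ := isReduced_ladder (cs := cs) hN hm (η := -η) (by grind) n i
  rw [sub_neg_eq_add] at hj
  have hred : cs.IsReduced ((i + η) :: ladder m (-η) n i) := (isReduced_cons hω).2 hj
  have hred' : cs.IsReduced (i :: (i + η) :: ladder m (-η) n i) :=
    isReduced_altWord_append hM hω hi hj (n := 2) (.inr (by omega))
  by_contra hne
  obtain ⟨ε, hε, rfl⟩ := exists_eq_add_of_isLeftDescent (isLeftDescent_wordProd_cons hred) h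
    (Ne.symm hne)
  obtain rfl | rfl : ε = η ∨ ε = -η := by grind
  · have h' := isLeftDescent_of_cons hM hred h hne
    rcases n with _ | n
    · simp [ladder, IsLeftDescent] at h'
    · exact not_isLeftDescent_of_sub_eq_mul hN hε
        (isLeftDescent_wordProd_ladder_succ hm hω) (.inr (by ring)) h'
  · rw [add_neg_cancel_right] at h
    exact (isReduced_cons hred).1 hred' h

theorem isRigid_ladder (hN : 5 ≤ N) (hm : m ≠ 0) (hη : η = 1 ∨ η = -1) (n : ℕ) (i : ZMod N) :
    IsRigid cs (ladder m η n i) := by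
  induction n generalizing η with
  | zero => exact fun v hv h => by simpa [ladder, hv.eq] using congrArg cs.length h
  | succ n ih =>
    obtain ⟨hω, hi, hj⟩ := isReduced_ladder (cs := cs) hN hm (η := -η) (by grind) n i
    rw [sub_neg_eq_add] at hj
    have hrigid := (ih (by grind)).cons ((isReduced_cons hω).2 hj)
      fun j => eq_of_isLeftDescent_cons_ladder hN hm hη
    rw [ladder, show 2 * m - 1 = 2 * (m - 1) + 1 by omega]
    exact hrigid.block hN hη hω hi hj (by omega)

end CyclicMatrix

section PeriodicLines

open CoxeterSystem List

variable {N m : ℕ} {i η : ZMod N}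

/-- The increment of the labels along a line, with alternating sign. It is constant as long as the
line follows a single polygon. -/
def turn (a : ℤ → ZMod N) (k : ℤ) : ZMod N := (k.negOnePow : ℤ) * (a (k + 1) - a k)

variable {a : ℤ → ZMod N}

theorem turn_add_one_eq_iff (k : ℤ) : turn a (k + 1) = turn a k ↔ a (k + 2) = a k := by
  rw [turn, turn, Int.negOnePow_succ, add_assoc, one_add_one_eq_two]
  rcases Int.units_eq_one_or k.negOnePow with h | h <;> simp only [h] <;> push_cast <;> grind

theorem line_of_segment_eq_ladder {s : ℤ} {n : ℕ}
    (h : segment a s (n * (2 * m - 1)) = ladder m η n i) {k r : ℕ} (hk : k < n)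
    (hr : r < 2 * m - 1) :
    a (s + (k * (2 * m - 1) + r : ℕ)) = i + if Even r then (-1) ^ k * η else 0 := by
  have hkr : (k + 1) * (2 * m - 1) ≤ n * (2 * m - 1) := Nat.mul_le_mul_right _ hk
  obtain ⟨l, rfl⟩ : ∃ l, n = k + 1 + l := ⟨n - (k + 1), by omega⟩
  rw [add_mul, add_mul, segment_add, segment_add, add_assoc, ladder_add, append_assoc] at h
  have h' := (append_inj h (by simp)).2
  rw [add_comm 1 l, ladder] at h'
  have h'' := (append_inj h' (by simp)).1
  have hget : (segment a (s + (k * (2 * m - 1) : ℕ)) (1 * (2 * m - 1)))[r]? =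
    (altWord (i + (-1) ^ k * η) i (2 * m - 1))[r]? := by rw [h'']
  rw [getElem?_eq_getElem (by simpa using hr), getElem?_eq_getElem (by simpa using hr),
    getElem_segment, getElem_altWord, Option.some_inj] at hget
  rw [Nat.cast_add, ← add_assoc, hget]
  split_ifs <;> simp

theorem turn_natCast (k : ℕ) : turn a k = (-1) ^ k * (a (1 + k) - a k) := by
  rw [turn, Int.cast_negOnePow_natCast, add_comm]

theorem neg_one_pow_mul_two_mul_sub_one (hm : m ≠ 0) (k : ℕ) :
    (-1 : ZMod N) ^ (k * (2 * m - 1)) = (-1) ^ k := by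
  rw [mul_comm, pow_mul, Odd.neg_one_pow ⟨m - 1, by omega⟩]

theorem neg_one_pow_mul_self (k : ℕ) : (-1 : ZMod N) ^ k * (-1) ^ k = 1 := by
  rw [← mul_pow]; simp

theorem line_of_segment_eq_ladder_last (hm : m ≠ 0) {n : ℕ}
    (h : segment a 1 (n * (2 * m - 1)) = ladder m η n i) {k : ℕ} (hk : k < n) :
    a ((k + 1) * (2 * m - 1) : ℕ) = i + (-1) ^ k * η := by
  have := line_of_segment_eq_ladder h hk (r := 2 * m - 1 - 1) (by omega)
  rw [if_pos ⟨m - 1, by omega⟩] at this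
  rw [← this, add_mul, one_mul]
  congr 1
  push_cast
  omega

theorem turn_of_segment_eq_ladder_of_lt (hm : m ≠ 0) {n : ℕ}
    (h : segment a 1 (n * (2 * m - 1)) = ladder m η n i) {k r : ℕ} (hk : k < n)
    (hr : r + 1 < 2 * m - 1) : turn a (k * (2 * m - 1) + (r + 1) : ℕ) = η := by
  have hsq := neg_one_pow_mul_self (N := N)
  rw [turn_natCast, pow_add, neg_one_pow_mul_two_mul_sub_one hm,
    line_of_segment_eq_ladder h hk hr,
    show ((k * (2 * m - 1) + (r + 1) : ℕ) : ℤ) = 1 + ((k * (2 * m - 1) + r : ℕ) : ℤ) by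
      push_cast; ring,
    line_of_segment_eq_ladder h hk (by omega), pow_succ]
  rcases Nat.even_or_odd r with hr | hr
  · rw [if_neg (by simpa [Nat.even_add_one]), if_pos hr, hr.neg_one_pow]
    linear_combination η * hsq k
  · rw [if_pos (by simpa [Nat.even_add_one]), if_neg (by simpa), hr.neg_one_pow]
    linear_combination η * hsq k

theorem turn_of_segment_eq_ladder (hm : m ≠ 0) {n : ℕ} (hn : n ≠ 0) (h0 : a 0 = i)
    (h : segment a 1 (n * (2 * m - 1)) = ladder m η n i)
    (h1 : a (1 + (n * (2 * m - 1) : ℕ)) = i) {k : ℕ} (hk : k ≤ n * (2 * m - 1)) :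
    turn a k = if 2 * m - 1 ∣ k ∧ k ≠ 0 ∧ k ≠ n * (2 * m - 1) then 2 * η else η := by
  have hq0 : 0 < 2 * m - 1 := by omega
  have hsq := neg_one_pow_mul_self (N := N)
  obtain ⟨l, r, hr, rfl⟩ : ∃ l r, r < 2 * m - 1 ∧ k = l * (2 * m - 1) + r :=
    ⟨k / (2 * m - 1), k % (2 * m - 1), Nat.mod_lt k hq0, (Nat.div_add_mod' k _).symm⟩
  rcases r with _ | r
  · rw [add_zero] at hk ⊢
    rw [turn_natCast, neg_one_pow_mul_two_mul_sub_one hm]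
    rcases l with _ | l
    · have := line_of_segment_eq_ladder h (k := 0) (r := 0) (by omega) hq0
      simp_all
    rw [line_of_segment_eq_ladder_last hm h (by nlinarith)]
    obtain hln | rfl := (Nat.le_of_mul_le_mul_right hk hq0).lt_or_eq
    · have := line_of_segment_eq_ladder h (r := 0) hln hq0
      rw [add_zero, if_pos Even.zero] at this
      rw [this, if_pos ⟨Nat.dvd_mul_left .., by positivity, by
        simpa [hq0.ne'] using hln.ne⟩, pow_succ]
      linear_combination 2 * η * hsq l
    · rw [h1, if_neg (by simp), pow_succ]
      linear_combination η * hsq l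
  · rw [turn_of_segment_eq_ladder_of_lt hm h (by nlinarith) hr, if_neg]
    rintro ⟨hd, -⟩
    rw [Nat.dvd_add_right (Nat.dvd_mul_left ..)] at hd
    exact (Nat.le_of_dvd r.succ_pos hd).not_gt hr

theorem turn_eq_of_forall_lt {t : ℕ} (ht : 0 < t) (hper : Function.Periodic (turn a) (t : ℤ))
    {η : ZMod N} (h : ∀ k : ℕ, k < t → turn a k = η) (k : ℤ) : turn a k = η := by
  obtain ⟨l, ⟨hl, hlt⟩, hkl⟩ := hper.exists_mem_Ico₀ (by exact_mod_cast ht) k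
  lift l to ℕ using hl
  rw [hkl, h l (by exact_mod_cast hlt)]

/-! ### Axes -/

/-- A bi-infinite path `y` in the Cayley graph, with labels `a`, which `φ` shifts by `t` steps. -/
structure IsAxis {B W : Type*} [Group W] {M : CoxeterMatrix B} (cs : CoxeterSystem M W)
    (φ : Equiv.Perm W × Equiv.Perm B) (t : ℕ) (y : ℤ → W) (a : ℤ → B) : Prop where
  step k : y (k + 1) = y k * cs.simple (a k)
  map_vertex k : φ.1 (y k) = y (k + t)
  map_label k : φ.2 (a k) = a (k + t)

section

variable {B W : Type*} [Group W] {M : CoxeterMatrix B} {cs : CoxeterSystem M W}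
  {φ : Equiv.Perm W × Equiv.Perm B} {t : ℕ} {y : ℤ → W} {a : ℤ → B}

theorem IsAxis.shift (hax : IsAxis cs φ t y a) (s : ℤ) :
    IsAxis cs φ t (fun k => y (s + k)) (fun k => a (s + k)) where
  step k := by rw [← add_assoc, hax.step]
  map_vertex k := by rw [hax.map_vertex, add_assoc]
  map_label k := by rw [hax.map_label, add_assoc]

theorem IsAxis.isReduced_segment_of_le (hax : IsAxis cs φ t y a)
    (hmin : ∀ x, t ≤ cs.length (x⁻¹ * φ.1 x)) (s : ℤ) {n : ℕ} (hn : n ≤ t) :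
    cs.IsReduced (segment a s n) := by
  have ht : cs.IsReduced (segment a s t) := by
    have := hmin (y s)
    rw [hax.map_vertex, line_add hax.step, inv_mul_cancel_left] at this
    exact (cs.length_wordProd_le _).antisymm (by simpa using this)
  rw [← Nat.add_sub_cancel' hn, segment_add] at ht
  simpa using ht.take n

/-- A shortest non-reduced window begins and ends with edges crossing the same wall. -/
theorem exists_segment_commute {s : ℤ} {n : ℕ} (h : ¬ cs.IsReduced (segment a s n)) :
    ∃ s l, ¬ cs.IsReduced (segment a s (l + 2)) ∧
      (∀ s' n, n ≤ l + 1 → cs.IsReduced (segment a s' n)) ∧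
      ¬ cs.IsLeftDescent (cs.wordProd (segment a (s + 1) l)) (a s) ∧
      cs.simple (a s) * cs.wordProd (segment a (s + 1) l) =
        cs.wordProd (segment a (s + 1) l) * cs.simple (a (s + 1 + l)) := by
  have hex : ∃ n s, ¬ cs.IsReduced (segment a s n) := ⟨n, s, h⟩
  classical
  obtain ⟨s, hs⟩ := Nat.find_spec hex
  have hlt {s' n'} (hn' : n' < Nat.find hex) : cs.IsReduced (segment a s' n') := by
    simpa using not_exists.1 (Nat.find_min hex hn') s'
  obtain ⟨l, hl⟩ : ∃ l, Nat.find hex = l + 2 := by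
    refine Nat.exists_eq_add_of_le' ?_
    by_contra! hlt
    interval_cases Nat.find hex <;> simp [segment, CoxeterSystem.IsReduced] at hs
  rw [hl] at hs hlt
  have hnot : ¬ cs.IsLeftDescent (cs.wordProd (segment a (s + 1) l)) (a s) := by
    rw [← isReduced_cons (hlt (by omega)), ← segment_succ]
    exact hlt (by omega)
  refine ⟨s, l, hs, fun s' n hn => hlt (by omega), hnot, simple_mul_eq_mul_simple hnot ?_⟩
  have hsnoc : segment a (s + 1) (l + 1) = segment a (s + 1) l ++ [a (s + 1 + l)] := by
    rw [segment_add]; simp [segment]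
  rw [segment_succ, isReduced_cons (hlt (by omega)), not_not, hsnoc, wordProd_append,
    wordProd_singleton] at hs
  exact hs

end

variable {W : Type*} [Group W] {cs : CoxeterSystem (cyclicMatrix N m) W}
  {φ : Equiv.Perm W × Equiv.Perm (ZMod N)} {t : ℕ} {y : ℤ → W}

theorem exists_segment_eq_ladder (hN : 5 ≤ N) (hm : m ≠ 0) {s : ℤ} {n : ℕ}
    (h : ¬ cs.IsReduced (segment a s n)) :
    ∃ s η n, (η = 1 ∨ η = -1) ∧ segment a (s + 1) (n * (2 * m - 1)) = ladder m η n (a s) ∧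
      a (s + 1 + (n * (2 * m - 1) : ℕ)) = a s ∧
      ¬ cs.IsReduced (segment a s (n * (2 * m - 1) + 2)) ∧
      ∀ s' k, k ≤ n * (2 * m - 1) + 1 → cs.IsReduced (segment a s' k) := by
  obtain ⟨s, l, hnred, hred, hnot, hcomm⟩ := exists_segment_commute h
  obtain ⟨hend, η, n, hη, hprod⟩ := exists_eq_wordProd_ladder hN hm hnot hcomm
  have hseg : segment a (s + 1) l = ladder m η n (a s) :=
    isRigid_ladder hN hm hη n _ _ (hred _ _ (by omega)) hprod
  obtain rfl : l = n * (2 * m - 1) := by simpa using congrArg length hseg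
  exact ⟨s, η, n, hη, hseg, hend, hnred, hred⟩

theorem IsAxis.turn_periodic (hax : IsAxis cs φ t y a) {c : ZMod N}
    (hθ : ∀ i, φ.2 i = (-1) ^ t * i + c) : Function.Periodic (turn a) (t : ℤ) := fun k => by
  rw [turn, turn, add_right_comm, ← hax.map_label, ← hax.map_label, hθ, hθ, Int.negOnePow_add,
    Units.val_mul, Int.cast_mul, Int.cast_negOnePow_natCast]
  linear_combination ((k.negOnePow : ℤ) : ZMod N) * (a (k + 1) - a k) *
    neg_one_pow_mul_self (N := N) t

variable {n : ℕ}

theorem period_two_of_segment_eq_ladder (hm : m ≠ 0) (ht : 0 < t)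
    (hper : Function.Periodic (turn a) (t : ℤ)) (hn : n ≤ 1) (h0 : a 0 = i)
    (h : segment a 1 (n * (2 * m - 1)) = ladder m η n i)
    (h1 : a (1 + (n * (2 * m - 1) : ℕ)) = i) (htn : t ≤ n * (2 * m - 1) + 1) (k : ℤ) :
    a (k + 2) = a k := by
  obtain ⟨ζ, hζ⟩ : ∃ ζ, ∀ k : ℕ, k < t → turn a k = ζ := by
    obtain rfl | rfl : n = 0 ∨ n = 1 := by omega
    · exact ⟨turn a 0, fun k hk => by rw [show k = 0 by omega, Nat.cast_zero]⟩
    · refine ⟨η, fun k hk => ?_⟩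
      rw [turn_of_segment_eq_ladder hm one_ne_zero h0 h h1 (by omega), if_neg]
      rintro ⟨⟨b, rfl⟩, hk0, hk1⟩
      obtain rfl | rfl | ⟨b, rfl⟩ : b = 0 ∨ b = 1 ∨ ∃ c, b = c + 2 := by
        rcases b with _ | _ | b <;> simp
      · simp at hk0
      · simp at hk1
      · have : 0 < 2 * m - 1 := by omega
        nlinarith
  rw [← turn_add_one_eq_iff, turn_eq_of_forall_lt ht hper hζ, turn_eq_of_forall_lt ht hper hζ]

theorem lt_of_segment_eq_ladder (hm : m ≠ 0) (hη : η ≠ 0) (ht : 0 < t)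
    (hper : Function.Periodic (turn a) (t : ℤ)) (hn : n ≠ 0) (h0 : a 0 = i)
    (h : segment a 1 ((n + 1) * (2 * m - 1)) = ladder m η (n + 1) i)
    (h1 : a (1 + ((n + 1) * (2 * m - 1) : ℕ)) = i) : n * (2 * m - 1) < t := by
  have hturn {k : ℕ} := turn_of_segment_eq_ladder hm n.add_one_ne_zero h0 h h1 (k := k)
  have hne : 2 * η ≠ η := by simpa [two_mul] using hη
  have hq : 2 * m - 1 ≠ 0 := by omega
  by_contra! htn
  have htlt : t < (n + 1) * (2 * m - 1) := by rw [add_mul]; omega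
  have hqt : turn a (2 * m - 1 + t : ℕ) = 2 * η := by
    rw [Nat.cast_add, hper, hturn (Nat.le_mul_of_pos_left _ n.succ_pos), if_pos]
    simpa [hq, add_mul] using hn
  rw [hturn (by rw [add_mul]; omega)] at hqt
  obtain ⟨hdvd, -⟩ := (ite_ne_right_iff.1 (hqt.trans_ne hne)).1
  rw [Nat.dvd_add_right dvd_rfl] at hdvd
  have ht0 := hper 0
  rw [zero_add, hturn htlt.le, if_pos ⟨hdvd, ht.ne', htlt.ne⟩] at ht0
  exact hne (ht0.trans ((hturn (k := 0) (Nat.zero_le _)).trans (if_neg (by simp))))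

theorem not_isReduced_altWord (hN : 5 ≤ N) (hη : η = 1 ∨ η = -1) (hm : m ≠ 0) (i : ZMod N) :
    ¬ cs.IsReduced (altWord i (i + η) (2 * m + 1)) := fun h => by
  have hbraid := wordProd_altWord_comm cs i (i + η)
  rw [cyclicMatrix_add (by omega) hη] at hbraid
  refine (isReduced_cons (isReduced_of_cons h)).1 h ?_
  rw [← hbraid, altWord_two_mul_eq_cons hm]
  refine isLeftDescent_wordProd_cons ?_
  rw [← altWord_two_mul_eq_cons hm]
  exact isReduced_altWord cs (orderOf_simple_mul_simple_cyclic cs _ _)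
    (.inr (cyclicMatrix_add (by omega) hη i).ge)

theorem le_of_segment_eq_ladder (hN : 5 ≤ N) (hm : m ≠ 0) (hη : η = 1 ∨ η = -1)
    (hper : Function.Periodic (turn a) (t : ℤ)) (hn : n ≠ 0) (h0 : a 0 = i)
    (h : segment a 1 ((n + 1) * (2 * m - 1)) = ladder m η (n + 1) i)
    (h1 : a (1 + ((n + 1) * (2 * m - 1) : ℕ)) = i)
    (hred : cs.IsReduced (segment a (n * (2 * m - 1) + 1 : ℕ) (2 * m + 1)))
    (ht : t ≤ (n + 1) * (2 * m - 1) + 1) : t ≤ n * (2 * m - 1) + 1 := by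
  by_contra! hlt
  have hturn {k : ℕ} := turn_of_segment_eq_ladder hm n.add_one_ne_zero h0 h h1 (k := k)
  have hq : 2 * m - 1 ≠ 0 := by omega
  have hsum : (n + 1) * (2 * m - 1) = n * (2 * m - 1) + (2 * m - 1) := by ring
  have hη' (k : ℕ) (hk : k ≤ 2 * m - 1) : turn a (n * (2 * m - 1) + 1 + k : ℕ) = η := by
    obtain hk | rfl : k + 1 ≤ 2 * m - 1 ∨ k = 2 * m - 1 := by omega
    · rw [hturn (by omega), if_neg]
      rintro ⟨hd, -, hne⟩
      rw [add_assoc, Nat.dvd_add_right (Nat.dvd_mul_left ..)] at hd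
      have := Nat.le_of_dvd (by omega) hd
      omega
    · obtain ⟨l, hl⟩ := Nat.exists_eq_add_of_le' ht
      have hsplit : n * (2 * m - 1) + 1 + (2 * m - 1) = l + t := by omega
      rw [hsplit, Nat.cast_add, hper, hturn (by omega), if_neg]
      rintro ⟨hd, hl0, -⟩
      have := Nat.le_of_dvd (by omega) hd
      omega
  rw [segment_eq_altWord fun k hk => ?_] at hred
  · have hs := hη' 0 (Nat.zero_le _)
    rw [add_zero, turn_natCast, add_comm 1] at hs
    have hstep : a ((n * (2 * m - 1) + 1 : ℕ) + 1) =
        a (n * (2 * m - 1) + 1 : ℕ) + (-1) ^ (n * (2 * m - 1) + 1) * η := by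
      rw [← hs, ← mul_assoc, neg_one_pow_mul_self, one_mul, add_sub_cancel]
    rw [hstep] at hred
    refine not_isReduced_altWord hN ?_ hm _ hred
    rcases neg_one_pow_eq_or (ZMod N) (n * (2 * m - 1) + 1) with h | h <;> grind
  · rw [← turn_add_one_eq_iff]
    have h₁ := hη' k (by omega)
    have h₂ := hη' (k + 1) (by omega)
    push_cast at h₁ h₂ ⊢
    rw [h₁, ← h₂, add_assoc]

theorem IsAxis.exists_length_lt (hax : IsAxis cs φ t y a) (hφ : φ ∈ cayleyAut cs) {c : ZMod N}
    (hθ : ∀ i, φ.2 i = (-1) ^ t * i + c) (hN : 5 ≤ N) (hm : m ≠ 0) (hη : η = 1 ∨ η = -1)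
    (h0 : a 0 = i) (h : segment a 1 ((n + 1) * (2 * m - 1)) = ladder m η (n + 1) i)
    (hn : n ≠ 0) (ht : t = n * (2 * m - 1) + 1) : ∃ x, cs.length (x⁻¹ * φ.1 x) < t := by
  have hfst : segment a 1 (n * (2 * m - 1)) = ladder m η n i := by
    rw [add_mul, segment_add, ladder_add] at h
    exact (append_inj h (by simp)).1
  have hat : a t = i + (-1) ^ n * η := by
    have := line_of_segment_eq_ladder h n.lt_succ_self (r := 0) (by omega)
    rw [add_zero, if_pos Even.zero] at this
    rw [← this, ht, Nat.cast_succ, add_comm]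
  have hθi : φ.2 (i + η) = i := by
    have h₁ := hax.map_label 0
    rw [zero_add, h0, hat, hθ, ht, pow_succ, neg_one_pow_mul_two_mul_sub_one hm] at h₁
    rw [hθ, ht, pow_succ, neg_one_pow_mul_two_mul_sub_one hm]
    linear_combination h₁
  refine ⟨y 0 * cs.simple (i + η), ?_⟩
  have hprod : (y 0 * cs.simple (i + η))⁻¹ * φ.1 (y 0 * cs.simple (i + η)) =
      cs.simple (i + η) * cs.wordProd (ladder m η n i) := by
    rw [map_mul_simple hφ, hθi, hax.map_vertex, line_add hax.step, ht, segment_succ, zero_add, hfst,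
      h0, wordProd_cons, simple_mul_wordProd_ladder hN hm hη]
    simp [mul_assoc]
  obtain ⟨n, rfl⟩ := Nat.exists_eq_add_one_of_ne_zero hn
  have hred := (isReduced_ladder (cs := cs) hN hm hη (n + 1) i).1
  have hdesc : cs.length _ < cs.length _ := isLeftDescent_wordProd_ladder_succ hm hred
  rw [hprod]
  rw [hred.eq, length_ladder] at hdesc
  omega

/-- An axis of minimal translation length is a geodesic line unless it winds around a polygon. -/
theorem IsAxis.isReduced_segment (hax : IsAxis cs φ t y a) (hφ : φ ∈ cayleyAut cs) {c : ZMod N}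
    (hθ : ∀ i, φ.2 i = (-1) ^ t * i + c) (hN : 5 ≤ N) (hm : m ≠ 0) (ht : 0 < t)
    (hmin : ∀ x, t ≤ cs.length (x⁻¹ * φ.1 x))
    (hflat : (∀ k, a (k + 2) = a k) → ∀ k, a (k + 1) - a k = 0 ∨ a (k + 1) - a k = 1 ∨
      a (k + 1) - a k = -1 → 2 * m < t) (s : ℤ) (n : ℕ) : cs.IsReduced (segment a s n) := by
  by_contra hnred
  obtain ⟨s, η, n, hη, hlad, hend, hnred, hred⟩ := exists_segment_eq_ladder hN hm hnred
  have htn : t ≤ n * (2 * m - 1) + 1 := by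
    by_contra! hlt
    exact hnred (hax.isReduced_segment_of_le hmin s hlt)
  have hax' := hax.shift s
  have hper := hax'.turn_periodic hθ
  rw [← segment_shift] at hlad
  rw [add_assoc] at hend
  rcases Nat.lt_or_ge 1 n with hn | hn
  · obtain ⟨n, rfl⟩ := Nat.exists_eq_add_one_of_ne_zero (by omega : n ≠ 0)
    have hlong : 2 * (2 * m - 1) ≤ (n + 1) * (2 * m - 1) := Nat.mul_le_mul_right _ hn
    have hη0 : η ≠ 0 := by
      have := intCast_ne_zero_of_abs_lt (N := N) one_ne_zero (by simp; omega)
      rcases hη with rfl | rfl <;> simpa using this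
    have hlt := lt_of_segment_eq_ladder hm hη0 ht hper (by omega) (by simp) hlad hend
    have hle := le_of_segment_eq_ladder (cs := cs) hN hm hη hper (by omega) (by simp) hlad hend
      (by rw [segment_shift]; exact hred _ _ (by omega)) htn
    obtain ⟨x, hx⟩ := hax'.exists_length_lt hφ hθ hN hm hη (by simp) hlad (by omega) (by omega)
    exact hx.not_ge (hmin x)
  · have htwo := period_two_of_segment_eq_ladder hm ht hper hn (by simp) hlad hend htn
    refine absurd (hflat (fun k => ?_) s ?_) ?_
    · simpa only [← add_assoc, add_sub_cancel] using htwo (k - s)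
    · rcases n with _ | _ | n
      · rw [zero_mul, Nat.cast_zero, add_zero] at hend
        exact .inl (by rw [hend, sub_self])
      · have hfst := line_of_segment_eq_ladder hlad (k := 0) (r := 0) one_pos (by omega)
        simp only [zero_mul, Nat.cast_zero, add_zero, Even.zero, if_true, pow_zero, one_mul] at hfst
        exact .inr (by rwa [hfst, add_sub_cancel_left])
      · omega
    · have hshort : n * (2 * m - 1) ≤ 1 * (2 * m - 1) := Nat.mul_le_mul_right _ hn
      omega

end PeriodicLines

section ConvexHull

open CoxeterSystem List

theorem reverse_ladder {N m : ℕ} (hm : m ≠ 0) (η : ZMod N) (n : ℕ) (i : ZMod N) :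
    (ladder m η (n + 1) i).reverse = ladder m ((-1) ^ n * η) (n + 1) i := by
  induction n generalizing η with
  | zero => simp [ladder, reverse_altWord_two_mul_sub_one hm]
  | succ n ih =>
    have hsign : (-1 : ZMod N) ^ (n + 1) * ((-1) ^ (n + 1) * η) = η := by
      rw [← mul_assoc, neg_one_pow_mul_self, one_mul]
    rw [ladder, reverse_append, ih, reverse_altWord_two_mul_sub_one hm, ladder_add _ (n + 1), hsign,
      pow_succ]
    simp [ladder]

theorem zpow_map_edge {B W : Type*} {φ : Equiv.Perm W × Equiv.Perm B} {E : W → B → Prop}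
    (hEφ : ∀ x i, E (φ.1 x) (φ.2 i) ↔ E x i) (n : ℤ) (x : W) (i : B) :
    E ((φ ^ n).1 x) ((φ ^ n).2 i) ↔ E x i := by
  induction n generalizing x i with
  | zero => simp
  | succ n ih =>
    rw [zpow_add_one, Prod.fst_mul, Prod.snd_mul, Equiv.Perm.mul_apply, Equiv.Perm.mul_apply, ih,
      hEφ]
  | pred n ih =>
    rw [zpow_sub_one, Prod.fst_mul, Prod.snd_mul, Equiv.Perm.mul_apply, Equiv.Perm.mul_apply, ih,
      ← hEφ]
    simp [Equiv.Perm.inv_def]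

section

variable {B W : Type*} [Group W] {M : CoxeterMatrix B} {cs : CoxeterSystem M W}
  {φ : Equiv.Perm W × Equiv.Perm B} {t : ℕ} {y : ℤ → W} {a : ℤ → B} {E : W → B → Prop}

theorem IsAxis.zpow_map_vertex (hax : IsAxis cs φ t y a) (n k : ℤ) :
    (φ ^ n).1 (y k) = y (k + n * t) := by
  induction n generalizing k with
  | zero => simp
  | succ n ih =>
    rw [zpow_add_one, Prod.fst_mul, Equiv.Perm.mul_apply, hax.map_vertex, ih]
    congr 1; ring
  | pred n ih =>
    have h := hax.map_vertex (k - t)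
    rw [sub_add_cancel] at h
    rw [zpow_sub_one, Prod.fst_mul, Equiv.Perm.mul_apply, Prod.fst_inv, ← h,
      Equiv.Perm.inv_def, Equiv.symm_apply_apply, ih]
    congr 1; ring

theorem Joined.zpow (hφ : φ ∈ cayleyAut cs) (hEφ : ∀ x i, E (φ.1 x) (φ.2 i) ↔ E x i)
    (hsymm : ∀ x i, E x i → E (x * cs.simple i) i) {z : W} (hz : Joined cs E z (φ.1 z)) (n : ℤ) :
    Joined cs E z ((φ ^ n).1 z) := by
  have hstep (n : ℤ) : Joined cs E ((φ ^ n).1 z) ((φ ^ (n + 1)).1 z) := by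
    rw [zpow_add_one]
    exact hz.map (zpow_mem hφ n) fun x i => (zpow_map_edge hEφ n x i).2
  induction n with
  | zero => exact Joined.refl z
  | succ n ih => exact ih.trans (hstep n)
  | pred n ih =>
    have h := hstep (-n - 1)
    rw [sub_add_cancel] at h
    exact ih.trans (h.symm hsymm)

theorem edge_of_walkIn_segment (hy : ∀ k, y (k + 1) = y k * cs.simple (a k)) {s : ℤ} {n k : ℕ}
    (h : WalkIn cs E (y s) (segment a s n)) (hk : k < n) : E (y (s + k)) (a (s + k)) := by
  obtain ⟨l, rfl⟩ := Nat.exists_eq_add_of_lt hk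
  rw [add_assoc, segment_add, walkIn_append, ← line_add hy, segment_succ] at h
  exact h.2.1

theorem IsAxis.edge_of_joined (hM : ∀ i j, orderOf (cs.simple i * cs.simple j) = M i j)
    (hax : IsAxis cs φ t y a) (hφ : φ ∈ cayleyAut cs) (ht : 0 < t)
    (hred : ∀ s n, cs.IsReduced (segment a s n)) (hE : BraidClosed M cs E)
    (hsymm : ∀ x i, E x i → E (x * cs.simple i) i) (hEφ : ∀ x i, E (φ.1 x) (φ.2 i) ↔ E x i)
    {z : W} (hz : Joined cs E z (φ.1 z)) (hzy : Joined cs E z (y 0)) (k : ℤ) : E (y k) (a k) := by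
  have hjoin (n : ℤ) : Joined cs E z (y (n * t)) := by
    rw [← zero_add (n * (t : ℤ)), ← hax.zpow_map_vertex]
    exact (hz.zpow hφ hEφ hsymm n).trans
      (hzy.map (zpow_mem hφ n) fun x i => (zpow_map_edge hEφ n x i).2)
  have hwalk := (((hjoin (k / t)).symm hsymm).trans (hjoin (k / t + 1))).walkIn hM hE
    (hred (k / t * t) t) (by rw [← line_add hax.step, add_one_mul])
  have hmod : ((k % t).toNat : ℤ) = k % t := Int.toNat_of_nonneg (Int.emod_nonneg k (by omega))
  have hk := edge_of_walkIn_segment hax.step hwalk (k := (k % t).toNat) (by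
    zify; rw [hmod]; exact Int.emod_lt_of_pos k (by exact_mod_cast ht))
  rwa [hmod, Int.mul_comm, Int.mul_ediv_add_emod] at hk

/-- The forward or the backward half of the axis stays on the far side of the wall of the edge
`(z, p)`, while the orbit of `z` stays on the near side. -/
theorem IsAxis.exists_zpow_commute_simple (hax : IsAxis cs φ t y a) (hφ : φ ∈ cayleyAut cs)
    (hred : ∀ s n, cs.IsReduced (segment a s n)) {z : W} {p : B}
    (hz : ∀ n : ℤ, ¬ cs.IsLeftDescent (z⁻¹ * (φ ^ n).1 z) p)
    (hy : cs.IsLeftDescent (z⁻¹ * y 0) p) :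
    ∃ K : ℤ, K ≠ 0 ∧ cs.simple p * (z⁻¹ * (φ ^ K).1 z) =
      z⁻¹ * (φ ^ K).1 z * cs.simple ((φ ^ K).2 p) := by
  rcases line_ray_isLeftDescent hax.step hred hy with hray | hray
  · obtain ⟨K, hK, h⟩ := exists_pow_commute_simple hφ (y := y 0)
      (fun n => by exact_mod_cast hz n) fun n => by
        have := hray (n * t)
        rwa [← zpow_natCast, hax.zpow_map_vertex, zero_add, ← Nat.cast_mul]
    exact ⟨K, by exact_mod_cast hK, by exact_mod_cast h⟩
  · have hinv (n : ℕ) : (φ⁻¹) ^ n = φ ^ (-n : ℤ) := by rw [zpow_neg, zpow_natCast, inv_pow]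
    obtain ⟨K, hK, h⟩ := exists_pow_commute_simple (inv_mem hφ) (y := y 0)
      (fun n => by rw [hinv]; exact hz _) fun n => by
        have := hray (n * t)
        rwa [hinv, hax.zpow_map_vertex, zero_add, neg_mul, ← Nat.cast_mul]
    exact ⟨-K, by simpa using hK, by rwa [hinv] at h⟩

theorem IsAxis.zpow_map_ne (hax : IsAxis cs φ t y a) (hφ : φ ∈ cayleyAut cs) (ht : 0 < t)
    (hred : ∀ s n, cs.IsReduced (segment a s n)) {K : ℤ} (hK : K ≠ 0) (z : W) :
    (φ ^ K).1 z ≠ z := by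
  intro hfix
  set l := cs.length (z⁻¹ * y 0)
  set n := K.natAbs * (2 * l + 1)
  have hn : (φ ^ (n : ℤ)).1 z = z := by
    obtain ⟨j, hj⟩ : K ∣ n := by simp [n, Dvd.dvd.mul_right]
    rw [hj, zpow_mul, Prod.pow_fst]
    exact Equiv.Perm.zpow_apply_eq_self_of_apply_eq_self hfix j
  have hfar : cs.length ((y 0)⁻¹ * y (0 + (n * t : ℕ))) = n * t :=
    length_inv_mul_line hax.step hred 0 _
  have hnear : cs.length (z⁻¹ * y (0 + (n * t : ℕ))) = l := by
    nth_rw 1 [Nat.cast_mul, ← hax.zpow_map_vertex, ← hn]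
    exact length_inv_map_mul_map (zpow_mem hφ (n : ℤ)) z (y 0)
  have htri := cs.length_mul_le (z⁻¹ * y 0)⁻¹ (z⁻¹ * y (0 + (n * t : ℕ)))
  rw [length_inv, hnear, mul_inv_rev, inv_inv, mul_assoc, mul_inv_cancel_left, hfar] at htri
  have hlt : 2 * l + 1 ≤ n := Nat.le_mul_of_pos_left _ (Int.natAbs_pos.2 hK)
  have := Nat.le_mul_of_pos_right n ht
  omega

theorem Joined.edge_of_commute (hM : ∀ i j, orderOf (cs.simple i * cs.simple j) = M i j)
    (hE : BraidClosed M cs E) {z z' : W} {p : B} (hz : Joined cs E z z') (hp : E z' p)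
    (hside : ¬ cs.IsLeftDescent (z⁻¹ * z') p)
    (hcomm : cs.simple p * (z⁻¹ * z') = z⁻¹ * z' * cs.simple p) : E z p := by
  obtain ⟨ω, hω, h⟩ := cs.exists_isReduced (z⁻¹ * z')
  refine ((hz.trans ⟨[p], by simp [hp], rfl⟩).walkIn hM hE
    ((isReduced_cons hω).2 (by rwa [← h])) ?_).1
  rw [wordProd_singleton, wordProd_cons, ← h, hcomm]
  group

end

variable {N m : ℕ} {W : Type*} [Group W] {cs : CoxeterSystem (cyclicMatrix N m) W}
  {φ : Equiv.Perm W × Equiv.Perm (ZMod N)} {t : ℕ} {y : ℤ → W} {a : ℤ → ZMod N}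
  {E : W → ZMod N → Prop}

variable (cs) in
/-- The sign of `x`, which tells whether the polygons around the vertex `x` appear in the order of
the labels of `ZMod N` or in the opposite order. -/
def orientation (x : W) : ZMod N := (-1) ^ cs.length x

theorem orientation_eq_or (x : W) : orientation cs x = 1 ∨ orientation cs x = -1 :=
  neg_one_pow_eq_or _ _

@[simp] theorem orientation_one : orientation cs 1 = 1 := by simp [orientation]

theorem orientation_mul_self (x : W) : orientation cs x * orientation cs x = 1 :=
  neg_one_pow_mul_self _

theorem orientation_mul_eq_or (x : W) {η : ZMod N} (hη : η = 1 ∨ η = -1) :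
    orientation cs x * η = 1 ∨ orientation cs x * η = -1 := by
  rcases orientation_eq_or (cs := cs) x with h | h <;> rcases hη with rfl | rfl <;> simp [h]

theorem orientation_mul_wordProd (x : W) (ω : List (ZMod N)) :
    orientation cs (x * cs.wordProd ω) = (-1) ^ ω.length * orientation cs x := by
  induction ω generalizing x with
  | nil => simp
  | cons i ω ih =>
    rw [wordProd_cons, ← mul_assoc, ih, length_cons, pow_succ, orientation, orientation]
    rcases cs.length_mul_simple x i with h | h
    · rw [h, pow_succ]; ring
    · rw [← h, pow_succ]; ring

/-- No ladder joins a vertex to a translate of it within `E` and has all its rungs outside `E`.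
Only the ladders that turn in the direction of the orientation of their first vertex are considered:
read backwards, a ladder has the opposite direction. -/
def RungClosed (cs : CoxeterSystem (cyclicMatrix N m) W) (E : W → ZMod N → Prop)
    (φ : Equiv.Perm W × Equiv.Perm (ZMod N)) : Prop :=
  ∀ z p n (K : ℤ), (φ ^ K).1 z = z * cs.wordProd (ladder m (orientation cs z) (n + 1) p) →
    (φ ^ K).2 p = p → WalkIn cs E z (ladder m (orientation cs z) (n + 1) p) →
    ∃ k ≤ n, E (z * cs.wordProd (ladder m (orientation cs z) k p)) p

theorem joined_ladder_of_le {x : W} {η p : ZMod N} {k n : ℕ} (hk : k ≤ n)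
    (h : WalkIn cs E x (ladder m η n p)) : Joined cs E x (x * cs.wordProd (ladder m η k p)) := by
  obtain ⟨l, rfl⟩ := Nat.exists_eq_add_of_le hk
  rw [ladder_add, walkIn_append] at h
  exact ⟨_, h.1, rfl⟩

theorem exists_rung (hN : 5 ≤ N) (hm : m ≠ 0)
    (hrung : RungClosed cs E φ) {z : W} {p η : ZMod N} {n : ℕ} {K : ℤ} (hη : η = 1 ∨ η = -1)
    (hz : (φ ^ K).1 z = z * cs.wordProd (ladder m η (n + 1) p)) (hp : (φ ^ K).2 p = p)
    (hw : WalkIn cs E z (ladder m η (n + 1) p))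
    (hw' : WalkIn cs E ((φ ^ K).1 z) (ladder m η (n + 1) p).reverse) :
    ∃ z', Joined cs E z z' ∧ E z' p ∧ cs.simple p * (z⁻¹ * z') = z⁻¹ * z' * cs.simple p := by
  obtain rfl | rfl : η = orientation cs z ∨ η = -orientation cs z := by
    rcases hη with rfl | rfl <;> rcases orientation_eq_or (cs := cs) z with h | h <;> simp [h]
  · obtain ⟨k, hk, hE⟩ := hrung z p n K hz hp hw
    exact ⟨_, joined_ladder_of_le (hk.trans n.le_succ) hw, hE, by
      simpa using simple_mul_wordProd_ladder (cs := cs) hN hm hη k p⟩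
  set z₁ := (φ ^ K).1 z with hz₁
  have hoz : (-1) ^ n * -orientation cs z = orientation cs z₁ := by
    rw [hz, orientation_mul_wordProd, length_ladder,
      neg_one_pow_mul_two_mul_sub_one hm, pow_succ]
    ring
  rw [reverse_ladder hm, hoz] at hw'
  have hback : (φ ^ (-K)).1 z₁ = z₁ * cs.wordProd (ladder m (orientation cs z₁) (n + 1) p) := by
    rw [← hoz, ← reverse_ladder hm, wordProd_reverse, hz, mul_inv_cancel_right, ← hz, hz₁, zpow_neg]
    simp [Equiv.Perm.inv_def]
  obtain ⟨k, hk, hE⟩ := hrung z₁ p n (-K) hback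
    (by rw [zpow_neg, Prod.snd_inv, Equiv.Perm.inv_eq_iff_eq, hp]) hw'
  refine ⟨_, Joined.trans ⟨_, hw, hz⟩ (joined_ladder_of_le (hk.trans n.le_succ) hw'), hE, ?_⟩
  rw [← mul_assoc z⁻¹, inv_mul_eq_iff_eq_mul.2 hz, ← mul_assoc, simple_mul_wordProd_ladder hN hm hη,
    mul_assoc, simple_mul_wordProd_ladder hN hm (orientation_eq_or z₁), mul_assoc]

/-- A component of `E` that `φ` preserves contains every geodesic axis of `φ`: otherwise a wall
separates it from the axis, a power of `φ` preserves the wall, and the component contains the ladder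
of polygons along the wall without its rungs. -/
theorem IsAxis.edge_of_rungClosed (hN : 5 ≤ N) (hm : m ≠ 0) (hax : IsAxis cs φ t y a)
    (hφ : φ ∈ cayleyAut cs) (ht : 0 < t) (hred : ∀ s n, cs.IsReduced (segment a s n))
    (hE : BraidClosed (cyclicMatrix N m) cs E) (hsymm : ∀ x i, E x i → E (x * cs.simple i) i)
    (hEφ : ∀ x i, E (φ.1 x) (φ.2 i) ↔ E x i)
    (hrung : RungClosed cs E φ) {z : W}
    (hz : Joined cs E z (φ.1 z)) (k : ℤ) : E (y k) (a k) := by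
  have hM := orderOf_simple_mul_simple_cyclic cs
  by_cases hzy : Joined cs E z (y 0)
  · exact hax.edge_of_joined hM hφ ht hred hE hsymm hEφ hz hzy k
  obtain ⟨x, p, hzx, hEp, hdesc, hside⟩ := exists_separating_edge hM hE hsymm hzy
  have hx (n : ℤ) : Joined cs E x ((φ ^ n).1 x) := by
    have hmap := hzx.map (zpow_mem hφ n) fun x i => (zpow_map_edge hEφ n x i).2
    exact ((hzx.symm hsymm).trans (hz.zpow hφ hEφ hsymm n)).trans hmap
  obtain ⟨K, hK, hcomm⟩ :=
    hax.exists_zpow_commute_simple hφ hred (fun n => hside _ (hzx.trans (hx n))) hdesc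
  obtain ⟨hp, η, n, hη, hlad⟩ := exists_eq_wordProd_ladder hN hm (hside _ (hzx.trans (hx K))) hcomm
  rw [inv_mul_eq_iff_eq_mul] at hlad
  obtain _ | n := n
  · exact absurd (by simpa [ladder] using hlad) (hax.zpow_map_ne hφ ht hred hK x)
  have hladred := (isReduced_ladder (cs := cs) hN hm hη (n + 1) p).1
  obtain ⟨x', hxx', hE', hcomm'⟩ := exists_rung hN hm hrung hη hlad hp
    ((hx K).walkIn hM hE hladred hlad)
    (((hx K).symm hsymm).walkIn hM hE hladred.reverse (by
      rw [wordProd_reverse, hlad, mul_inv_cancel_right]))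
  exact absurd (hxx'.edge_of_commute hM hE hE' (hside _ (hzx.trans hxx')) hcomm') hEp

end ConvexHull

section Letters

open List

variable {g : ℕ}

/-- The formal inverse of a letter. -/
def letterInv (s : Letter g) : Letter g := (s.1, !s.2)

@[simp] theorem letterInv_letterInv (s : Letter g) : letterInv (letterInv s) = s := by
  simp [letterInv]

@[simp] theorem letterG_letterInv (s : Letter g) : letterG (letterInv s) = (letterG s)⁻¹ := by
  obtain ⟨ℓ, b⟩ := s
  cases b <;> simp [letterInv, letterG]

@[simp] theorem wordG_nil : wordG ([] : List (Letter g)) = 1 := rfl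

@[simp] theorem wordG_cons (s : Letter g) (w : List (Letter g)) :
    wordG (s :: w) = letterG s * wordG w := by simp [wordG]

@[simp] theorem wordG_append (w w' : List (Letter g)) :
    wordG (w ++ w') = wordG w * wordG w' := by simp [wordG]

/-- The place of the dart with letter `s` in the cyclic order of the darts leaving a vertex. -/
def letterPos (s : Letter g) : ZMod (4 * g) := posLv s

theorem posLv_lt (s : Letter g) : posLv s < 4 * g := by
  obtain ⟨⟨ℓ, hℓ⟩, b⟩ := s
  simp only [posLv, posOut, posIn]
  split_ifs <;> omega

theorem posArr_eq_posLv (s : Letter g) : posArr s = posLv (letterInv s) := by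
  obtain ⟨ℓ, b⟩ := s
  cases b <;> rfl

theorem posLv_injective : Function.Injective (posLv : Letter g → ℕ) := by
  rintro ⟨⟨ℓ, hℓ⟩, b⟩ ⟨⟨ℓ', hℓ'⟩, b'⟩ h
  simp only [posLv, posOut, posIn] at h
  cases b <;> cases b' <;> simp only [Prod.mk.injEq, Fin.mk.injEq] <;> grind

theorem exists_posLv_eq {n : ℕ} (hn : n < 4 * g) : ∃ s : Letter g, posLv s = n := by
  refine ⟨(⟨2 * (n / 4) + n % 2, by omega⟩, decide (n % 4 = 0 ∨ n % 4 = 3)), ?_⟩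
  simp only [posLv, posOut, posIn, decide_eq_true_eq]
  split_ifs <;> omega

theorem letterPos_bijective (hg : g ≠ 0) :
    Function.Bijective (letterPos : Letter g → ZMod (4 * g)) := by
  have : NeZero (4 * g) := ⟨by omega⟩
  refine ⟨fun s t h => posLv_injective ?_, fun p => ?_⟩
  · rwa [letterPos, letterPos, ZMod.natCast_eq_natCast_iff', Nat.mod_eq_of_lt (posLv_lt s),
      Nat.mod_eq_of_lt (posLv_lt t)] at h
  · obtain ⟨s, hs⟩ := exists_posLv_eq (ZMod.val_lt p)
    exact ⟨s, by simp [letterPos, hs]⟩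

theorem gapN_eq_iff (s t : Letter g) {k : ℕ} (hk : k < 4 * g) :
    gapN s t = k ↔ letterPos t = letterPos (letterInv s) + 1 + k := by
  have hs := posLv_lt (letterInv s)
  have hcast : letterPos (letterInv s) + 1 + k =
      ((posLv (letterInv s) + 1 + k : ℕ) : ZMod (4 * g)) := by simp [letterPos]
  rw [gapN, posArr_eq_posLv, hcast, letterPos, ZMod.natCast_eq_natCast_iff]
  nth_rw 1 [← Nat.mod_eq_of_lt hk]
  change _ ≡ k [MOD 4 * g] ↔ _
  rw [← Nat.ModEq.add_iff_left (Nat.ModEq.refl (posLv (letterInv s) + 1)),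
    Nat.add_sub_cancel' (by omega)]
  simp [Nat.ModEq]

theorem posLv_letterInv (s : Letter g) :
    posLv (letterInv s) = if posLv s % 4 < 2 then posLv s + 2 else posLv s - 2 := by
  obtain ⟨⟨ℓ, hℓ⟩, b⟩ := s
  simp only [letterInv, posLv, posOut, posIn]
  cases b <;> grind

theorem wordG_eq_mk (w : List (Letter g)) :
    wordG w = PresentedGroup.mk {relatorF g}
      (w.map fun l => if l.2 then FreeGroup.of l.1 else (FreeGroup.of l.1)⁻¹).prod := by
  induction w with
  | nil => rfl
  | cons s w ih =>
    obtain ⟨ℓ, b⟩ := s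
    cases b <;> simp [ih, letterG, PresentedGroup.of]

theorem wordG_relatorWord : wordG (relatorWord g) = 1 :=
  (wordG_eq_mk _).trans (PresentedGroup.one_of_mem (Set.mem_singleton _))

theorem wordG_reverse (w : List (Letter g)) : wordG (w.map letterInv).reverse = (wordG w)⁻¹ := by
  induction w with
  | nil => simp
  | cons s w ih => simp [ih]

theorem exists_wordG_eq (x : Gamma g) : ∃ w, wordG w = x := by
  obtain ⟨x, rfl⟩ := PresentedGroup.mk_surjective _ x
  induction x using FreeGroup.induction_on with
  | C1 => exact ⟨[], by simp⟩
  | of ℓ => exact ⟨[(ℓ, true)], by simp [letterG, PresentedGroup.of]⟩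
  | inv_of ℓ _ => exact ⟨[(ℓ, false)], by simp [letterG, PresentedGroup.of]⟩
  | mul x y hx hy =>
    obtain ⟨w, hw⟩ := hx
    obtain ⟨w', hw'⟩ := hy
    exact ⟨w ++ w', by simp [hw, hw']⟩

section Lift

variable {G : Type*} [Group G] (f : Letter g → G) (hinv : ∀ s, f (letterInv s) = (f s)⁻¹)
  (hrel : ((relatorWord g).map f).prod = 1)

/-- The universal property of the surface group, in terms of letters. -/
def gammaLift : Gamma g →* G :=
  PresentedGroup.toGroup (f := fun ℓ => f (ℓ, true)) <| by
    rintro _ rfl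
    rw [← hrel, relatorF, map_list_prod, map_map]
    congr 2
    ext ⟨ℓ, b⟩ : 1
    cases b
    · simp [← hinv, letterInv]
    · simp

@[simp] theorem gammaLift_letterG (s : Letter g) : gammaLift f hinv hrel (letterG s) = f s := by
  obtain ⟨ℓ, b⟩ := s
  cases b
  · simp [letterG, gammaLift, ← hinv, letterInv]
  · simp [letterG, gammaLift]

theorem gammaLift_wordG (w : List (Letter g)) :
    gammaLift f hinv hrel (wordG w) = (w.map f).prod := by
  induction w with
  | nil => simp
  | cons s w ih => simp [ih]

end Lift

end Letters

section Blocks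

open List

variable {g : ℕ} [NeZero g]

/-- The letter of the dart at place `p`. -/
def letterAt (p : ZMod (4 * g)) : Letter g := (letterPos_bijective (NeZero.ne g)).2 p |>.choose

@[simp] theorem letterPos_letterAt (p : ZMod (4 * g)) : letterPos (letterAt p) = p :=
  ((letterPos_bijective (NeZero.ne g)).2 p).choose_spec

theorem letterPos_injective : Function.Injective (letterPos : Letter g → ZMod (4 * g)) :=
  (letterPos_bijective (NeZero.ne g)).1

/-- The letter that follows `s` along the boundary of the polygon on the left (`η = 1`) or on
the right (`η = -1`) of a dart with letter `s`. -/
def nextLetter (η : ZMod (4 * g)) (s : Letter g) : Letter g :=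
  letterAt (letterPos (letterInv s) + η)

@[simp] theorem letterPos_nextLetter (η : ZMod (4 * g)) (s : Letter g) :
    letterPos (nextLetter η s) = letterPos (letterInv s) + η := letterPos_letterAt _

theorem nextLetter_eq_iff {η : ZMod (4 * g)} {s t : Letter g} :
    nextLetter η s = t ↔ letterPos t = letterPos (letterInv s) + η := by
  rw [← letterPos_injective.eq_iff, letterPos_nextLetter, eq_comm]

theorem nextLetter_neg_letterInv (η : ZMod (4 * g)) (s : Letter g) :
    nextLetter (-η) (letterInv (nextLetter η s)) = letterInv s := by
  simp [nextLetter_eq_iff]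

/-- The first `n` letters along the boundary of a polygon, from the letter `s` on. -/
def block (η : ZMod (4 * g)) (s : Letter g) (n : ℕ) : List (Letter g) :=
  iterate (nextLetter η) s n

@[simp] theorem block_zero (η : ZMod (4 * g)) (s : Letter g) : block η s 0 = [] := rfl

@[simp] theorem block_succ (η : ZMod (4 * g)) (s : Letter g) (n : ℕ) :
    block η s (n + 1) = s :: block η (nextLetter η s) n := rfl

@[simp] theorem length_block (η : ZMod (4 * g)) (s : Letter g) (n : ℕ) :
    (block η s n).length = n := length_iterate _ _ _

theorem block_add (η : ZMod (4 * g)) (s : Letter g) (m n : ℕ) :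
    block η s (m + n) = block η s m ++ block η ((nextLetter η)^[m] s) n := by
  simp [block, iterate_add]

theorem iterate_nextLetter_neg (η : ZMod (4 * g)) (s : Letter g) (n : ℕ) :
    (nextLetter (-η))^[n] (letterInv ((nextLetter η)^[n] s)) = letterInv s := by
  induction n with
  | zero => rfl
  | succ n ih => rw [Function.iterate_succ_apply, Function.iterate_succ_apply',
      nextLetter_neg_letterInv, ih]

theorem reverse_block (η : ZMod (4 * g)) (s : Letter g) (n : ℕ) :
    ((block η s (n + 1)).map letterInv).reverse =
      block (-η) (letterInv ((nextLetter η)^[n] s)) (n + 1) := by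
  induction n generalizing s with
  | zero => simp
  | succ n ih =>
    rw [block_succ, map_cons, reverse_cons, ih, block_add _ _ (n + 1),
      ← Function.iterate_succ_apply, iterate_nextLetter_neg]
    simp

theorem posLv_nextLetter_one (s : Letter g) :
    posLv (nextLetter 1 s) = (posLv (letterInv s) + 1) % (4 * g) := by
  have h := letterPos_nextLetter 1 s
  rw [letterPos, letterPos, ← Nat.cast_succ, ZMod.natCast_eq_natCast_iff'] at h
  rw [← h, Nat.mod_eq_of_lt (posLv_lt _)]

theorem posLv_iterate_nextLetter {s : Letter g} (hs : posLv s = 0) {k : ℕ} (hk : k < 4 * g) :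
    posLv ((nextLetter 1)^[k] s) = 4 * (k / 4) + (4 - k % 4) % 4 := by
  induction k with
  | zero => simpa using hs
  | succ k ih =>
    rw [Function.iterate_succ_apply', posLv_nextLetter_one, posLv_letterInv, ih (by omega),
      Nat.mod_eq_of_lt] <;> split_ifs <;> omega

theorem relatorWord_eq_block {s : Letter g} (hs : posLv s = 0) :
    relatorWord g = block 1 s (4 * g) := by
  refine ext_getElem (by simp [relatorWord]) fun k hk hk' => posLv_injective ?_
  rw [length_block] at hk'
  simp only [block, getElem_iterate, posLv_iterate_nextLetter hs hk']
  simp only [relatorWord, getElem_map, getElem_finRange, relLabel, relSign, posLv, posOut, posIn,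
    Fin.val_cast, decide_eq_true_eq]
  split_ifs <;> omega

theorem exists_iterate_nextLetter {s : Letter g} (hs : posLv s = 0) (t : Letter g) :
    ∃ k, (nextLetter 1)^[k] s = t := by
  have ht := posLv_lt t
  refine ⟨4 * (posLv t / 4) + (4 - posLv t % 4) % 4, posLv_injective ?_⟩
  rw [posLv_iterate_nextLetter hs (by omega)]
  omega

theorem iterate_nextLetter_four_mul {η : ZMod (4 * g)} (hη : η = 1 ∨ η = -1) (s : Letter g) :
    (nextLetter η)^[4 * g] s = s := by
  have hg := NeZero.pos g
  have hone (s : Letter g) : (nextLetter 1)^[4 * g] s = s := by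
    obtain ⟨s₀, hs₀⟩ := exists_posLv_eq (g := g) (n := 0) (by omega)
    obtain ⟨k, rfl⟩ := exists_iterate_nextLetter hs₀ s
    have hs₀' : (nextLetter 1)^[4 * g] s₀ = s₀ := posLv_injective <| by
      obtain ⟨n, hn⟩ : ∃ n, 4 * g = n + 1 := ⟨4 * g - 1, by omega⟩
      rw [show (nextLetter 1)^[4 * g] s₀ = _ from congrFun (congrArg _ hn) s₀,
        Function.iterate_succ_apply', posLv_nextLetter_one, posLv_letterInv,
        posLv_iterate_nextLetter hs₀ (by omega), if_pos (by omega), hs₀, ← Nat.dvd_iff_mod_eq_zero]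
      exact ⟨1, by omega⟩
    rw [← Function.iterate_add_apply, add_comm, Function.iterate_add_apply, hs₀']
  obtain rfl | rfl := hη
  · exact hone s
  · simpa [hone] using iterate_nextLetter_neg 1 (letterInv s) (4 * g)

theorem wordG_block_four_mul {η : ZMod (4 * g)} (hη : η = 1 ∨ η = -1) (s : Letter g) :
    wordG (block η s (4 * g)) = 1 := by
  have hg := NeZero.pos g
  have hone (s : Letter g) : wordG (block 1 s (4 * g)) = 1 := by
    obtain ⟨s₀, hs₀⟩ := exists_posLv_eq (g := g) (n := 0) (by omega)
    obtain ⟨k, rfl⟩ := exists_iterate_nextLetter hs₀ s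
    have hcomm : block 1 s₀ k ++ block 1 ((nextLetter 1)^[k] s₀) (4 * g) =
        block 1 s₀ (4 * g) ++ block 1 s₀ k := by
      rw [← block_add, add_comm, block_add, iterate_nextLetter_four_mul (Or.inl rfl)]
    simpa [← relatorWord_eq_block hs₀, wordG_relatorWord] using congrArg wordG hcomm
  obtain rfl | rfl := hη
  · exact hone s
  · obtain ⟨n, hn⟩ : ∃ n, 4 * g = n + 1 := ⟨4 * g - 1, by omega⟩
    have hrev := reverse_block (-1) s n
    rw [neg_neg, ← hn] at hrev
    rw [← inv_eq_one, ← wordG_reverse, hrev, hone]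

theorem four_mul_le_of_iterate_nextLetter_eq {η : ZMod (4 * g)} (hη : η = 1 ∨ η = -1)
    {s : Letter g} {t : ℕ} (ht : 0 < t) (h : (nextLetter η)^[t] s = s) : 4 * g ≤ t := by
  have hone {s : Letter g} (h : (nextLetter 1)^[t] s = s) : 4 * g ≤ t := by
    by_contra! hlt
    obtain ⟨s₀, hs₀⟩ := exists_posLv_eq (g := g) (n := 0) (by omega)
    obtain ⟨k, rfl⟩ := exists_iterate_nextLetter hs₀ s
    have hinj : Function.Injective (nextLetter (1 : ZMod (4 * g)))^[k] :=
      Function.Injective.iterate (fun s t hst => by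
        rw [nextLetter_eq_iff, letterPos_nextLetter, add_left_inj] at hst
        simpa using (congrArg letterInv (letterPos_injective hst)).symm) k
    rw [← Function.iterate_add_apply, add_comm, Function.iterate_add_apply] at h
    have := posLv_iterate_nextLetter hs₀ hlt
    rw [hinj h, hs₀] at this
    omega
  rcases hη with rfl | rfl
  · exact hone h
  · have := iterate_nextLetter_neg (-1) s t
    rw [neg_neg, h] at this
    exact hone this

end Blocks

section SurfaceGroupAction

open CoxeterSystem List

theorem altWord_four_mul_succ {B : Type*} (i j : B) (m : ℕ) :
    altWord i j (4 * m + 1) = altWord i j (4 * m) ++ [i] := by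
  rw [show 4 * m = 2 * (2 * m) by ring, altWord_two_mul_add]
  rfl

variable {N m : ℕ} {W : Type*} [Group W] (cs : CoxeterSystem (cyclicMatrix N m) W)

/-- The automorphism of the Coxeter group induced by the reflection `i ↦ c - i` of its diagram. -/
def diagramReflection (c : ZMod N) : W →* W :=
  cs.lift ⟨fun i => cs.simple (c - i), fun i j => by
    have h : cyclicMatrix N m (c - i) (c - j) = cyclicMatrix N m i j := by
      simp only [cyclicMatrix_apply, sub_right_inj]
      congr 2
      grind
    rw [← h]
    exact cs.simple_mul_simple_pow _ _⟩

@[simp] theorem diagramReflection_simple (c i : ZMod N) :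
    diagramReflection cs c (cs.simple i) = cs.simple (c - i) := cs.lift_apply_simple _ _

@[simp] theorem diagramReflection_diagramReflection (c : ZMod N) (u : W) :
    diagramReflection cs c (diagramReflection cs c u) = u := by
  have h : (diagramReflection cs c).comp (diagramReflection cs c) = MonoidHom.id W :=
    cs.ext_simple fun i => by simp
  exact DFunLike.congr_fun h u

/-- The automorphism of the Cayley graph that reverses the orientation of the plane and carries the
edge labelled `q` at `1` to the edge labelled `p` at `1`, interchanging the two end points. -/
def flipAut (p q : ZMod N) : Equiv.Perm W × Equiv.Perm (ZMod N) where
  fst :=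
    { toFun u := cs.simple p * diagramReflection cs (p + q) u
      invFun u := cs.simple q * diagramReflection cs (p + q) u
      left_inv u := by simp
      right_inv u := by simp }
  snd := Equiv.subLeft (p + q)

@[simp] theorem flipAut_fst_apply (p q : ZMod N) (u : W) :
    (flipAut cs p q).1 u = cs.simple p * diagramReflection cs (p + q) u := rfl

@[simp] theorem flipAut_snd_apply (p q i : ZMod N) : (flipAut cs p q).2 i = p + q - i := rfl

theorem flipAut_inv (p q : ZMod N) : (flipAut cs p q)⁻¹ = flipAut cs q p := by
  refine inv_eq_of_mul_eq_one_left (Prod.ext (Equiv.ext fun u => ?_) (Equiv.ext fun i => ?_))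
  · simp [add_comm q p]
  · simp [add_comm q p]

theorem flipAut_mem_cayleyAut (p q : ZMod N) : flipAut cs p q ∈ cayleyAut cs := fun u i => by
  simp [mul_assoc]

theorem wordProd_altWord_four_mul (hN : 2 ≤ N) {η : ZMod N} (hη : η = 1 ∨ η = -1) (i : ZMod N) :
    cs.wordProd (altWord i (i + η) (4 * m)) = 1 := by
  rw [show 4 * m = 2 * (2 * m) by ring, wordProd_altWord_two_mul, ← cyclicMatrix_add hN hη i,
    cs.simple_mul_simple_pow]

variable {cs} in
theorem cayleyAut_eq_one {φ : Equiv.Perm W × Equiv.Perm (ZMod N)} (hφ : φ ∈ cayleyAut cs)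
    (h₁ : φ.1 1 = 1) (h₂ : φ.2 = 1) : φ = 1 := by
  refine Prod.ext (Equiv.ext fun u => ?_) h₂
  obtain ⟨ω, rfl⟩ := cs.wordProd_surjective u
  have h := map_mul_wordProd hφ 1 ω
  simpa [h₁, h₂] using h

end SurfaceGroupAction

section SurfaceGroup

open CoxeterSystem List

variable {g : ℕ} {W : Type*} [Group W] (cs : CoxeterSystem (cyclicMatrix (4 * g) g) W)

/-- The action of a letter on the Cayley graph of the Coxeter group: the edge leaving `1` in the
direction of the letter is carried away from the edge in the direction of its inverse. -/
def letterAut (s : Letter g) : Equiv.Perm W × Equiv.Perm (ZMod (4 * g)) :=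
  flipAut cs (letterPos s) (letterPos (letterInv s))

theorem letterAut_letterInv (s : Letter g) : letterAut cs (letterInv s) = (letterAut cs s)⁻¹ := by
  rw [letterAut, letterAut, flipAut_inv, letterInv_letterInv]

/-- The action of a word on the Cayley graph of the Coxeter group. -/
def wordAut (w : List (Letter g)) : Equiv.Perm W × Equiv.Perm (ZMod (4 * g)) :=
  (w.map (letterAut cs)).prod

variable {cs}

@[simp] theorem wordAut_nil : wordAut cs ([] : List (Letter g)) = 1 := rfl

@[simp] theorem wordAut_cons (s : Letter g) (w : List (Letter g)) :
    wordAut cs (s :: w) = letterAut cs s * wordAut cs w := by simp [wordAut]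

variable {φ : Equiv.Perm W × Equiv.Perm (ZMod (4 * g))}

theorem mul_letterAut_mem_cayleyAut (hφ : φ ∈ cayleyAut cs) (s : Letter g) :
    φ * letterAut cs s ∈ cayleyAut cs := mul_mem hφ (flipAut_mem_cayleyAut cs _ _)

theorem mul_letterAut_fst_one (hφ : φ ∈ cayleyAut cs) (s : Letter g) :
    (φ * letterAut cs s).1 1 = φ.1 1 * cs.simple (φ.2 (letterPos s)) := by
  rw [← map_mul_simple hφ]
  simp [letterAut]

@[simp] theorem mul_letterAut_snd_apply (s : Letter g) (i : ZMod (4 * g)) :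
    (φ * letterAut cs s).2 i = φ.2 (letterPos s + letterPos (letterInv s) - i) := rfl

variable (cs) in
/-- The labels of the edges that the word `w` crosses in the Cayley graph of the Coxeter group,
starting at the image of `1` under `φ`. -/
def labels (φ : Equiv.Perm W × Equiv.Perm (ZMod (4 * g))) : List (Letter g) → List (ZMod (4 * g))
  | [] => []
  | s :: w => φ.2 (letterPos s) :: labels (φ * letterAut cs s) w

@[simp] theorem labels_nil : labels cs φ [] = [] := rfl

@[simp] theorem labels_cons (s : Letter g) (w : List (Letter g)) :
    labels cs φ (s :: w) = φ.2 (letterPos s) :: labels cs (φ * letterAut cs s) w := rfl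

theorem labels_append (w w' : List (Letter g)) :
    labels cs φ (w ++ w') = labels cs φ w ++ labels cs (φ * wordAut cs w) w' := by
  induction w generalizing φ with
  | nil => simp
  | cons s w ih => simp [ih, mul_assoc]

@[simp] theorem length_labels (w : List (Letter g)) : (labels cs φ w).length = w.length := by
  induction w generalizing φ with
  | nil => rfl
  | cons s w ih => simp [ih]

theorem mul_wordAut_mem_cayleyAut (hφ : φ ∈ cayleyAut cs) (w : List (Letter g)) :
    φ * wordAut cs w ∈ cayleyAut cs := by
  induction w generalizing φ with
  | nil => simpa
  | cons s w ih => simpa [mul_assoc] using ih (mul_letterAut_mem_cayleyAut hφ s)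

theorem mul_wordAut_fst_one (hφ : φ ∈ cayleyAut cs) (w : List (Letter g)) :
    (φ * wordAut cs w).1 1 = φ.1 1 * cs.wordProd (labels cs φ w) := by
  induction w generalizing φ with
  | nil => simp
  | cons s w ih =>
    rw [labels_cons, wordProd_cons, ← mul_assoc, ← mul_letterAut_fst_one hφ,
      ← ih (mul_letterAut_mem_cayleyAut hφ s), wordAut_cons, mul_assoc]

/-- `φ` preserves (`ε = 1`) or reverses (`ε = -1`) the cyclic order of the labels. -/
def Oriented (φ : Equiv.Perm W × Equiv.Perm (ZMod (4 * g))) (ε : ZMod (4 * g)) : Prop :=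
  ∀ i j, φ.2 i - φ.2 j = ε * (i - j)

theorem Oriented.mul_letterAut {ε : ZMod (4 * g)} (hε : Oriented φ ε) (s : Letter g) :
    Oriented (φ * letterAut cs s) (-ε) := fun i j => by
  rw [mul_letterAut_snd_apply, mul_letterAut_snd_apply, hε]
  ring

theorem Oriented.mul_wordAut {ε : ZMod (4 * g)} (hε : Oriented φ ε) (w : List (Letter g)) :
    Oriented (φ * wordAut cs w) ((-1) ^ w.length * ε) := by
  induction w generalizing φ ε with
  | nil => simpa using hε
  | cons s w ih => simpa [mul_assoc, pow_succ] using ih (hε.mul_letterAut s)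

variable [NeZero g]

theorem exists_labels_eq (cs : CoxeterSystem (cyclicMatrix (4 * g) g) W)
    (φ : Equiv.Perm W × Equiv.Perm (ZMod (4 * g))) (ω : List (ZMod (4 * g))) :
    ∃ w, labels cs φ w = ω := by
  induction ω generalizing φ with
  | nil => exact ⟨[], rfl⟩
  | cons i ω ih =>
    obtain ⟨w, rfl⟩ := ih (φ * letterAut cs (letterAt (φ.2.symm i)))
    exact ⟨letterAt (φ.2.symm i) :: w, by simp⟩

theorem Oriented.label_nextLetter {ε : ZMod (4 * g)} (hε : Oriented φ ε) (η : ZMod (4 * g))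
    (s : Letter g) : (φ * letterAut cs s).2 (letterPos (nextLetter η s)) =
      φ.2 (letterPos s) - ε * η := by
  rw [mul_letterAut_snd_apply, letterPos_nextLetter, add_comm (letterPos s),
    add_sub_add_left_eq_sub]
  linear_combination hε (letterPos s - η) (letterPos s)

theorem Oriented.labels_block {ε : ZMod (4 * g)} (hε : Oriented φ ε) (η : ZMod (4 * g))
    (s : Letter g) (n : ℕ) : labels cs φ (block η s n) =
      altWord (φ.2 (letterPos s)) (φ.2 (letterPos s) - ε * η) n := by
  induction n generalizing φ ε s with
  | zero => rfl
  | succ n ih =>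
    rw [block_succ, labels_cons, altWord_succ, ih (hε.mul_letterAut s), hε.label_nextLetter]
    ring_nf

/-- The relator acts trivially because the edges that it crosses carry two alternating labels,
whose product has order `2g`. -/
theorem wordAut_relatorWord (cs : CoxeterSystem (cyclicMatrix (4 * g) g) W) :
    wordAut cs (relatorWord g) = 1 := by
  have hg := NeZero.pos g
  obtain ⟨s, hs⟩ := exists_posLv_eq (g := g) (n := 0) (by omega)
  have hor : Oriented (1 : Equiv.Perm W × Equiv.Perm (ZMod (4 * g))) 1 := fun i j => by simp
  have hlab (n : ℕ) := hor.labels_block (cs := cs) 1 s n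
  simp only [Prod.snd_one, Equiv.Perm.one_apply, mul_one] at hlab
  rw [relatorWord_eq_block hs]
  refine cayleyAut_eq_one (by simpa using mul_wordAut_mem_cayleyAut (one_mem _) _) ?_ ?_
  · have h := mul_wordAut_fst_one (one_mem (cayleyAut cs)) (block 1 s (4 * g))
    rw [hlab, sub_eq_add_neg, wordProd_altWord_four_mul cs (by omega) (Or.inr rfl)] at h
    simpa using h
  · have hper : (wordAut cs (block 1 s (4 * g))).2 (letterPos s) = letterPos s := by
      have h := hlab (4 * g + 1)
      rw [block_add, labels_append, hlab, iterate_nextLetter_four_mul (Or.inl rfl),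
        altWord_four_mul_succ] at h
      simpa using h
    ext i
    have h := (hor.mul_wordAut (cs := cs) (block 1 s (4 * g))) i (letterPos s)
    rw [one_mul, hper, length_block, Even.neg_one_pow ⟨2 * g, by ring⟩] at h
    simpa using h

variable (cs) in
/-- The action of the surface group on the Cayley graph of the Coxeter group. -/
def gammaAut : Gamma g →* Equiv.Perm W × Equiv.Perm (ZMod (4 * g)) :=
  gammaLift (letterAut cs) (letterAut_letterInv cs) (wordAut_relatorWord cs)

@[simp] theorem gammaAut_letterG (s : Letter g) : gammaAut cs (letterG s) = letterAut cs s :=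
  gammaLift_letterG ..

@[simp] theorem gammaAut_wordG (w : List (Letter g)) : gammaAut cs (wordG w) = wordAut cs w :=
  gammaLift_wordG ..

theorem gammaAut_mem_cayleyAut (x : Gamma g) : gammaAut cs x ∈ cayleyAut cs := by
  obtain ⟨w, rfl⟩ := exists_wordG_eq x
  simpa using mul_wordAut_mem_cayleyAut (one_mem _) w

theorem gammaAut_wordG_fst_one (x : Gamma g) (w : List (Letter g)) :
    (gammaAut cs (x * wordG w)).1 1 =
      (gammaAut cs x).1 1 * cs.wordProd (labels cs (gammaAut cs x) w) := by
  rw [map_mul, gammaAut_wordG, mul_wordAut_fst_one (gammaAut_mem_cayleyAut x)]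

end SurfaceGroup

section DevelopingMap

open CoxeterSystem List

variable {g : ℕ} [NeZero g] {W : Type*} [Group W] (cs : CoxeterSystem (cyclicMatrix (4 * g) g) W)

/-- The developing map of the surface group into the Coxeter group: an isomorphism of the
unlabelled Cayley graphs, although not a homomorphism. -/
def develop (x : Gamma g) : W := (gammaAut cs x).1 1

@[simp] theorem develop_one : develop cs 1 = 1 := by simp [develop]

/-- The label in the Coxeter group of the edge that leaves `x` in the direction `s`. -/
def edgeLabel (x : Gamma g) (s : Letter g) : ZMod (4 * g) := (gammaAut cs x).2 (letterPos s)

/-- The letter of the edge that leaves `x` and has label `i` in the Coxeter group. -/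
def labelLetter (x : Gamma g) (i : ZMod (4 * g)) : Letter g :=
  letterAt ((gammaAut cs x).2.symm i)

@[simp] theorem labelLetter_edgeLabel (x : Gamma g) (s : Letter g) :
    labelLetter cs x (edgeLabel cs x s) = s := letterPos_injective (by
  simp [labelLetter, edgeLabel])

@[simp] theorem edgeLabel_labelLetter (x : Gamma g) (i : ZMod (4 * g)) :
    edgeLabel cs x (labelLetter cs x i) = i := by
  simp [labelLetter, edgeLabel]

theorem edgeLabel_injective (x : Gamma g) : Function.Injective (edgeLabel cs x) :=
  Function.LeftInverse.injective (labelLetter_edgeLabel cs x)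

theorem edgeLabel_mul_letterInv (x : Gamma g) (s : Letter g) :
    edgeLabel cs (x * letterG s) (letterInv s) = edgeLabel cs x s := by
  rw [edgeLabel, map_mul, gammaAut_letterG, mul_letterAut_snd_apply, add_sub_cancel_right,
    edgeLabel]

theorem develop_mul_wordG (x : Gamma g) (w : List (Letter g)) :
    develop cs (x * wordG w) = develop cs x * cs.wordProd (labels cs (gammaAut cs x) w) :=
  gammaAut_wordG_fst_one x w

theorem develop_mul_letterG (x : Gamma g) (s : Letter g) :
    develop cs (x * letterG s) = develop cs x * cs.simple (edgeLabel cs x s) := by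
  simpa [edgeLabel] using develop_mul_wordG cs x [s]

theorem develop_wordG (w : List (Letter g)) :
    develop cs (wordG w) = cs.wordProd (labels cs 1 w) := by
  simpa [develop] using gammaAut_wordG_fst_one (cs := cs) 1 w

theorem labels_gammaAut_cons (x : Gamma g) (s : Letter g) (w : List (Letter g)) :
    labels cs (gammaAut cs x) (s :: w) =
      edgeLabel cs x s :: labels cs (gammaAut cs (x * letterG s)) w := by
  simp [edgeLabel]

theorem develop_mul (γ x : Gamma g) : develop cs (γ * x) = (gammaAut cs γ).1 (develop cs x) := by
  simp [develop]

theorem edgeLabel_mul (γ x : Gamma g) (s : Letter g) :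
    edgeLabel cs (γ * x) s = (gammaAut cs γ).2 (edgeLabel cs x s) := by
  simp [edgeLabel]

/-- The permutation of the surface group that moves each element across its edge labelled `i`. -/
def edgeFlip (i : ZMod (4 * g)) : Equiv.Perm (Gamma g) :=
  Function.Involutive.toPerm (fun x => x * letterG (labelLetter cs x i)) fun x => by
    have h := labelLetter_edgeLabel cs (x * letterG (labelLetter cs x i))
      (letterInv (labelLetter cs x i))
    rw [edgeLabel_mul_letterInv, edgeLabel_labelLetter] at h
    simp [h]

theorem edgeFlip_mul_self (i : ZMod (4 * g)) : edgeFlip cs i * edgeFlip cs i = 1 :=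
  Equiv.ext fun x => (edgeFlip cs i).symm_apply_apply x

theorem edgeFlip_edgeLabel (x : Gamma g) (s : Letter g) :
    edgeFlip cs (edgeLabel cs x s) x = x * letterG s :=
  congrArg (x * letterG ·) (labelLetter_edgeLabel cs x s)

theorem edgeFlip_mul_edgeFlip_pow_apply {i j : ZMod (4 * g)} {n : ℕ} {x : Gamma g}
    {w : List (Letter g)} (h : labels cs (gammaAut cs x) w = altWord j i (2 * n)) :
    ((edgeFlip cs i * edgeFlip cs j) ^ n) x = x * wordG w := by
  induction n generalizing x w with
  | zero =>
    obtain rfl : w = [] := by simpa using congrArg length h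
    simp
  | succ n ih =>
    obtain ⟨s, t, w, rfl⟩ : ∃ s t v, w = s :: t :: v := by
      match w, congrArg length h with
      | s :: t :: v, _ => exact ⟨s, t, v, rfl⟩
    rw [labels_gammaAut_cons, labels_gammaAut_cons] at h
    simp only [mul_add, mul_one, altWord_succ, cons.injEq] at h
    obtain ⟨rfl, rfl, hw⟩ := h
    rw [pow_succ, Equiv.Perm.mul_apply, Equiv.Perm.mul_apply, edgeFlip_edgeLabel,
      edgeFlip_edgeLabel, ih hw]
    simp [mul_assoc]

theorem oriented_gammaAut (x : Gamma g) :
    Oriented (gammaAut cs x) (orientation cs (develop cs x)) := by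
  obtain ⟨w, rfl⟩ := exists_wordG_eq x
  have h : Oriented (gammaAut cs (wordG w)) ((-1) ^ w.length * 1) := by
    have hone : Oriented (1 : Equiv.Perm W × Equiv.Perm (ZMod (4 * g))) 1 := fun i j => by simp
    simpa using hone.mul_wordAut (cs := cs) w
  have hsign := orientation_mul_wordProd (cs := cs) 1 (labels cs 1 w)
  rw [one_mul, ← develop_wordG, length_labels] at hsign
  rw [hsign]
  simpa using h

theorem isLiftable_edgeFlip : (cyclicMatrix (4 * g) g).IsLiftable (edgeFlip cs) := by
  have hg := NeZero.pos g
  intro i j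
  by_cases hM : cyclicMatrix (4 * g) g i j = 0
  · simp [hM]
  obtain rfl | hij := eq_or_ne i j
  · ext x
    simp [edgeFlip_mul_self]
  obtain ⟨η, hη, rfl⟩ := exists_eq_add_of_cyclicMatrix_ne_zero hM hij
  rw [cyclicMatrix_add (by omega) hη]
  ext x : 1
  have hor := oriented_gammaAut cs x
  set ε := orientation cs (develop cs x)
  have hε : ε * ε = 1 := orientation_mul_self _
  have hεη : ε * η = 1 ∨ ε * η = -1 := orientation_mul_eq_or _ hη
  have hlab := hor.labels_block (cs := cs) (ε * η) (labelLetter cs x (i + η)) (4 * g)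
  rw [← edgeLabel, edgeLabel_labelLetter, ← mul_assoc, hε, one_mul, add_sub_cancel_right] at hlab
  rw [edgeFlip_mul_edgeFlip_pow_apply cs (w := block (ε * η) (labelLetter cs x (i + η)) (4 * g)),
    wordG_block_four_mul hεη]
  · simp
  · rw [hlab, show 2 * (2 * g) = 4 * g by ring]

theorem lift_edgeFlip_labels (x : Gamma g) (w : List (Letter g)) :
    cs.lift ⟨edgeFlip cs, isLiftable_edgeFlip cs⟩
      (cs.wordProd (labels cs (gammaAut cs x) w))⁻¹ x = x * wordG w := by
  induction w generalizing x with
  | nil => simp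
  | cons s w ih =>
    rw [labels_gammaAut_cons, wordProd_cons, mul_inv_rev, map_mul, Equiv.Perm.mul_apply, inv_simple,
      lift_apply_simple, edgeFlip_edgeLabel, ih, wordG_cons, mul_assoc]

theorem develop_bijective : Function.Bijective (develop cs) := by
  refine ⟨Function.LeftInverse.injective (g := fun u =>
    cs.lift ⟨edgeFlip cs, isLiftable_edgeFlip cs⟩ u⁻¹ 1) fun x => ?_, fun u => ?_⟩
  · obtain ⟨w, rfl⟩ := exists_wordG_eq x
    have h := lift_edgeFlip_labels cs 1 w
    rwa [map_one (gammaAut cs), ← develop_wordG, one_mul] at h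
  · obtain ⟨ω, rfl⟩ := cs.wordProd_surjective u
    obtain ⟨w, hw⟩ := exists_labels_eq cs 1 ω
    exact ⟨wordG w, by rw [develop_wordG, hw]⟩

end DevelopingMap

section PathsInTheSurfaceGroup

open CoxeterSystem List

variable {g : ℕ}

/-- The path that reads the word `w` from `x` in the Cayley graph of the surface group runs in the
edge set `E`, where `E x s` refers to the edge leaving `x` with letter `s`. -/
def ReadsIn (E : Gamma g → Letter g → Prop) : Gamma g → List (Letter g) → Prop
  | _, [] => True
  | x, s :: w => E x s ∧ ReadsIn E (x * letterG s) w

variable {E : Gamma g → Letter g → Prop}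

@[simp] theorem readsIn_nil (x : Gamma g) : ReadsIn E x [] := trivial

@[simp] theorem readsIn_cons {x : Gamma g} {s : Letter g} {w : List (Letter g)} :
    ReadsIn E x (s :: w) ↔ E x s ∧ ReadsIn E (x * letterG s) w := Iff.rfl

theorem readsIn_append {x : Gamma g} {w w' : List (Letter g)} :
    ReadsIn E x (w ++ w') ↔ ReadsIn E x w ∧ ReadsIn E (x * wordG w) w' := by
  induction w generalizing x with
  | nil => simp
  | cons s w ih => simp [ih, and_assoc, mul_assoc]

variable [NeZero g]

/-- The rung that follows the rung `r` of a ladder: the edges `r` and `nextRung r` are opposite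
sides of a polygon. -/
def nextRung (r : Letter g) : Letter g := (nextLetter 1)^[2 * g - 1] (letterAt (letterPos r + 1))

/-- The word along the rail of a ladder of `n` polygons whose first rung leaves the rail with
letter `r`. -/
def ladderWord : ℕ → Letter g → List (Letter g)
  | 0, _ => []
  | n + 1, r => block 1 (letterAt (letterPos r + 1)) (2 * g - 1) ++ ladderWord n (nextRung r)

variable {W : Type*} [Group W] (cs : CoxeterSystem (cyclicMatrix (4 * g) g) W)

theorem edgeLabel_letterAt_add (x : Gamma g) (s : Letter g) (η : ZMod (4 * g)) :
    edgeLabel cs x (letterAt (letterPos s + η)) =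
      edgeLabel cs x s + orientation cs (develop cs x) * η := by
  have h := oriented_gammaAut cs x (letterPos s + η) (letterPos s)
  rw [edgeLabel, edgeLabel, letterPos_letterAt]
  linear_combination h

theorem labels_gammaAut_block (x : Gamma g) (η : ZMod (4 * g)) (s : Letter g) (n : ℕ) :
    labels cs (gammaAut cs x) (block η s n) = altWord (edgeLabel cs x s)
      (edgeLabel cs x s - orientation cs (develop cs x) * η) n :=
  (oriented_gammaAut cs x).labels_block η s n

theorem orientation_develop_mul_wordG (x : Gamma g) (w : List (Letter g)) :
    orientation cs (develop cs (x * wordG w)) =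
      (-1) ^ w.length * orientation cs (develop cs x) := by
  rw [develop_mul_wordG, orientation_mul_wordProd, length_labels]

theorem orientation_develop_mul_letterG (x : Gamma g) (s : Letter g) :
    orientation cs (develop cs (x * letterG s)) = -orientation cs (develop cs x) := by
  simpa using orientation_develop_mul_wordG cs x [s]

theorem edgeLabel_mul_letterG (x : Gamma g) (s t : Letter g) : edgeLabel cs (x * letterG s) t =
    edgeLabel cs x s -
      orientation cs (develop cs x) * (letterPos t - letterPos (letterInv s)) := by
  have h := oriented_gammaAut cs (x * letterG s) (letterPos t) (letterPos (letterInv s))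
  have hsign := orientation_develop_mul_wordG cs x [s]
  rw [wordG_cons, wordG_nil, mul_one] at hsign
  rw [hsign, ← edgeLabel, ← edgeLabel, edgeLabel_mul_letterInv] at h
  rw [length_singleton] at h
  linear_combination h

theorem orientation_develop_mul (x y : Gamma g) : orientation cs (develop cs (x * y)) =
    orientation cs (develop cs x) * orientation cs (develop cs y) := by
  obtain ⟨w, rfl⟩ := exists_wordG_eq y
  have h := orientation_develop_mul_wordG cs 1 w
  rw [one_mul, develop_one, orientation_one, mul_one] at h
  rw [orientation_develop_mul_wordG, h]
  exact mul_comm _ _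

theorem labels_gammaAut_append (x : Gamma g) (w w' : List (Letter g)) :
    labels cs (gammaAut cs x) (w ++ w') =
      labels cs (gammaAut cs x) w ++ labels cs (gammaAut cs (x * wordG w)) w' := by
  rw [labels_append, map_mul, gammaAut_wordG]

theorem labels_ladder_block (x : Gamma g) (r : Letter g) :
    labels cs (gammaAut cs x) (block 1 (letterAt (letterPos r + 1)) (2 * g - 1)) =
      altWord (edgeLabel cs x r + orientation cs (develop cs x)) (edgeLabel cs x r)
        (2 * g - 1) := by
  rw [labels_gammaAut_block, edgeLabel_letterAt_add, mul_one, add_sub_cancel_right]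

theorem edgeLabel_nextRung (x : Gamma g) (r : Letter g) :
    edgeLabel cs (x * wordG (block 1 (letterAt (letterPos r + 1)) (2 * g - 1))) (nextRung r) =
      edgeLabel cs x r := by
  have hg := NeZero.pos g
  have h := labels_gammaAut_block cs x 1 (letterAt (letterPos r + 1)) (2 * g - 1 + 1)
  rw [block_add, labels_gammaAut_append, labels_ladder_block, edgeLabel_letterAt_add, mul_one,
    add_sub_cancel_right, show 2 * g - 1 + 1 = 2 * g by omega,
    altWord_two_mul_eq_append (NeZero.ne g)] at h
  rw [block_succ, block_zero, labels_gammaAut_cons] at h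
  exact (cons.inj (append_cancel_left h)).1

theorem labels_ladderWord (x : Gamma g) (n : ℕ) (r : Letter g) :
    labels cs (gammaAut cs x) (ladderWord n r) =
      ladder g (orientation cs (develop cs x)) n (edgeLabel cs x r) := by
  induction n generalizing x r with
  | zero => rfl
  | succ n ih =>
    rw [ladderWord, labels_gammaAut_append, ih, labels_ladder_block, edgeLabel_nextRung,
      orientation_develop_mul_wordG, length_block,
      Odd.neg_one_pow ⟨g - 1, by have := NeZero.pos g; omega⟩, neg_one_mul, ladder]

theorem edgeLabel_iterate_nextRung (x : Gamma g) (n : ℕ) (r : Letter g) :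
    edgeLabel cs (x * wordG (ladderWord n r)) (nextRung^[n] r) = edgeLabel cs x r := by
  induction n generalizing x r with
  | zero => simp [ladderWord]
  | succ n ih =>
    rw [ladderWord, wordG_append, ← mul_assoc, Function.iterate_succ_apply, ih, edgeLabel_nextRung]

/-- The edge set of the Coxeter group that corresponds to the edge set `E` of the surface group. -/
def pushEdges (E : Gamma g → Letter g → Prop) (u : W) (i : ZMod (4 * g)) : Prop :=
  ∃ x s, develop cs x = u ∧ edgeLabel cs x s = i ∧ E x s

variable {cs} in
theorem pushEdges_iff {x : Gamma g} {s : Letter g} :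
    pushEdges cs E (develop cs x) (edgeLabel cs x s) ↔ E x s := by
  refine ⟨?_, fun h => ⟨x, s, rfl, rfl, h⟩⟩
  rintro ⟨x', s', hx, hs, h⟩
  obtain rfl := (develop_bijective cs).1 hx
  have := labelLetter_edgeLabel cs x' s'
  rwa [← labelLetter_edgeLabel cs x' s, ← hs, this]

variable {cs} in
theorem walkIn_pushEdges_iff {x : Gamma g} {w : List (Letter g)} :
    WalkIn cs (pushEdges cs E) (develop cs x) (labels cs (gammaAut cs x) w) ↔ ReadsIn E x w := by
  induction w generalizing x with
  | nil => simp
  | cons s w ih =>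
    rw [labels_gammaAut_cons, walkIn_cons, readsIn_cons, ← develop_mul_letterG, ih, pushEdges_iff]

end PathsInTheSurfaceGroup

section ConvexityInTheSurfaceGroup

open CoxeterSystem List

variable {g : ℕ}

theorem exists_forall_add_one_eq {α : Type*} (f : ℤ → Equiv.Perm α) (x : α) :
    ∃ p : ℤ → α, p 0 = x ∧ ∀ k, p (k + 1) = f k (p k) := by
  let p (k : ℤ) : α := Int.inductionOn' (motive := fun _ => α) k 0 x (fun k _ => f k)
    fun k _ => (f (k - 1)).symm
  refine ⟨p, Int.inductionOn'_self, fun k => ?_⟩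
  rcases le_or_gt 0 k with hk | hk
  · exact Int.inductionOn'_add_one hk
  · have h : p k = (f k).symm (p (k + 1)) := by
      simpa using Int.inductionOn'_sub_one (motive := fun _ => α) (zero := x)
        (succ := fun k _ => f k) (pred := fun k _ => (f (k - 1)).symm) (z := k + 1)
        (Int.add_one_le_of_lt hk)
    rw [h, Equiv.apply_symm_apply]

theorem exists_periodic_segment_eq {α : Type*} {w : List α} (hw : w ≠ []) :
    ∃ ℓ : ℤ → α, (∀ k, ℓ (k + w.length) = ℓ k) ∧ segment ℓ 0 w.length = w := by
  have ht : 0 < (w.length : ℤ) := by exact_mod_cast length_pos_of_ne_nil hw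
  have hlt (k : ℤ) : (k % w.length).toNat < w.length := by
    have := Int.emod_lt_of_pos k ht
    have := Int.emod_nonneg k ht.ne'
    omega
  refine ⟨fun k => w[(k % w.length).toNat]'(hlt k), fun k => ?_, ?_⟩
  · simp only [Int.add_emod_right]
  · refine ext_getElem (by simp) fun i hi hi' => ?_
    rw [getElem_segment]
    simp only [zero_add, Int.emod_eq_of_lt (Int.natCast_nonneg i) (Int.ofNat_lt.2 hi'),
      Int.toNat_natCast]

theorem path_add_eq_mul_wordG_segment {p : ℤ → Gamma g} {ℓ : ℤ → Letter g}
    (hp : ∀ k, p (k + 1) = p k * letterG (ℓ k)) (k : ℤ) (n : ℕ) :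
    p (k + n) = p k * wordG (segment ℓ k n) := by
  induction n generalizing k with
  | zero => simp [segment]
  | succ n ih => rw [segment_succ, wordG_cons, ← mul_assoc, ← hp, ← ih]; congr 1; push_cast; ring

theorem exists_periodic_path {γ x : Gamma g} {w : List (Letter g)} (hw : w ≠ [])
    (hγ : γ * x = x * wordG w) : ∃ (p : ℤ → Gamma g) (ℓ : ℤ → Letter g),
      (∀ k, p (k + 1) = p k * letterG (ℓ k)) ∧ (∀ k, γ * p k = p (k + w.length)) ∧
      (∀ k, ℓ (k + w.length) = ℓ k) ∧ p 0 = x ∧ segment ℓ 0 w.length = w := by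
  obtain ⟨ℓ, hℓ, hword⟩ := exists_periodic_segment_eq hw
  obtain ⟨p, rfl, hp⟩ := exists_forall_add_one_eq (fun k => Equiv.mulRight (letterG (ℓ k))) x
  refine ⟨p, ℓ, hp, fun k => ?_, hℓ, rfl, hword⟩
  induction k with
  | zero => rw [hγ, path_add_eq_mul_wordG_segment hp, hword]
  | succ k ih => rw [hp, Equiv.coe_mulRight, ← mul_assoc, ih, add_right_comm, hp, hℓ]; rfl
  | pred k ih =>
    have hk := hp (-k - 1)
    have hk' := hp (-k - 1 + w.length)
    rw [sub_add_cancel] at hk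
    rw [add_right_comm, sub_add_cancel, hℓ, ← ih, hk, Equiv.coe_mulRight, ← mul_assoc] at hk'
    exact mul_right_cancel hk'

theorem readsIn_segment {E : Gamma g → Letter g → Prop} {p : ℤ → Gamma g} {ℓ : ℤ → Letter g}
    (hp : ∀ k, p (k + 1) = p k * letterG (ℓ k)) (h : ∀ k, E (p k) (ℓ k)) (k : ℤ) (n : ℕ) :
    ReadsIn E (p k) (segment ℓ k n) := by
  induction n generalizing k with
  | zero => simp [segment]
  | succ n ih => rw [segment_succ, readsIn_cons, ← hp]; exact ⟨h k, ih _⟩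

variable [NeZero g]

/-- What is left of strong boundary reducedness for the set `E` of edges of the universal cover of
`Σ_g` that lie over a subcomplex of the cover corresponding to `J`. -/
structure IsStronglyReduced (J : Subgroup (Gamma g)) (E : Gamma g → Letter g → Prop) : Prop where
  symm {x s} : E x s → E (x * letterG s) (letterInv s)
  mul_left_iff {γ x s} : γ ∈ J → (E (γ * x) s ↔ E x s)
  halfBlock {x η s} : η = 1 ∨ η = -1 → ReadsIn E x (block η s (2 * g)) →
    ReadsIn E x (block (-η) (letterAt (letterPos s - η)) (2 * g))
  ladder {γ x r n} : γ ∈ J → γ * x = x * wordG (ladderWord (n + 1) r) → nextRung^[n + 1] r = r →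
    ReadsIn E x (ladderWord (n + 1) r) → ∃ k ≤ n, E (x * wordG (ladderWord k r)) (nextRung^[k] r)

variable {J : Subgroup (Gamma g)} {E : Gamma g → Letter g → Prop} {W : Type*} [Group W]
  {cs : CoxeterSystem (cyclicMatrix (4 * g) g) W}

theorem exists_eq_develop_edgeLabel (cs : CoxeterSystem (cyclicMatrix (4 * g) g) W) (u : W)
    (i : ZMod (4 * g)) : ∃ x s, develop cs x = u ∧ edgeLabel cs x s = i := by
  obtain ⟨x, rfl⟩ := (develop_bijective cs).2 u
  exact ⟨x, labelLetter cs x i, rfl, edgeLabel_labelLetter cs x i⟩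

theorem IsStronglyReduced.pushEdges_mul_simple (hE : IsStronglyReduced J E) (u : W)
    (i : ZMod (4 * g)) (h : pushEdges cs E u i) : pushEdges cs E (u * cs.simple i) i := by
  obtain ⟨x, s, rfl, rfl, h⟩ := h
  exact ⟨x * letterG s, letterInv s, develop_mul_letterG cs x s, edgeLabel_mul_letterInv cs x s,
    hE.symm h⟩

theorem IsStronglyReduced.pushEdges_map_iff (hE : IsStronglyReduced J E) {γ : Gamma g}
    (hγ : γ ∈ J) (u : W) (i : ZMod (4 * g)) :
    pushEdges cs E ((gammaAut cs γ).1 u) ((gammaAut cs γ).2 i) ↔ pushEdges cs E u i := by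
  obtain ⟨x, s, rfl, rfl⟩ := exists_eq_develop_edgeLabel cs u i
  rw [← develop_mul, ← edgeLabel_mul, pushEdges_iff, pushEdges_iff, hE.mul_left_iff hγ]

theorem IsStronglyReduced.braidClosed (hE : IsStronglyReduced J E) :
    BraidClosed (cyclicMatrix (4 * g) g) cs (pushEdges cs E) := by
  have hg := NeZero.pos g
  intro u i j hM h
  obtain rfl | hij := eq_or_ne i j
  · exact h
  obtain ⟨η, hη, rfl⟩ := exists_eq_add_of_cyclicMatrix_ne_zero hM hij
  obtain ⟨x, s, rfl, rfl⟩ := exists_eq_develop_edgeLabel cs u i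
  rw [cyclicMatrix_add (by omega) hη] at h ⊢
  have hsq := orientation_mul_self (cs := cs) (develop cs x)
  have hη' : -(orientation cs (develop cs x) * η) = 1 ∨
      -(orientation cs (develop cs x) * η) = -1 := by
    rw [neg_inj, neg_eq_iff_eq_neg]
    exact (orientation_mul_eq_or _ hη).symm
  have hswap := hE.halfBlock hη' (x := x) (s := s) <| by
    rw [← walkIn_pushEdges_iff (cs := cs), labels_gammaAut_block]
    convert h using 2
    linear_combination η * hsq
  rw [← walkIn_pushEdges_iff (cs := cs), labels_gammaAut_block, sub_eq_add_neg (letterPos s),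
    edgeLabel_letterAt_add] at hswap
  convert hswap using 2
  · linear_combination (-η) * hsq
  · ring

theorem IsStronglyReduced.rungClosed (hE : IsStronglyReduced J E) {γ : Gamma g} (hγ : γ ∈ J) :
    RungClosed cs (pushEdges cs E) (gammaAut cs γ) := by
  intro u i n K hu hi hw
  obtain ⟨x, r, rfl, rfl⟩ := exists_eq_develop_edgeLabel cs u i
  rw [← map_zpow, ← labels_ladderWord, ← develop_mul_wordG, ← develop_mul] at hu
  have hx := (develop_bijective cs).1 hu
  rw [← labels_ladderWord, walkIn_pushEdges_iff] at hw
  have hr : nextRung^[n + 1] r = r := by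
    rw [← map_zpow, ← edgeLabel_mul, hx, ← edgeLabel_iterate_nextRung cs x (n + 1) r] at hi
    exact (edgeLabel_injective cs _ hi).symm
  obtain ⟨k, hk, h⟩ := hE.ladder (J.zpow_mem hγ K) hx hr hw
  refine ⟨k, hk, ?_⟩
  rwa [← labels_ladderWord, ← develop_mul_wordG, ← edgeLabel_iterate_nextRung cs x k r,
    pushEdges_iff]

variable {γ x : Gamma g} {w : List (Letter g)}

theorem gammaAut_snd_apply_of_mul_eq (h : γ * x = x * wordG w) (i : ZMod (4 * g)) :
    (gammaAut cs γ).2 i = (-1) ^ w.length * i + (gammaAut cs γ).2 0 := by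
  have hsign : orientation cs (develop cs γ) = (-1) ^ w.length := by
    have hdev : orientation cs (develop cs γ) * orientation cs (develop cs x) =
        (-1) ^ w.length * orientation cs (develop cs x) := by
      rw [← orientation_develop_mul, h, orientation_develop_mul_wordG]
    linear_combination orientation cs (develop cs x) * hdev +
      ((-1) ^ w.length - orientation cs (develop cs γ)) * orientation_mul_self (develop cs x)
  have h := oriented_gammaAut cs γ i 0
  rw [hsign] at h
  linear_combination h

theorem length_le_length_inv_mul_gammaAut
    (hmin : ∀ z w', γ * z = z * wordG w' → w.length ≤ w'.length) (u : W) :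
    w.length ≤ cs.length (u⁻¹ * (gammaAut cs γ).1 u) := by
  obtain ⟨z, rfl⟩ := (develop_bijective cs).2 u
  obtain ⟨ω, hω, hu⟩ := cs.exists_isReduced ((develop cs z)⁻¹ * (gammaAut cs γ).1 (develop cs z))
  obtain ⟨w', rfl⟩ := exists_labels_eq cs (gammaAut cs z) ω
  rw [hu, hω.eq, length_labels]
  refine hmin z w' ((develop_bijective cs).1 ?_)
  rw [develop_mul, develop_mul_wordG, ← hu, mul_inv_cancel_left]

theorem isAxis_develop {p : ℤ → Gamma g} {ℓ : ℤ → Letter g} {t : ℕ}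
    (hp : ∀ k, p (k + 1) = p k * letterG (ℓ k)) (hγ : ∀ k, γ * p k = p (k + t))
    (hℓ : ∀ k, ℓ (k + t) = ℓ k) : IsAxis cs (gammaAut cs γ) t (fun k => develop cs (p k))
      (fun k => edgeLabel cs (p k) (ℓ k)) where
  step k := by rw [hp, develop_mul_letterG]
  map_vertex k := by rw [← hγ, develop_mul]
  map_label k := by rw [← hγ, hℓ, edgeLabel_mul]

variable {p : ℤ → Gamma g} {ℓ : ℤ → Letter g}

theorem exists_iterate_nextLetter_of_labels_periodic (hp : ∀ k, p (k + 1) = p k * letterG (ℓ k))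
    (hper : ∀ k, edgeLabel cs (p (k + 2)) (ℓ (k + 2)) = edgeLabel cs (p k) (ℓ k)) (k : ℤ) :
    ∃ η, edgeLabel cs (p (k + 1)) (ℓ (k + 1)) - edgeLabel cs (p k) (ℓ k) =
      -(orientation cs (develop cs (p k)) * η) ∧ ∀ n : ℕ, ℓ (k + n) = (nextLetter η)^[n] (ℓ k) := by
  let η (k : ℤ) := letterPos (ℓ (k + 1)) - letterPos (letterInv (ℓ k))
  have hη (k : ℤ) : edgeLabel cs (p (k + 1)) (ℓ (k + 1)) - edgeLabel cs (p k) (ℓ k) =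
      -(orientation cs (develop cs (p k)) * η k) := by
    rw [hp, edgeLabel_mul_letterG, sub_sub_cancel_left]
  have hconst (k : ℤ) : η (k + 1) = η k := by
    have h := hη (k + 1)
    rw [add_assoc, one_add_one_eq_two, hper, hp k, orientation_develop_mul_letterG, ← hp] at h
    linear_combination -orientation cs (develop cs (p k)) * (h + hη k) +
      (η k - η (k + 1)) * orientation_mul_self (cs := cs) (develop cs (p k))
  have hn (n : ℕ) : η (k + n) = η k := by
    induction n with
    | zero => simp
    | succ n ih => rw [Nat.cast_succ, ← add_assoc, hconst, ih]
  refine ⟨η k, hη k, fun n => ?_⟩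
  induction n with
  | zero => simp
  | succ n ih =>
    rw [Function.iterate_succ_apply', ← ih, eq_comm, nextLetter_eq_iff, Nat.cast_succ, ← add_assoc,
      ← hn n]
    simp only [η, add_sub_cancel]

theorem two_mul_lt_of_labels_periodic (hp : ∀ k, p (k + 1) = p k * letterG (ℓ k)) {t : ℕ}
    (ht : 0 < t) (hℓ : ∀ k, ℓ (k + t) = ℓ k)
    (hred : ∀ k n, n ≤ t → cs.IsReduced (segment (fun k => edgeLabel cs (p k) (ℓ k)) k n))
    (hper : ∀ k, edgeLabel cs (p (k + 2)) (ℓ (k + 2)) = edgeLabel cs (p k) (ℓ k)) (k : ℤ)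
    (hturn : edgeLabel cs (p (k + 1)) (ℓ (k + 1)) - edgeLabel cs (p k) (ℓ k) = 0 ∨
      edgeLabel cs (p (k + 1)) (ℓ (k + 1)) - edgeLabel cs (p k) (ℓ k) = 1 ∨
      edgeLabel cs (p (k + 1)) (ℓ (k + 1)) - edgeLabel cs (p k) (ℓ k) = -1) : 2 * g < t := by
  obtain ⟨η, hη, hnext⟩ := exists_iterate_nextLetter_of_labels_periodic hp hper k
  rcases hturn with h0 | h1
  · obtain rfl : η = 0 := by
      rw [h0] at hη
      linear_combination orientation cs (develop cs (p k)) * hη -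
        η * orientation_mul_self (cs := cs) (develop cs (p k))
    have hback : ℓ (k + 1) = letterInv (ℓ k) := by
      have := hnext 1
      rw [Function.iterate_one, eq_comm, nextLetter_eq_iff, add_zero] at this
      exact letterPos_injective this
    obtain rfl | ht : t = 1 ∨ 2 ≤ t := by omega
    · have := hℓ k
      rw [Nat.cast_one, hback] at this
      simpa [letterInv] using congrArg Prod.snd this
    · have := (hred k 2 ht).eq
      simp only [segment_succ, sub_eq_zero.1 h0, wordProd_cons,
        simple_mul_simple_cancel_left] at this
      simp [segment] at this
  · have hη1 : η = 1 ∨ η = -1 := by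
      have := orientation_mul_eq_or (cs := cs) (develop cs (p k)) h1
      rwa [hη, mul_neg, ← mul_assoc, orientation_mul_self, one_mul, neg_eq_iff_eq_neg, neg_inj,
        or_comm] at this
    have := four_mul_le_of_iterate_nextLetter_eq hη1 ht (by rw [← hnext, hℓ])
    omega

/-- Convexity of `E` along a closed path: the edge set `E` contains each shortest word that
represents the conjugacy class of `γ` as soon as it contains some closed path of this class. -/
theorem IsStronglyReduced.readsIn (hE : IsStronglyReduced J E) (hg : 2 ≤ g) {z : Gamma g}
    {v : List (Letter g)} (hγ : γ ∈ J) (hx : γ * x = x * wordG w) (hw : w ≠ [])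
    (hmin : ∀ z w', γ * z = z * wordG w' → w.length ≤ w'.length) (hz : ReadsIn E z v)
    (hv : γ * z = z * wordG v) : ReadsIn E x w := by
  let cs := (cyclicMatrix (4 * g) g).toCoxeterSystem
  obtain ⟨p, ℓ, hp, hγp, hℓ, rfl, hword⟩ := exists_periodic_path hw hx
  have ht := length_pos_of_ne_nil hw
  have hax := isAxis_develop (cs := cs) hp hγp hℓ
  have hlen := length_le_length_inv_mul_gammaAut (cs := cs) hmin
  have hred := hax.isReduced_segment (gammaAut_mem_cayleyAut γ) (gammaAut_snd_apply_of_mul_eq hx)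
    (by omega) (by omega) ht hlen
    (two_mul_lt_of_labels_periodic hp ht hℓ fun k n => hax.isReduced_segment_of_le hlen k)
  have hJoined : Joined cs (pushEdges cs E) (develop cs z) ((gammaAut cs γ).1 (develop cs z)) :=
    ⟨_, walkIn_pushEdges_iff.2 hz, by rw [← develop_mul, hv, develop_mul_wordG]⟩
  have hedge := hax.edge_of_rungClosed (by omega) (by omega) (gammaAut_mem_cayleyAut γ) ht hred
    hE.braidClosed hE.pushEdges_mul_simple (hE.pushEdges_map_iff hγ) (hE.rungClosed hγ) hJoined
  rw [← hword]
  exact readsIn_segment hp (fun k => pushEdges_iff.1 (hedge k)) 0 _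

end ConvexityInTheSurfaceGroup

section PathsInTheCover

open List

variable {g : ℕ} {J : Subgroup (Gamma g)}

theorem mkCos_surjective : Function.Surjective (mkCos g J) := Quotient.mk_surjective

theorem mkCos_eq_mkCos_iff {x y : Gamma g} : mkCos g J x = mkCos g J y ↔ y * x⁻¹ ∈ J := by
  rw [mkCos, mkCos, Quotient.eq]
  exact QuotientGroup.rightRel_apply

theorem mkCos_mul_left {γ : Gamma g} (hγ : γ ∈ J) (x : Gamma g) :
    mkCos g J (γ * x) = mkCos g J x := by
  rw [eq_comm, mkCos_eq_mkCos_iff]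
  simpa

theorem rmul_mkCos (x y : Gamma g) : rmul g J y (mkCos g J x) = mkCos g J (x * y) := rfl

theorem mkCos_mul_congr {x y : Gamma g} (h : mkCos g J x = mkCos g J y) (z : Gamma g) :
    mkCos g J (x * z) = mkCos g J (y * z) := congrArg (rmul g J z) h

variable (J) in
/-- The dart of the cover `J\~Σ_g` that leaves the vertex `Jx` with letter `s`. -/
def coverDart (x : Gamma g) (s : Letter g) : (cover g J).D :=
  ((mkCos g J (if s.2 then x else x * letterG s), s.1), s.2)

theorem dTail_coverDart (x : Gamma g) (s : Letter g) :
    (cover g J).dTail (coverDart J x s) = mkCos g J x := by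
  obtain ⟨ℓ, b⟩ := s
  cases b <;> simp [Complex.dTail, coverDart, cover, letterG, rmul_mkCos]

theorem dHead_coverDart (x : Gamma g) (s : Letter g) :
    (cover g J).dHead (coverDart J x s) = mkCos g J (x * letterG s) := by
  obtain ⟨ℓ, b⟩ := s
  cases b <;> simp [Complex.dHead, coverDart, cover, letterG, rmul_mkCos]

theorem dLet_coverDart (x : Gamma g) (s : Letter g) :
    (cover g J).dLet (coverDart J x s) = s := rfl

theorem dRev_coverDart (x : Gamma g) (s : Letter g) :
    (cover g J).dRev (coverDart J x s) = coverDart J (x * letterG s) (letterInv s) := by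
  obtain ⟨ℓ, b⟩ := s
  cases b <;> simp [Complex.dRev, coverDart, letterG, letterInv]

theorem coverDart_congr {x y : Gamma g} (h : mkCos g J x = mkCos g J y) (s : Letter g) :
    coverDart J x s = coverDart J y s := by
  simp only [coverDart]
  split_ifs
  · rw [h]
  · rw [mkCos_mul_congr h]

theorem eq_coverDart {d : (cover g J).D} {x : Gamma g} (h : (cover g J).dTail d = mkCos g J x) :
    d = coverDart J x ((cover g J).dLet d) := by
  obtain ⟨⟨v, ℓ⟩, b⟩ := d
  obtain ⟨y, rfl⟩ := mkCos_surjective v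
  cases b
  · have := mkCos_mul_congr h (PresentedGroup.of ℓ)⁻¹
    simpa [coverDart, letterG, Complex.dLet, cover] using this
  · simpa [coverDart, Complex.dLet, cover, Complex.dTail] using h

variable (J) in
/-- The path of the cover `J\~Σ_g` that reads the word `w` from the vertex `Jx`. -/
def coverPath : Gamma g → List (Letter g) → List (cover g J).D
  | _, [] => []
  | x, s :: w => coverDart J x s :: coverPath (x * letterG s) w

@[simp] theorem coverPath_nil (x : Gamma g) : coverPath J x [] = [] := rfl

@[simp] theorem coverPath_cons (x : Gamma g) (s : Letter g) (w : List (Letter g)) :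
    coverPath J x (s :: w) = coverDart J x s :: coverPath J (x * letterG s) w := rfl

theorem coverPath_append (x : Gamma g) (w w' : List (Letter g)) :
    coverPath J x (w ++ w') = coverPath J x w ++ coverPath J (x * wordG w) w' := by
  induction w generalizing x with
  | nil => simp
  | cons s w ih => simp [ih, mul_assoc]

@[simp] theorem length_coverPath (x : Gamma g) (w : List (Letter g)) :
    (coverPath J x w).length = w.length := by
  induction w generalizing x with
  | nil => rfl
  | cons s w ih => simp [ih]

theorem coverPath_congr {x y : Gamma g} (h : mkCos g J x = mkCos g J y) (w : List (Letter g)) :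
    coverPath J x w = coverPath J y w := by
  induction w generalizing x y with
  | nil => rfl
  | cons s w ih => simp [coverDart_congr h, ih (mkCos_mul_congr h _)]

theorem wordOf_coverPath (x : Gamma g) (w : List (Letter g)) :
    (cover g J).wordOf (coverPath J x w) = w := by
  induction w generalizing x with
  | nil => rfl
  | cons s w ih => simpa [Complex.wordOf, dLet_coverDart] using ih _

theorem walkFrom_coverPath (x : Gamma g) (w : List (Letter g)) :
    (cover g J).WalkFrom (mkCos g J x) (mkCos g J (x * wordG w)) (coverPath J x w) := by
  induction w generalizing x with
  | nil => simpa using .nil _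
  | cons s w ih =>
    have h := Complex.WalkFrom.cons (coverDart J x s) (by rw [dHead_coverDart]; exact ih _)
    rwa [dTail_coverDart, mul_assoc, ← wordG_cons] at h

theorem exists_eq_coverPath {u v : (cover g J).V} {l : List (cover g J).D}
    (hl : (cover g J).WalkFrom u v l) {x : Gamma g} (hx : u = mkCos g J x) :
    ∃ w, l = coverPath J x w ∧ v = mkCos g J (x * wordG w) := by
  induction hl generalizing x with
  | nil v => exact ⟨[], rfl, by simpa using hx⟩
  | cons d _ ih =>
    obtain ⟨s, rfl⟩ : ∃ s, d = coverDart J x s := ⟨_, eq_coverDart hx⟩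
    obtain ⟨w, rfl, rfl⟩ := ih (dHead_coverDart x s)
    exact ⟨s :: w, rfl, by rw [wordG_cons, mul_assoc]⟩

theorem relWalk_mkCos (x : Gamma g) (w : List (Letter g)) :
    relWalk g J (mkCos g J x) w = coverPath J x w := by
  induction w generalizing x with
  | nil => rfl
  | cons s w ih =>
    obtain ⟨ℓ, b⟩ := s
    cases b <;> simp only [relWalk, rmul_mkCos, ih] <;> rfl

theorem bdry_mkCos (x : Gamma g) :
    (cover g J).bdry (mkCos g J x) = coverPath J x (relatorWord g) := relWalk_mkCos x _

theorem revW_coverPath (x : Gamma g) (w : List (Letter g)) : (cover g J).revW (coverPath J x w) =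
    coverPath J (x * wordG w) (w.map letterInv).reverse := by
  induction w generalizing x with
  | nil => rfl
  | cons s w ih =>
    have h := ih (x * letterG s)
    simp only [Complex.revW] at h
    simp [Complex.revW, h, coverPath_append, wordG_reverse, dRev_coverDart, mul_assoc]

variable (J) in
/-- The edges of the universal cover of `Σ_g` over the set `sE` of edges of the cover `J\~Σ_g`. -/
def edgesOver (sE : Set (cover g J).E) (x : Gamma g) (s : Letter g) : Prop :=
  (coverDart J x s).1 ∈ sE

theorem inSet_coverPath {sE : Set (cover g J).E} {x : Gamma g} {w : List (Letter g)} :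
    (cover g J).InSet sE (coverPath J x w) ↔ ReadsIn (edgesOver J sE) x w := by
  induction w generalizing x with
  | nil => simp [Complex.InSet]
  | cons s w ih =>
    rw [readsIn_cons, ← ih]
    simp [Complex.InSet, edgesOver]

theorem edgesOver_letterInv {sE : Set (cover g J).E} {x : Gamma g} {s : Letter g} :
    edgesOver J sE (x * letterG s) (letterInv s) ↔ edgesOver J sE x s := by
  rw [edgesOver, ← dRev_coverDart]
  rfl

theorem edgesOver_mul_left {sE : Set (cover g J).E} {γ : Gamma g} (hγ : γ ∈ J) {x : Gamma g}
    {s : Letter g} : edgesOver J sE (γ * x) s ↔ edgesOver J sE x s := by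
  rw [edgesOver, coverDart_congr (mkCos_mul_left hγ x), edgesOver]

end PathsInTheCover

section Homotopy

open List

variable {g : ℕ} {Y : Complex g} {sE : Set Y.E} {sF : Set Y.F}

theorem dLet_dRev (d : Y.D) : Y.dLet (Y.dRev d) = letterInv (Y.dLet d) := rfl

theorem wordOf_append (l l' : List Y.D) : Y.wordOf (l ++ l') = Y.wordOf l ++ Y.wordOf l' :=
  map_append

theorem wordG_wordOf_revW (l : List Y.D) :
    wordG (Y.wordOf (Y.revW l)) = (wordG (Y.wordOf l))⁻¹ := by
  rw [← wordG_reverse]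
  simp [Complex.revW, Complex.wordOf, Function.comp_def, dLet_dRev]

theorem wordG_wordOf_eq_of_elemMove (hY : ∀ f, wordG (Y.wordOf (Y.bdry f)) = 1) {l l' : List Y.D}
    (h : Y.elemMove sE sF l l') : wordG (Y.wordOf l) = wordG (Y.wordOf l') := by
  obtain ⟨l₁, l₂, d, -, rfl, rfl⟩ | ⟨l₁, l₂, b, ⟨f, -, n, hb⟩, rfl, rfl⟩ := h
  · simp [Complex.wordOf, dLet_dRev]
  · have hrot : wordG (Y.wordOf ((Y.bdry f).rotate n)) = 1 := by
      rw [wordG, Complex.wordOf, map_rotate, map_rotate]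
      exact prod_rotate_eq_one_of_prod_eq_one (hY f) n
    have hb' : wordG (Y.wordOf b) = 1 := by
      obtain rfl | rfl := hb
      · exact hrot
      · rw [wordG_wordOf_revW, hrot, inv_one]
    rw [Complex.wordOf] at hb'
    simp [Complex.wordOf, hb']

theorem wordG_wordOf_eq_of_homotopic (hY : ∀ f, wordG (Y.wordOf (Y.bdry f)) = 1) {u v : Y.V}
    {l l' : List Y.D} (h : Y.Homotopic sE sF u v l l') :
    wordG (Y.wordOf l) = wordG (Y.wordOf l') := by
  induction h with
  | rel _ _ h =>
    obtain ⟨-, -, -, -, h | h⟩ := h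
    · exact wordG_wordOf_eq_of_elemMove hY h
    · exact (wordG_wordOf_eq_of_elemMove hY h).symm
  | refl => rfl
  | symm _ _ _ ih => exact ih.symm
  | trans _ _ _ _ _ ih ih' => exact ih.trans ih'

theorem elemMove_cons (d : Y.D) {l l' : List Y.D} (h : Y.elemMove sE sF l l') :
    Y.elemMove sE sF (d :: l) (d :: l') := by
  obtain ⟨l₁, l₂, d', hd', rfl, rfl⟩ | ⟨l₁, l₂, b, hb, rfl, rfl⟩ := h
  · exact Or.inl ⟨d :: l₁, l₂, d', hd', rfl, rfl⟩
  · exact Or.inr ⟨d :: l₁, l₂, b, hb, rfl, rfl⟩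

theorem homotopic_cons {d : Y.D} (hd : d.1 ∈ sE) {v : Y.V} {l l' : List Y.D}
    (h : Y.Homotopic sE sF (Y.dHead d) v l l') :
    Y.Homotopic sE sF (Y.dTail d) v (d :: l) (d :: l') := by
  have hcons {l : List Y.D} (hl : Y.InSet sE l) : Y.InSet sE (d :: l) :=
    forall_mem_cons.2 ⟨hd, hl⟩
  induction h with
  | rel _ _ h =>
    obtain ⟨hl, hl', hs, hs', h⟩ := h
    exact .rel _ _ ⟨.cons d hl, .cons d hl', hcons hs, hcons hs',
      h.imp (elemMove_cons d) (elemMove_cons d)⟩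
  | refl => exact .refl _
  | symm _ _ _ ih => exact ih.symm
  | trans _ _ _ _ _ ih ih' => exact ih.trans _ _ _ ih'

end Homotopy

section HomotopyInTheCover

open List

variable {g : ℕ} {J : Subgroup (Gamma g)}

theorem wordG_wordOf_bdry_cover (f : (cover g J).F) :
    wordG ((cover g J).wordOf ((cover g J).bdry f)) = 1 := by
  obtain ⟨x, rfl⟩ := mkCos_surjective f
  rw [bdry_mkCos, wordOf_coverPath, wordG_relatorWord]

variable (J) in
/-- The words that are equal in the surface group and read homotopic paths from every vertex of
the cover `J\~Σ_g`. -/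
def homotopySetoid : Setoid (List (Letter g)) where
  r w w' := wordG w = wordG w' ∧ ∀ x, (cover g J).Homotopic Set.univ Set.univ (mkCos g J x)
    (mkCos g J (x * wordG w)) (coverPath J x w) (coverPath J x w')
  iseqv := {
    refl _ := ⟨rfl, fun _ => .refl _⟩
    symm h := ⟨h.1.symm, fun x => h.1 ▸ (h.2 x).symm⟩
    trans h h' := ⟨h.1.trans h'.1, fun x => (h.2 x).trans _ _ _ (h.1 ▸ h'.2 x)⟩ }

theorem homotopySetoid_cons (s : Letter g) {w w' : List (Letter g)}
    (h : homotopySetoid J w w') : homotopySetoid J (s :: w) (s :: w') := by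
  refine ⟨by rw [wordG_cons, wordG_cons, h.1], fun x => ?_⟩
  have hx := homotopic_cons (d := coverDart J x s) (Set.mem_univ _)
    (by rw [dHead_coverDart]; exact h.2 (x * letterG s))
  rwa [dTail_coverDart, mul_assoc, ← wordG_cons] at hx

theorem homotopySetoid_append {u w : List (Letter g)} (hu : wordG u = 1)
    (h : ∀ x l, (cover g J).elemMove Set.univ Set.univ l (coverPath J x u ++ l)) :
    homotopySetoid J (u ++ w) w := by
  have huw : wordG (u ++ w) = wordG w := by rw [wordG_append, hu, one_mul]
  refine ⟨huw, fun x => .rel _ _ ⟨walkFrom_coverPath _ _, huw ▸ walkFrom_coverPath _ _,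
    fun _ _ => trivial, fun _ _ => trivial, Or.inr ?_⟩⟩
  rw [coverPath_append, hu, mul_one]
  exact h _ _

theorem homotopySetoid_letterInv (s : Letter g) (w : List (Letter g)) :
    homotopySetoid J (letterInv s :: s :: w) w :=
  homotopySetoid_append (u := [letterInv s, s]) (by simp) fun x l =>
    Or.inl ⟨[], l, coverDart J x (letterInv s), trivial, rfl, by simp [dRev_coverDart]⟩

theorem homotopySetoid_relatorWord (w : List (Letter g)) :
    homotopySetoid J (relatorWord g ++ w) w :=
  homotopySetoid_append wordG_relatorWord fun x l =>
    Or.inr ⟨[], l, _, ⟨mkCos g J x, trivial, 0, Or.inl rfl⟩, rfl,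
      by rw [rotate_zero, bdry_mkCos]; rfl⟩

variable (J) in
/-- The permutation of the homotopy classes of words that prepends the letter `s`. -/
def consPerm (s : Letter g) : Equiv.Perm (Quotient (homotopySetoid J)) where
  toFun := Quotient.map (s :: ·) fun _ _ => homotopySetoid_cons s
  invFun := Quotient.map (letterInv s :: ·) fun _ _ => homotopySetoid_cons _
  left_inv q := q.inductionOn fun w => Quotient.sound (homotopySetoid_letterInv s w)
  right_inv q := q.inductionOn fun w => Quotient.sound <| by
    simpa using homotopySetoid_letterInv (J := J) (letterInv s) w

theorem prod_map_consPerm (w w' : List (Letter g)) :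
    (w.map (consPerm J)).prod (Quotient.mk _ w') = Quotient.mk _ (w ++ w') := by
  induction w with
  | nil => rfl
  | cons s w ih => rw [map_cons, prod_cons, Equiv.Perm.mul_apply, ih]; rfl

variable (J) in
/-- The action of the surface group on the homotopy classes of words: it separates words that are
not homotopic. -/
def homotopyAction : Gamma g →* Equiv.Perm (Quotient (homotopySetoid J)) :=
  gammaLift (consPerm J) (fun _ => Equiv.ext fun _ => rfl) <|
    Equiv.ext fun q => q.inductionOn fun w => by
      rw [prod_map_consPerm]
      exact Quotient.sound (homotopySetoid_relatorWord w)

theorem homotopyAction_wordG_mk (w w' : List (Letter g)) :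
    homotopyAction J (wordG w) (Quotient.mk _ w') = Quotient.mk _ (w ++ w') := by
  rw [homotopyAction, gammaLift_wordG, prod_map_consPerm]

theorem homotopic_coverPath {w w' : List (Letter g)} (h : wordG w = wordG w') (x : Gamma g) :
    (cover g J).Homotopic Set.univ Set.univ (mkCos g J x) (mkCos g J (x * wordG w))
      (coverPath J x w) (coverPath J x w') := by
  have hq := congrArg (fun y => homotopyAction J y (Quotient.mk _ [])) h
  simp only [homotopyAction_wordG_mk, append_nil] at hq
  exact (Quotient.exact hq).2 x

theorem exists_of_freelyHomotopic {c c' : List (cover g J).D}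
    (h : (cover g J).FreelyHomotopic Set.univ Set.univ c c') : ∃ γ ∈ J, ∃ x v y w,
      c = coverPath J x v ∧ c' = coverPath J y w ∧ γ * x = x * wordG v ∧ γ * y = y * wordG w := by
  obtain ⟨a, _, q, hc, hc', hq, -, -, -, h⟩ := h
  obtain ⟨x, rfl⟩ := mkCos_surjective a
  obtain ⟨v, rfl, hxv⟩ := exists_eq_coverPath hc rfl
  obtain ⟨u, rfl, rfl⟩ := exists_eq_coverPath hq rfl
  obtain ⟨w, rfl, -⟩ := exists_eq_coverPath hc' rfl
  have hword := wordG_wordOf_eq_of_homotopic wordG_wordOf_bdry_cover h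
  simp only [revW_coverPath, wordOf_append, wordOf_coverPath, wordG_append, wordG_reverse] at hword
  exact ⟨x * wordG v * x⁻¹, mkCos_eq_mkCos_iff.1 hxv, x, v, x * wordG u, w, rfl, rfl, by group,
    by rw [hword]; group⟩

theorem freelyHomotopic_coverPath {γ x y : Gamma g} {v w : List (Letter g)} (hγ : γ ∈ J)
    (hv : γ * x = x * wordG v) (hw : γ * y = y * wordG w) :
    (cover g J).FreelyHomotopic Set.univ Set.univ (coverPath J x v) (coverPath J y w) := by
  have hclosed {x : Gamma g} {v : List (Letter g)} (hv : γ * x = x * wordG v) :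
      (cover g J).WalkFrom (mkCos g J x) (mkCos g J x) (coverPath J x v) := by
    simpa only [← hv, mkCos_mul_left hγ] using walkFrom_coverPath (J := J) x v
  obtain ⟨u, hu⟩ := exists_wordG_eq (x⁻¹ * y)
  obtain rfl : y = x * wordG u := by rw [hu, mul_inv_cancel_left]
  refine ⟨_, _, coverPath J x u, hclosed hv, hclosed hw, walkFrom_coverPath x u,
    fun _ _ => trivial, fun _ _ => trivial, fun _ _ => trivial, ?_⟩
  have hword : wordG v = wordG (u ++ w ++ (u.map letterInv).reverse) := by
    rw [wordG_append, wordG_append, wordG_reverse, eq_mul_inv_iff_mul_eq,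
      ← mul_right_inj x, ← mul_assoc, ← hv, mul_assoc, hw, mul_assoc]
  have h := homotopic_coverPath (J := J) hword x
  rwa [← hv, mkCos_mul_left hγ, coverPath_append, coverPath_append, wordG_append, ← mul_assoc x,
    ← hw, coverPath_congr (mkCos_mul_left hγ _), ← revW_coverPath] at h

end HomotopyInTheCover

section PolygonsInTheCover

open List

theorem isChain_iterate {α : Type*} {R : α → α → Prop} {f : α → α} {a : α} {n : ℕ}
    (h : ∀ i, i + 1 < n → R (f^[i] a) (f^[i + 1] a)) : (iterate f a n).IsChain R :=
  isChain_iff_getElem.2 fun i hi => by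
    rw [length_iterate] at hi
    simpa only [getElem_iterate] using h i hi

theorem getLast?_iterate_succ {α : Type*} (f : α → α) (a : α) (n : ℕ) :
    (iterate f a (n + 1)).getLast? = some (f^[n] a) := by
  rw [iterate_add, getLast?_append]
  rfl

theorem ReadsIn.reverse {g : ℕ} {E : Gamma g → Letter g → Prop} {x : Gamma g}
    {w : List (Letter g)} (hE : ∀ {x s}, E x s → E (x * letterG s) (letterInv s))
    (h : ReadsIn E x w) : ReadsIn E (x * wordG w) (w.map letterInv).reverse := by
  induction w generalizing x with
  | nil => trivial
  | cons s w ih =>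
    rw [map_cons, reverse_cons, readsIn_append, wordG_cons, ← mul_assoc, wordG_reverse]
    exact ⟨ih h.2, by simpa using hE h.1⟩

variable {g : ℕ} {J : Subgroup (Gamma g)}

theorem exists_eq_coverDart (d : (cover g J).D) : ∃ x s, d = coverDart J x s := by
  obtain ⟨x, hx⟩ := mkCos_surjective ((cover g J).dTail d)
  exact ⟨x, _, eq_coverDart hx.symm⟩

variable [NeZero g]

/-- The dart `p` places after `d` in the cyclic order around the initial vertex of `d`. -/
def rotateDart (p : ZMod (4 * g)) (d : (cover g J).D) : (cover g J).D :=
  coverDart J ((cover g J).dTail d).out (letterAt (letterPos ((cover g J).dLet d) + p))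

/-- The dart that follows `d` along the boundary of the polygon on its left. -/
def nextDart (d : (cover g J).D) : (cover g J).D := rotateDart 1 ((cover g J).dRev d)

theorem rotateDart_coverDart (p : ZMod (4 * g)) (x : Gamma g) (s : Letter g) :
    rotateDart p (coverDart J x s) = coverDart J x (letterAt (letterPos s + p)) := by
  rw [rotateDart, dLet_coverDart, dTail_coverDart]
  exact coverDart_congr (Quotient.out_eq _) _

theorem rotateDart_rotateDart (p q : ZMod (4 * g)) (d : (cover g J).D) :
    rotateDart p (rotateDart q d) = rotateDart (q + p) d := by
  obtain ⟨x, s, rfl⟩ := exists_eq_coverDart d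
  simp only [rotateDart_coverDart, letterPos_letterAt, add_assoc]

theorem nextDart_coverDart (x : Gamma g) (s : Letter g) :
    nextDart (coverDart J x s) = coverDart J (x * letterG s) (nextLetter 1 s) := by
  rw [nextDart, dRev_coverDart, rotateDart_coverDart, nextLetter]

theorem adj_and_gapN_eq_iff {d d' : (cover g J).D} {k : ℕ} (hk : k < 4 * g) :
    (cover g J).adj d d' ∧ gapN ((cover g J).dLet d) ((cover g J).dLet d') = k ↔
      rotateDart (1 + k) ((cover g J).dRev d) = d' := by
  obtain ⟨x, s, rfl⟩ := exists_eq_coverDart d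
  rw [gapN_eq_iff _ _ hk, dRev_coverDart, rotateDart_coverDart, Complex.adj, dHead_coverDart,
    dLet_coverDart]
  constructor
  · rintro ⟨hadj, hpos⟩
    rw [eq_coverDart hadj.symm, ← add_assoc, ← hpos]
    exact congrArg _ (letterPos_injective (letterPos_letterAt _))
  · rintro rfl
    rw [dTail_coverDart, dLet_coverDart, letterPos_letterAt, add_assoc]
    exact ⟨rfl, rfl⟩

theorem adj_and_gapN_eq_zero_iff {d d' : (cover g J).D} :
    (cover g J).adj d d' ∧ gapN ((cover g J).dLet d) ((cover g J).dLet d') = 0 ↔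
      nextDart d = d' := by
  have hg := NeZero.pos g
  rw [adj_and_gapN_eq_iff (by omega), Nat.cast_zero, add_zero, nextDart]

theorem adj_and_gapN_eq_one_iff {d d' : (cover g J).D} :
    (cover g J).adj d d' ∧ gapN ((cover g J).dLet d) ((cover g J).dLet d') = 1 ↔
      rotateDart 1 (nextDart d) = d' := by
  have hg := NeZero.pos g
  rw [adj_and_gapN_eq_iff (by omega), Nat.cast_one, nextDart, rotateDart_rotateDart]

theorem iterate_nextDart_coverDart (x : Gamma g) (s : Letter g) (n : ℕ) :
    nextDart^[n] (coverDart J x s) =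
      coverDart J (x * wordG (block 1 s n)) ((nextLetter 1)^[n] s) := by
  induction n generalizing x s with
  | zero => simp
  | succ n ih => simp [nextDart_coverDart, ih, mul_assoc]

theorem coverPath_block (x : Gamma g) (s : Letter g) (n : ℕ) :
    coverPath J x (block 1 s n) = iterate nextDart (coverDart J x s) n := by
  induction n generalizing x s with
  | zero => rfl
  | succ n ih => rw [block_succ, coverPath_cons, ih, ← nextDart_coverDart, iterate]

theorem iterate_nextDart_four_mul (d : (cover g J).D) : nextDart^[4 * g] d = d := by
  obtain ⟨x, s, rfl⟩ := exists_eq_coverDart d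
  rw [iterate_nextDart_coverDart, wordG_block_four_mul (Or.inl rfl), mul_one,
    iterate_nextLetter_four_mul (Or.inl rfl)]

theorem exists_bdry_eq_iterate (f : (cover g J).F) :
    ∃ d, (cover g J).bdry f = iterate nextDart d (4 * g) := by
  have hg := NeZero.pos g
  obtain ⟨x, rfl⟩ := mkCos_surjective f
  obtain ⟨s, hs⟩ := exists_posLv_eq (g := g) (n := 0) (by omega)
  exact ⟨_, by rw [bdry_mkCos, relatorWord_eq_block hs, coverPath_block]⟩

theorem isBlock_iterate_nextDart (d : (cover g J).D) {n : ℕ} (hn : 0 < n) (hn' : n ≤ 4 * g) :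
    (cover g J).IsBlock (iterate nextDart d n) :=
  ⟨by simp [iterate_eq_nil, hn.ne'], by simpa, isChain_iterate fun i _ =>
    adj_and_gapN_eq_zero_iff.2 (Function.iterate_succ_apply' _ _ _).symm⟩

end PolygonsInTheCover

section StronglyBoundaryReduced

open List

variable {g : ℕ} [NeZero g] {J : Subgroup (Gamma g)} {S : SubC (cover g J)}

theorem mem_of_faceStep (hS : S.IsSub) {d d' : (cover g J).D} {i : ℕ}
    (h : (cover g J).faceStep S.sF (nextDart^[i] d) d') (n : ℕ) : (nextDart^[n] d).1 ∈ S.sE := by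
  obtain ⟨f, hf, hd⟩ := h
  obtain ⟨d₀, hd₀⟩ := exists_bdry_eq_iterate f
  obtain ⟨k, -, hk⟩ : ∃ k < 4 * g, nextDart^[i] d = nextDart^[k] d₀ := by
    rw [← mem_iterate, ← hd₀]
    simpa using hd.subset mem_cons_self
  have hper (d : (cover g J).D) : Function.IsPeriodicPt nextDart (4 * g) d :=
    iterate_nextDart_four_mul d
  have hmem (m : ℕ) : (nextDart^[m] d₀).1 ∈ S.sE := by
    refine hS.2 f hf _ ?_
    rw [hd₀, mem_iterate, ← (hper d₀).iterate_mod_apply]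
    exact ⟨_, Nat.mod_lt _ (by have := NeZero.pos g; omega), rfl⟩
  have hi : i ≤ 4 * g * i := Nat.le_mul_of_pos_left _ (by have := NeZero.pos g; omega)
  have hn : nextDart^[n] d = nextDart^[n + (4 * g * i - i) + k] d₀ := by
    rw [Function.iterate_add_apply _ _ k, ← hk, ← Function.iterate_add_apply, add_assoc,
      Nat.sub_add_cancel hi, Function.iterate_add_apply, ((hper d).mul_const i).eq]
  exact hn ▸ hmem _

theorem bStep_nextDart {d : (cover g J).D} (hd : d.1 ∈ S.sE) (hd' : (nextDart d).1 ∈ S.sE)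
    (h : ¬ (cover g J).faceStep S.sF d (nextDart d)) :
    (cover g J).bStep S.sE S.sF d (nextDart d) := by
  obtain ⟨hadj, hgap⟩ := adj_and_gapN_eq_zero_iff.2 (rfl : nextDart d = _)
  exact ⟨hd, ⟨hd', hadj, fun _ _ _ => hgap ▸ Nat.zero_le _⟩, h⟩

theorem bStep_rotateDart_nextDart (hS : S.IsSub) {d : (cover g J).D} (hd : d.1 ∈ S.sE)
    (hnext : (nextDart d).1 ∉ S.sE) (hd' : (rotateDart 1 (nextDart d)).1 ∈ S.sE) :
    (cover g J).bStep S.sE S.sF d (rotateDart 1 (nextDart d)) := by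
  obtain ⟨hadj, hgap⟩ := adj_and_gapN_eq_one_iff.2 (rfl : rotateDart 1 (nextDart d) = _)
  refine ⟨hd, ⟨hd', hadj, fun d' hd' hadj' => ?_⟩, fun h => hnext (mem_of_faceStep (i := 0) hS h 1)⟩
  rw [hgap, Nat.one_le_iff_ne_zero]
  exact fun hgap' => hnext (adj_and_gapN_eq_zero_iff.1 ⟨hadj', hgap'⟩ ▸ hd')

theorem bPath_iterate_nextDart (hS : S.IsSub) {d : (cover g J).D} {n : ℕ} (hn : n ≠ 0)
    (h : (cover g J).InSet S.sE (iterate nextDart d n)) {k : ℕ} (hk : (nextDart^[k] d).1 ∉ S.sE) :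
    (cover g J).BPath S.sE S.sF (iterate nextDart d n) := by
  refine ⟨by rwa [ne_eq, iterate_eq_nil], h, isChain_iterate fun i hi => ?_⟩
  rw [Function.iterate_succ_apply']
  refine bStep_nextDart (h _ (mem_iterate.2 ⟨i, by omega, rfl⟩)) ?_
    fun hface => hk (mem_of_faceStep hS hface k)
  exact h _ (mem_iterate.2 ⟨i + 1, hi, (Function.iterate_succ_apply' _ _ _).symm⟩)

theorem mem_of_halfBlock (hS : S.IsSub)
    (hsbr : (cover g J).StronglyBoundaryReduced S.sE S.sF) {d : (cover g J).D}
    (h : (cover g J).InSet S.sE (iterate nextDart d (2 * g))) (n : ℕ) :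
    (nextDart^[n] d).1 ∈ S.sE := by
  have hg := NeZero.pos g
  by_contra hn
  exact hsbr.1 _ (bPath_iterate_nextDart hS (by omega) h hn)
    ⟨isBlock_iterate_nextDart d (by omega) (by omega), length_iterate _ _ _⟩

theorem readsIn_block_of_halfBlock (hS : S.IsSub)
    (hsbr : (cover g J).StronglyBoundaryReduced S.sE S.sF) {x : Gamma g} {s : Letter g}
    (h : ReadsIn (edgesOver J S.sE) x (block 1 s (2 * g))) (n : ℕ) :
    ReadsIn (edgesOver J S.sE) x (block 1 s n) := by
  rw [← inSet_coverPath, coverPath_block] at h ⊢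
  intro d hd
  obtain ⟨k, -, rfl⟩ := mem_iterate.1 hd
  exact mem_of_halfBlock hS hsbr h k

theorem readsIn_second_half (hS : S.IsSub)
    (hsbr : (cover g J).StronglyBoundaryReduced S.sE S.sF) {x : Gamma g} {s : Letter g}
    (h : ReadsIn (edgesOver J S.sE) x (block 1 s (2 * g))) :
    ReadsIn (edgesOver J S.sE) (x * wordG (block 1 s (2 * g)))
      (block 1 ((nextLetter 1)^[2 * g] s) (2 * g)) := by
  have h := readsIn_block_of_halfBlock hS hsbr h (2 * g + 2 * g)
  rw [block_add, readsIn_append] at h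
  exact h.2

theorem wordG_block_second_half (s : Letter g) :
    wordG (block 1 s (2 * g)) * wordG (block 1 ((nextLetter 1)^[2 * g] s) (2 * g)) = 1 := by
  rw [← wordG_append, ← block_add, ← wordG_block_four_mul (Or.inl rfl) s]
  congr 2
  omega

theorem reverse_halfBlock (η : ZMod (4 * g)) (s : Letter g) :
    ((block η s (2 * g)).map letterInv).reverse =
      block (-η) (letterInv ((nextLetter η)^[2 * g - 1] s)) (2 * g) := by
  have h := reverse_block η s (2 * g - 1)
  rwa [Nat.sub_add_cancel (by have := NeZero.pos g; omega)] at h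

theorem iterate_nextLetter_two_mul (η : ZMod (4 * g)) (s : Letter g) :
    (nextLetter η)^[2 * g] s = nextLetter η ((nextLetter η)^[2 * g - 1] s) := by
  rw [← Function.iterate_succ_apply' (nextLetter η), Nat.succ_eq_add_one,
    Nat.sub_add_cancel (by have := NeZero.pos g; omega)]

theorem readsIn_opposite_halfBlock_of_one (hS : S.IsSub)
    (hsbr : (cover g J).StronglyBoundaryReduced S.sE S.sF) {x : Gamma g} {s : Letter g}
    (h : ReadsIn (edgesOver J S.sE) x (block 1 s (2 * g))) :
    ReadsIn (edgesOver J S.sE) x (block (-1) (letterAt (letterPos s - 1)) (2 * g)) := by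
  have hlast : letterInv ((nextLetter 1)^[2 * g - 1] ((nextLetter 1)^[2 * g] s)) =
      letterAt (letterPos s - 1) := by
    refine letterPos_injective ?_
    rw [letterPos_letterAt, eq_sub_iff_add_eq, ← letterPos_nextLetter,
      ← iterate_nextLetter_two_mul, ← Function.iterate_add_apply, ← add_mul,
      iterate_nextLetter_four_mul (Or.inl rfl)]
  have hrev := (readsIn_second_half hS hsbr h).reverse edgesOver_letterInv.2
  rwa [mul_assoc, wordG_block_second_half, mul_one, reverse_halfBlock, hlast] at hrev

theorem readsIn_opposite_halfBlock_of_neg_one (hS : S.IsSub)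
    (hsbr : (cover g J).StronglyBoundaryReduced S.sE S.sF) {x : Gamma g} {s : Letter g}
    (h : ReadsIn (edgesOver J S.sE) x (block (-1) s (2 * g))) :
    ReadsIn (edgesOver J S.sE) x (block 1 (letterAt (letterPos s + 1)) (2 * g)) := by
  have hrev := reverse_halfBlock (-1) s
  rw [neg_neg] at hrev
  have hword := wordG_reverse (block (-1) s (2 * g))
  have hnext : (nextLetter 1)^[2 * g] (letterInv ((nextLetter (-1))^[2 * g - 1] s)) =
      letterAt (letterPos s + 1) := by
    have hs := iterate_nextLetter_neg (-1) s (2 * g - 1)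
    rw [neg_neg] at hs
    rw [iterate_nextLetter_two_mul, hs, nextLetter, letterInv_letterInv]
  rw [hrev] at hword
  have h' := readsIn_second_half hS hsbr (hrev ▸ h.reverse edgesOver_letterInv.2)
  rwa [hword, mul_inv_cancel_right, hnext] at h'

end StronglyBoundaryReduced

section Ladders

open List

variable {g : ℕ} [NeZero g] {J : Subgroup (Gamma g)} {S : SubC (cover g J)}

/-- The part of the rail of a ladder from the rung `r` to the next one. -/
def rail (r : (cover g J).D) : List (cover g J).D := iterate nextDart (rotateDart 1 r) (2 * g - 1)

/-- The rung of a ladder that follows the rung `r`. -/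
def nextRungDart (r : (cover g J).D) : (cover g J).D := nextDart^[2 * g - 1] (rotateDart 1 r)

theorem nextRungDart_coverDart (x : Gamma g) (r : Letter g) : nextRungDart (coverDart J x r) =
    coverDart J (x * wordG (block 1 (letterAt (letterPos r + 1)) (2 * g - 1))) (nextRung r) := by
  rw [nextRungDart, rotateDart_coverDart, iterate_nextDart_coverDart, nextRung]

theorem iterate_nextRungDart_coverDart (x : Gamma g) (r : Letter g) (n : ℕ) :
    nextRungDart^[n] (coverDart J x r) =
      coverDart J (x * wordG (ladderWord n r)) (nextRung^[n] r) := by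
  induction n generalizing x r with
  | zero => simp [ladderWord]
  | succ n ih => simp [ladderWord, nextRungDart_coverDart, ih, mul_assoc]

theorem inSet_rail_of_readsIn_ladderWord {sE : Set (cover g J).E} {x : Gamma g} {r : Letter g}
    {n : ℕ} (h : ReadsIn (edgesOver J sE) x (ladderWord n r)) {k : ℕ} (hk : k < n) :
    (cover g J).InSet sE (rail (nextRungDart^[k] (coverDart J x r))) := by
  induction n generalizing x r k with
  | zero => omega
  | succ n ih =>
    rw [ladderWord, readsIn_append, ← inSet_coverPath, coverPath_block] at h
    cases k with
    | zero => rw [Function.iterate_zero, id, rail, rotateDart_coverDart]; exact h.1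
    | succ k =>
      rw [Function.iterate_succ_apply, nextRungDart_coverDart]
      exact ih h.2 (by omega)

theorem head?_rail (r : (cover g J).D) : (rail r).head? = some (rotateDart 1 r) := by
  obtain ⟨n, hn⟩ : ∃ n, 2 * g - 1 = n + 1 := ⟨2 * g - 2, by have := NeZero.pos g; omega⟩
  rw [rail, hn, iterate, head?_cons]

theorem exists_getLast?_rail (r : (cover g J).D) :
    ∃ d, (rail r).getLast? = some d ∧ nextDart d = nextRungDart r := by
  obtain ⟨n, hn⟩ : ∃ n, 2 * g - 1 = n + 1 := ⟨2 * g - 2, by have := NeZero.pos g; omega⟩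
  refine ⟨nextDart^[n] (rotateDart 1 r), ?_, ?_⟩
  · rw [rail, hn, getLast?_iterate_succ]
  · rw [nextRungDart, hn, Function.iterate_succ_apply' nextDart]

theorem chainStep_rail (r : (cover g J).D) :
    (cover g J).chainStep (rail r) (rail (nextRungDart r)) := by
  obtain ⟨d, hd, hnext⟩ := exists_getLast?_rail r
  exact ⟨d, _, hd, head?_rail _, adj_and_gapN_eq_one_iff.2 (by rw [hnext])⟩

theorem bStep_rail (hS : S.IsSub) {r d : (cover g J).D} (hd : (rail r).getLast? = some d)
    (hr : (cover g J).InSet S.sE (rail r)) (hr' : (cover g J).InSet S.sE (rail (nextRungDart r)))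
    (hrung : (nextRungDart r).1 ∉ S.sE) :
    (cover g J).bStep S.sE S.sF d (rotateDart 1 (nextRungDart r)) := by
  obtain ⟨d', hd', hnext⟩ := exists_getLast?_rail r
  obtain rfl : d = d' := Option.some_injective _ (hd.symm.trans hd')
  rw [← hnext] at hrung ⊢
  refine bStep_rotateDart_nextDart hS (hr d (mem_of_getLast? hd)) hrung ?_
  rw [hnext]
  exact hr' _ (mem_of_head? (head?_rail _))

theorem isHalfChain_rails {r : (cover g J).D} {n : ℕ} (hr : nextRungDart^[n + 1] r = r) :
    (cover g J).IsHalfChain ((iterate nextRungDart r (n + 1)).map rail) := by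
  have hg := NeZero.pos g
  refine ⟨⟨⟨by simp, ?_, ?_⟩, rail (nextRungDart^[n] r), rail r, ?_, by simp [iterate], ?_⟩, ?_⟩
  · simp only [mem_map, forall_exists_index, and_imp]
    rintro _ r - rfl
    exact isBlock_iterate_nextDart _ (by omega) (by omega)
  · refine (isChain_map _).2 (isChain_iterate fun i _ => ?_)
    rw [Function.iterate_succ_apply']
    exact chainStep_rail _
  · rw [getLast?_map, getLast?_iterate_succ]
    rfl
  · have h := chainStep_rail (nextRungDart^[n] r)
    rwa [← Function.iterate_succ_apply' nextRungDart, hr] at h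
  · simp only [mem_map, forall_exists_index, and_imp]
    rintro _ r - rfl
    exact length_iterate _ _ _

theorem bCycle_rails (hS : S.IsSub) {r : (cover g J).D} {n : ℕ} (hr : nextRungDart^[n + 1] r = r)
    (hrail : ∀ k, (cover g J).InSet S.sE (rail (nextRungDart^[k] r)))
    (hrung : ∀ k, (nextRungDart^[k] r).1 ∉ S.sE) :
    (cover g J).BCycle S.sE S.sF ((iterate nextRungDart r (n + 1)).map rail).flatten := by
  have hne (r : (cover g J).D) : rail r ≠ [] := by
    intro h
    simpa [h] using head?_rail r
  have hsucc (k : ℕ) := Function.iterate_succ_apply' nextRungDart k r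
  have hpath (k : ℕ) : (cover g J).BPath S.sE S.sF (rail (nextRungDart^[k] r)) :=
    bPath_iterate_nextDart hS (by have := NeZero.pos g; omega) (hrail k) (hsucc k ▸ hrung (k + 1))
  have hstep (k : ℕ) {d : (cover g J).D} (hd : d ∈ (rail (nextRungDart^[k] r)).getLast?) :
      (cover g J).bStep S.sE S.sF d (rotateDart 1 (nextRungDart^[k + 1] r)) :=
    hsucc k ▸ bStep_rail hS hd (hrail k) (hsucc k ▸ hrail (k + 1)) (hsucc k ▸ hrung (k + 1))
  obtain ⟨d, hd, -⟩ := exists_getLast?_rail (nextRungDart^[n] r)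
  refine ⟨⟨by simp [iterate, hne], ?_, ?_⟩, d, rotateDart 1 r, ?_, ?_, ?_⟩
  · simp only [Complex.InSet, mem_flatten, mem_map, mem_iterate]
    rintro d ⟨_, ⟨_, ⟨k, -, rfl⟩, rfl⟩, hd⟩
    exact hrail k d hd
  · refine (isChain_flatten (by simp [hne])).2 ⟨?_, (isChain_map _).2 (isChain_iterate ?_)⟩
    · simp only [mem_map, mem_iterate]
      rintro _ ⟨_, ⟨k, -, rfl⟩, rfl⟩
      exact (hpath k).2.2
    · rintro k - d hd d' hd'
      rw [head?_rail, Option.mem_some_iff] at hd'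
      exact hd' ▸ hstep k hd
  · rw [iterate_add, map_append, flatten_append, getLast?_append]
    simp [iterate, hd]
  · simp [iterate, head?_append, head?_rail]
  · exact hr ▸ hstep n hd

theorem exists_rung_mem (hS : S.IsSub)
    (hsbr : (cover g J).StronglyBoundaryReduced S.sE S.sF) {r : (cover g J).D} {n : ℕ}
    (hr : nextRungDart^[n + 1] r = r)
    (hrail : ∀ k < n + 1, (cover g J).InSet S.sE (rail (nextRungDart^[k] r))) :
    ∃ k ≤ n, (nextRungDart^[k] r).1 ∈ S.sE := by
  by_contra! hrung
  have hmod (k : ℕ) : nextRungDart^[k] r = nextRungDart^[k % (n + 1)] r :=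
    (Function.IsPeriodicPt.iterate_mod_apply hr k).symm
  have hlt (k : ℕ) : k % (n + 1) < n + 1 := Nat.mod_lt _ n.succ_pos
  refine hsbr.2 _ (isHalfChain_rails hr) (bCycle_rails hS hr (fun k => ?_) fun k => ?_)
  · rw [hmod]
    exact hrail _ (hlt k)
  · rw [hmod]
    exact hrung _ (Nat.le_of_lt_succ (hlt k))

theorem isStronglyReduced_edgesOver (hS : S.IsSub)
    (hsbr : (cover g J).StronglyBoundaryReduced S.sE S.sF) :
    IsStronglyReduced J (edgesOver J S.sE) where
  symm := edgesOver_letterInv.2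
  mul_left_iff hγ := edgesOver_mul_left hγ
  halfBlock {x η s} hη h := by
    obtain rfl | rfl := hη
    · exact readsIn_opposite_halfBlock_of_one hS hsbr h
    · rw [neg_neg, sub_neg_eq_add]
      exact readsIn_opposite_halfBlock_of_neg_one hS hsbr h
  ladder {γ x r n} hγ hx hr h := by
    have hper : nextRungDart^[n + 1] (coverDart J x r) = coverDart J x r := by
      rw [iterate_nextRungDart_coverDart, ← hx, hr, coverDart_congr (mkCos_mul_left hγ x)]
    obtain ⟨k, hk, hmem⟩ :=
      exists_rung_mem hS hsbr hper fun k => inSet_rail_of_readsIn_ladderWord h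
    rw [iterate_nextRungDart_coverDart] at hmem
    exact ⟨k, hk, hmem⟩

end Ladders

/-- Let `Y` (= `S`) be a strongly boundary reduced tiled
surface embedded in `Υ = J\~Σ_g` and let `C ⊆ Y^(1)` be a non-nullhomotopic
cycle.  Then every shortest representative in `Υ^(1)` of the free homotopy class
of `C` is contained in `Y`. -/
theorem statement_15 (g : ℕ) (hg : 2 ≤ g) (J : Subgroup (Gamma g))
    (S : SubC (cover g J)) (hS : S.IsSub)
    (hsbr : (cover g J).StronglyBoundaryReduced S.sE S.sF)
    (c : List ((cover g J).D)) (hcS : (cover g J).InSet S.sE c)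
    (hc : (cover g J).Essential Set.univ Set.univ c) :
    ∀ c', (cover g J).FreelyHomotopic Set.univ Set.univ c c' →
      (cover g J).ShortestRep Set.univ Set.univ c' →
      (cover g J).InSet S.sE c' := by
  have : NeZero g := ⟨by omega⟩
  intro c' hcc' hshort
  obtain ⟨γ, hγ, x, v, y, w, rfl, rfl, hv, hw⟩ := exists_of_freelyHomotopic hcc'
  obtain rfl | hne := eq_or_ne w []
  · rw [coverPath_nil]
    exact List.forall_mem_nil _
  have hmin (z : Gamma g) (w' : List (Letter g)) (hz : γ * z = z * wordG w') :
      w.length ≤ w'.length := by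
    simpa only [length_coverPath] using hshort _ (freelyHomotopic_coverPath hγ hw hz)
  rw [inSet_coverPath] at hcS ⊢
  exact (isStronglyReduced_edgesOver hS hsbr).readsIn hg hγ hw hne hmin hcS hv

end CS

end
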